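/- arXiv:1410.6697 — 4 statements merged into one kernel-verified Lean document; each statement's English description precedes it below -/
import Mathlib

section
/- Let Ψ : ℕ → (0,∞) satisfy Ψ(x) = o(1/x) as x → ∞ and be non-increasing. Then the set 𝒦₁(Ψ) \ ⋃_{0<c<1} 𝒦₁(cΨ) is non-empty; that is, there exists an irrational real number ζ such that |qζ − p| ≤ Ψ(q) has infinitely many solutions (q,p) ∈ ℕ × ℤ, but for every constant c < 1 the inequality |qζ − p| ≤ c·Ψ(q) has only finitely many solutions. -/
open Filter Set

/-- `K1 Ψ` is the set of irrational `ζ` such that `|q·ζ - p| ≤ Ψ q` holds for infinitely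
many pairs `(q, p) ∈ ℕ × ℤ` with `q ≥ 1`. -/
def K1 (Ψ : ℕ → ℝ) : Set ℝ :=
  {ζ : ℝ | Irrational ζ ∧
    {qp : ℕ × ℤ | 1 ≤ qp.1 ∧ |(qp.1 : ℝ) * ζ - (qp.2 : ℝ)| ≤ Ψ qp.1}.Infinite}

/-!
Let `ζ = [0; a₀, a₁, …]`, with convergents `pₙ / qₙ` and errors `eₙ = |qₙ ζ - pₙ|`. The identity
`qₙ₊₁ eₙ + qₙ eₙ₊₁ = 1` makes `1 / eₙ` equal to `aₙ qₙ` up to an additive `O(qₙ)`. Since `qₙ` does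
not depend on `aₙ`, the partial quotient `aₙ` may be chosen just above `1 / (qₙ Ψ(qₙ))`. Then
`eₙ ≤ Ψ(qₙ)`, while `qₙ Ψ(qₙ) → 0` gives `eₙ ≥ (1 - o(1)) Ψ(qₙ)`. Because `Ψ` is non-increasing and
`pₙ / qₙ` is a best approximation among denominators below `qₙ₊₁`, the lower bound on `eₙ`
passes to all denominators.
-/

section BestApproximation

lemma exists_eq_mul_add_mul_of_isUnit_det {R : Type*} [CommRing R] {q q' p p' : R}
    (hdet : IsUnit (p' * q - p * q')) (m k : R) :
    ∃ u v : R, m = u * q + v * q' ∧ k = u * p + v * p' := by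
  obtain ⟨w, hw⟩ := hdet.exists_left_inv
  refine ⟨w * (p' * m - k * q'), w * (k * q - p * m), ?_, ?_⟩
  · linear_combination -m * hw
  · linear_combination -k * hw

lemma ne_zero_and_mul_nonpos_of_mul_add_mul_mem_Ioo {q q' u v : ℤ} (hq : 0 ≤ q)
    (h : u * q + v * q' ∈ Ioo 0 q') : u ≠ 0 ∧ u * v ≤ 0 := by
  obtain ⟨hpos, hlt⟩ := h
  have hq' : 0 < q' := hpos.trans hlt
  constructor
  · rintro rfl
    have hv : 0 < v := by nlinarith
    nlinarith
  · by_contra! huv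
    rcases pos_and_pos_or_neg_and_neg_of_mul_pos huv with ⟨hu, hv⟩ | ⟨hu, hv⟩ <;> nlinarith

/-- Lagrange's best approximation property of a pair of consecutive convergents. -/
lemma abs_mul_sub_le_abs_mul_sub_of_lt {K : Type*} [CommRing K] [LinearOrder K]
    [IsStrictOrderedRing K] {ζ : K} {q q' p p' : ℤ} (hq : 0 ≤ q)
    (hdet : IsUnit (p' * q - p * q')) (hsign : (q * ζ - p) * (q' * ζ - p') ≤ 0)
    {m : ℤ} (hm : 0 < m) (hmq' : m < q') (k : ℤ) :
    |q * ζ - p| ≤ |m * ζ - k| := by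
  obtain ⟨u, v, rfl, rfl⟩ := exists_eq_mul_add_mul_of_isUnit_det hdet m k
  obtain ⟨hu, huv⟩ := ne_zero_and_mul_nonpos_of_mul_add_mul_mem_Ioo hq ⟨hm, hmq'⟩
  have hu_abs : (1 : K) ≤ |(u : K)| := mod_cast Int.one_le_abs hu
  have huvK : (u : K) * v ≤ 0 := mod_cast huv
  have same_sign : 0 ≤ u * (q * ζ - p) * (v * (q' * ζ - p')) := by
    linear_combination mul_nonneg_of_nonpos_of_nonpos huvK hsign
  calc |q * ζ - p| ≤ |(u : K)| * |q * ζ - p| := le_mul_of_one_le_left (abs_nonneg _) hu_abs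
    _ = |u * (q * ζ - p)| := (abs_mul _ _).symm
    _ ≤ |u * (q * ζ - p)| + |v * (q' * ζ - p')| := le_add_of_nonneg_right (abs_nonneg _)
    _ = |u * (q * ζ - p) + v * (q' * ζ - p')| := by
      refine ((abs_add_eq_add_abs_iff _ _).2 ?_).symm
      exact mul_nonneg_iff.1 same_sign
    _ = |↑(u * q + v * q') * ζ - ↑(u * p + v * p')| := by
      push_cast
      congr 1
      ring

end BestApproximation

section ContinuedFraction

/-- The denominators `qₙ` of the convergents of `[0; a 0, a 1, …]`. The partial quotients are
indexed so that `qₙ₊₁` is the first denominator involving `a n`. -/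
def cfDen (a : ℕ → ℕ) : ℕ → ℕ
  | 0 => 1
  | 1 => a 0
  | n + 2 => a (n + 1) * cfDen a (n + 1) + cfDen a n

/-- The numerators `pₙ` of the convergents of `[0; a 0, a 1, …]`, indexed like `cfDen`. -/
def cfNum (a : ℕ → ℕ) : ℕ → ℤ
  | 0 => 0
  | 1 => 1
  | n + 2 => a (n + 1) * cfNum a (n + 1) + cfNum a n

/-- The `n`-th convergent `pₙ / qₙ` of `[0; a 0, a 1, …]`. -/
noncomputable def cfConvergent (a : ℕ → ℕ) (n : ℕ) : ℝ := cfNum a n / cfDen a n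

/-- The real number `[0; a 0, a 1, …]`, encoded as the supremum of its convergents of even index;
meaningful when all `a n` are positive. -/
noncomputable def cfValue (a : ℕ → ℕ) : ℝ := ⨆ k, cfConvergent a (2 * k)

/-- The error `|qₙ ζ - pₙ|` of the `n`-th convergent of `ζ = [0; a 0, a 1, …]`. It is encoded with
the alternating sign in place of the absolute value, so that it satisfies a linear recurrence. -/
noncomputable def cfError (a : ℕ → ℕ) (n : ℕ) : ℝ :=
  (-1) ^ n * (cfDen a n * cfValue a - cfNum a n)

variable {a : ℕ → ℕ}

section Convergents

lemma cfDen_pos (ha : ∀ n, 0 < a n) : ∀ n, 0 < cfDen a n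
  | 0 => one_pos
  | 1 => ha 0
  | n + 2 => Nat.add_pos_right _ (cfDen_pos ha n)

lemma mul_cfDen_le_cfDen_succ (a : ℕ → ℕ) : ∀ n, a n * cfDen a n ≤ cfDen a (n + 1)
  | 0 => (mul_one _).le
  | _ + 1 => Nat.le_add_right _ _

lemma monotone_cfDen (ha : ∀ n, 0 < a n) : Monotone (cfDen a) :=
  monotone_nat_of_le_succ fun n ↦
    (Nat.le_mul_of_pos_left _ (ha n)).trans (mul_cfDen_le_cfDen_succ a n)

lemma cfDen_succ_le (ha : ∀ n, 0 < a n) : ∀ n, cfDen a (n + 1) ≤ (a n + 1) * cfDen a n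
  | 0 => by simp [cfDen]
  | n + 1 => by
    rw [add_one_mul, cfDen]
    gcongr
    exact monotone_cfDen ha n.le_succ

lemma strictMono_cfDen_succ (ha : ∀ n, 0 < a n) : StrictMono fun n ↦ cfDen a (n + 1) :=
  strictMono_nat_of_lt_succ fun n ↦ by
    have hq := cfDen_pos ha n
    have hle := Nat.le_mul_of_pos_left (cfDen a (n + 1)) (ha (n + 1))
    rw [cfDen]
    lia

lemma tendsto_cfDen_atTop (ha : ∀ n, 0 < a n) : Tendsto (cfDen a) atTop atTop :=
  (tendsto_add_atTop_iff_nat 1).1 (strictMono_cfDen_succ ha).tendsto_atTop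

lemma exists_mem_Ico_cfDen (ha : ∀ n, 0 < a n) {m : ℕ} (hm : 0 < m) :
    ∃ n, m ∈ Ico (cfDen a n) (cfDen a (n + 1)) := by
  have hcover : ⋃ n, Ico (cfDen a n) (cfDen a (n + 1)) = Ici (cfDen a 0) :=
    iUnion_Ico_map_succ_eq_Ici (fun n ↦ monotone_cfDen ha n.zero_le)
      (not_bddAbove_of_tendsto_atTop (tendsto_cfDen_atTop ha))
  exact mem_iUnion.1 (hcover ▸ hm)

lemma cfNum_succ_mul_cfDen_sub (a : ℕ → ℕ) (n : ℕ) :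
    cfNum a (n + 1) * cfDen a n - cfNum a n * cfDen a (n + 1) = (-1) ^ n := by
  induction n with
  | zero => simp [cfNum, cfDen]
  | succ n ih =>
    rw [cfNum, cfDen, pow_succ, ← ih]
    push_cast
    ring

lemma cfConvergent_succ_sub (ha : ∀ n, 0 < a n) (n : ℕ) :
    cfConvergent a (n + 1) - cfConvergent a n = (-1) ^ n / (cfDen a (n + 1) * cfDen a n) := by
  have hq : ∀ i, (cfDen a i : ℝ) ≠ 0 := fun i ↦ mod_cast (cfDen_pos ha i).ne'
  have hdet : (cfNum a (n + 1) * cfDen a n - cfNum a n * cfDen a (n + 1) : ℝ) = (-1) ^ n :=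
    mod_cast cfNum_succ_mul_cfDen_sub a n
  rw [cfConvergent, cfConvergent, div_sub_div _ _ (hq _) (hq _), ← hdet]
  ring

lemma cfConvergent_add_two_sub (ha : ∀ n, 0 < a n) (n : ℕ) :
    cfConvergent a (n + 2) - cfConvergent a n =
      (-1) ^ n * (a (n + 1) / (cfDen a (n + 2) * cfDen a n)) := by
  have hq : ∀ i, (cfDen a i : ℝ) ≠ 0 := fun i ↦ mod_cast (cfDen_pos ha i).ne'
  have hrec : (cfDen a (n + 2) : ℝ) = a (n + 1) * cfDen a (n + 1) + cfDen a n := by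
    rw [cfDen]
    push_cast
    rfl
  rw [← sub_add_sub_cancel _ (cfConvergent a (n + 1)), cfConvergent_succ_sub ha (n + 1),
    cfConvergent_succ_sub ha n]
  field_simp [hq]
  rw [hrec]
  ring

lemma monotone_cfConvergent_even (ha : ∀ n, 0 < a n) :
    Monotone fun k ↦ cfConvergent a (2 * k) := by
  refine monotone_nat_of_le_succ fun k ↦ sub_nonneg.1 ?_
  rw [mul_add_one, cfConvergent_add_two_sub ha, (even_two_mul k).neg_one_pow]
  positivity

lemma antitone_cfConvergent_odd (ha : ∀ n, 0 < a n) :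
    Antitone fun k ↦ cfConvergent a (2 * k + 1) := by
  refine antitone_nat_of_succ_le fun k ↦ sub_nonpos.1 ?_
  rw [mul_add_one, add_right_comm, cfConvergent_add_two_sub ha,
    (odd_two_mul_add_one k).neg_one_pow, neg_one_mul, neg_nonpos]
  positivity

lemma cfConvergent_even_le_odd (ha : ∀ n, 0 < a n) (k : ℕ) :
    cfConvergent a (2 * k) ≤ cfConvergent a (2 * k + 1) := by
  rw [← sub_nonneg, cfConvergent_succ_sub ha, (even_two_mul k).neg_one_pow]
  positivity

lemma cfValue_mem_Icc (ha : ∀ n, 0 < a n) (k : ℕ) :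
    cfValue a ∈ Icc (cfConvergent a (2 * k)) (cfConvergent a (2 * k + 1)) :=
  mem_iInter.1 ((monotone_cfConvergent_even ha).ciSup_mem_iInter_Icc_of_antitone
    (antitone_cfConvergent_odd ha) (cfConvergent_even_le_odd ha)) k

end Convergents

section Error

lemma cfError_nonneg (ha : ∀ n, 0 < a n) (n : ℕ) : 0 ≤ cfError a n := by
  have hq : (0 : ℝ) < cfDen a n := mod_cast cfDen_pos ha n
  obtain ⟨k, rfl | rfl⟩ := n.even_or_odd'
  · have hle := (cfValue_mem_Icc ha k).1
    rw [cfConvergent, div_le_iff₀' hq] at hle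
    rw [cfError, (even_two_mul k).neg_one_pow, one_mul]
    exact sub_nonneg.2 hle
  · have hle := (cfValue_mem_Icc ha k).2
    rw [cfConvergent, le_div_iff₀' hq] at hle
    rw [cfError, (odd_two_mul_add_one k).neg_one_pow, neg_one_mul, neg_sub]
    exact sub_nonneg.2 hle

lemma abs_cfDen_mul_cfValue_sub_cfNum (ha : ∀ n, 0 < a n) (n : ℕ) :
    |cfDen a n * cfValue a - cfNum a n| = cfError a n := by
  rw [← abs_of_nonneg (cfError_nonneg ha n), cfError, abs_mul, abs_neg_one_pow, one_mul]

lemma cfError_eq_mul_add (a : ℕ → ℕ) (n : ℕ) :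
    cfError a n = a (n + 1) * cfError a (n + 1) + cfError a (n + 2) := by
  simp only [cfError, cfDen, cfNum]
  push_cast
  ring

lemma cfDen_succ_mul_cfError_add (a : ℕ → ℕ) (n : ℕ) :
    cfDen a (n + 1) * cfError a n + cfDen a n * cfError a (n + 1) = 1 := by
  have hdet : (cfNum a (n + 1) * cfDen a n - cfNum a n * cfDen a (n + 1) : ℝ) = (-1) ^ n :=
    mod_cast cfNum_succ_mul_cfDen_sub a n
  calc cfDen a (n + 1) * cfError a n + cfDen a n * cfError a (n + 1)
      = (-1) ^ n * (cfNum a (n + 1) * cfDen a n - cfNum a n * cfDen a (n + 1)) := by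
        rw [cfError, cfError]
        ring
    _ = 1 := by rw [hdet, ← mul_pow, neg_one_mul, neg_neg, one_pow]

lemma antitone_cfError (ha : ∀ n, 0 < a n) : Antitone (cfError a) :=
  antitone_nat_of_succ_le fun n ↦ by
    have ha' : (1 : ℝ) ≤ a (n + 1) := mod_cast ha (n + 1)
    calc cfError a (n + 1) ≤ a (n + 1) * cfError a (n + 1) :=
          le_mul_of_one_le_left (cfError_nonneg ha _) ha'
      _ ≤ cfError a n := by
        rw [cfError_eq_mul_add a n]
        exact le_add_of_nonneg_right (cfError_nonneg ha _)

lemma cfError_pos (ha : ∀ n, 0 < a n) (n : ℕ) : 0 < cfError a n := by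
  refine (cfError_nonneg ha n).lt_of_ne' fun h ↦ ?_
  have hsucc : cfError a (n + 1) = 0 :=
    le_antisymm (h ▸ antitone_cfError ha n.le_succ) (cfError_nonneg ha _)
  simpa [h, hsucc] using cfDen_succ_mul_cfError_add a n

lemma mul_cfDen_mul_cfError_le_one (ha : ∀ n, 0 < a n) (n : ℕ) :
    a n * cfDen a n * cfError a n ≤ 1 := by
  have hq : (a n * cfDen a n : ℝ) ≤ cfDen a (n + 1) := mod_cast mul_cfDen_le_cfDen_succ a n
  calc a n * cfDen a n * cfError a n ≤ cfDen a (n + 1) * cfError a n :=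
        mul_le_mul_of_nonneg_right hq (cfError_nonneg ha n)
    _ ≤ 1 := by
      rw [← cfDen_succ_mul_cfError_add a n]
      exact le_add_of_nonneg_right (mul_nonneg (Nat.cast_nonneg _) (cfError_nonneg ha _))

lemma one_le_add_two_mul_cfDen_mul_cfError (ha : ∀ n, 0 < a n) (n : ℕ) :
    1 ≤ (a n + 2) * cfDen a n * cfError a n := by
  have hq : (cfDen a (n + 1) : ℝ) ≤ (a n + 1) * cfDen a n := mod_cast cfDen_succ_le ha n
  calc (1 : ℝ) = cfDen a (n + 1) * cfError a n + cfDen a n * cfError a (n + 1) :=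
        (cfDen_succ_mul_cfError_add a n).symm
    _ ≤ (a n + 1) * cfDen a n * cfError a n + cfDen a n * cfError a n :=
        add_le_add (mul_le_mul_of_nonneg_right hq (cfError_nonneg ha n))
          (mul_le_mul_of_nonneg_left (antitone_cfError ha n.le_succ) (Nat.cast_nonneg _))
    _ = (a n + 2) * cfDen a n * cfError a n := by ring

lemma cfError_le_abs_mul_cfValue_sub (ha : ∀ n, 0 < a n) {n m : ℕ} (hm : 0 < m)
    (hlt : m < cfDen a (n + 1)) (k : ℤ) : cfError a n ≤ |m * cfValue a - k| := by
  have hdet : IsUnit (cfNum a (n + 1) * cfDen a n - cfNum a n * cfDen a (n + 1)) := by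
    rw [cfNum_succ_mul_cfDen_sub]
    exact isUnit_neg_one.pow n
  have hsign : ((cfDen a n : ℤ) * cfValue a - cfNum a n) *
      ((cfDen a (n + 1) : ℤ) * cfValue a - cfNum a (n + 1)) ≤ 0 := by
    have hsq : ((-1 : ℝ) ^ n) * (-1) ^ n = 1 := by
      rw [← mul_pow, neg_one_mul, neg_neg, one_pow]
    have hmul := mul_nonneg (cfError_nonneg ha n) (cfError_nonneg ha (n + 1))
    rw [cfError, cfError, pow_succ] at hmul
    push_cast
    linear_combination hmul - (cfDen a n * cfValue a - cfNum a n) *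
      (cfDen a (n + 1) * cfValue a - cfNum a (n + 1)) * hsq
  rw [← abs_cfDen_mul_cfValue_sub_cfNum ha]
  exact_mod_cast abs_mul_sub_le_abs_mul_sub_of_lt (Int.natCast_nonneg _) hdet hsign
    (Int.natCast_pos.2 hm) (Int.ofNat_lt.2 hlt) k

lemma irrational_cfValue (ha : ∀ n, 0 < a n) : Irrational (cfValue a) := by
  rintro ⟨r, hr⟩
  obtain ⟨n, hn⟩ := ((tendsto_cfDen_atTop ha).comp (tendsto_add_atTop_nat 1)).eventually_gt_atTop
    r.den |>.exists
  have hzero : (r.den : ℝ) * cfValue a - r.num = 0 := by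
    rw [← hr, sub_eq_zero]
    exact_mod_cast Rat.den_mul_eq_num r
  have hle := cfError_le_abs_mul_cfValue_sub ha r.pos hn r.num
  rw [hzero, abs_zero] at hle
  exact hle.not_gt (cfError_pos ha n)

lemma eventually_lt_abs_mul_cfValue_sub (ha : ∀ n, 0 < a n) {ψ : ℕ → ℝ} (hψ : Antitone ψ)
    (h : ∀ᶠ n in atTop, ψ (cfDen a n) < cfError a n) :
    ∀ᶠ m : ℕ in atTop, ∀ k : ℤ, ψ m < |m * cfValue a - k| := by
  obtain ⟨N, hN⟩ := eventually_atTop.1 h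
  filter_upwards [eventually_ge_atTop (cfDen a N), eventually_gt_atTop 0] with m hNm hm k
  obtain ⟨n, hnm, hmn⟩ := exists_mem_Ico_cfDen ha hm
  have hNn : N ≤ n := Nat.lt_succ_iff.1 ((monotone_cfDen ha).reflect_lt (hNm.trans_lt hmn))
  calc ψ m ≤ ψ (cfDen a n) := hψ hnm
    _ < cfError a n := hN n hNn
    _ ≤ |m * cfValue a - k| := cfError_le_abs_mul_cfValue_sub ha hm hmn k

end Error

end ContinuedFraction

section PrescribedQuotients

/-- The denominators of the continued fraction whose partial quotient at a convergent with
denominator `m` is `A m`. -/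
def cfDenOf (A : ℕ → ℕ) : ℕ → ℕ
  | 0 => 1
  | 1 => A 1
  | n + 2 => A (cfDenOf A (n + 1)) * cfDenOf A (n + 1) + cfDenOf A n

lemma cfDen_comp_cfDenOf (A : ℕ → ℕ) : ∀ n, cfDen (A ∘ cfDenOf A) n = cfDenOf A n
  | 0 => rfl
  | 1 => rfl
  | n + 2 => by
    rw [cfDen, cfDen_comp_cfDenOf A (n + 1), cfDen_comp_cfDenOf A n, cfDenOf, Function.comp_apply]

lemma exists_forall_eq_apply_cfDen (A : ℕ → ℕ) : ∃ a : ℕ → ℕ, ∀ n, a n = A (cfDen a n) :=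
  ⟨A ∘ cfDenOf A, fun n ↦ by rw [cfDen_comp_cfDenOf, Function.comp_apply]⟩

lemma exists_cfError_le_and_le_mul_cfError {Ψ : ℕ → ℝ} (hpos : ∀ q, 0 < Ψ q) :
    ∃ a : ℕ → ℕ, (∀ n, 0 < a n) ∧ ∀ n, cfError a n ≤ Ψ (cfDen a n) ∧
      Ψ (cfDen a n) ≤ (1 + 3 * (cfDen a n * Ψ (cfDen a n))) * cfError a n := by
  obtain ⟨a, ha_eq⟩ := exists_forall_eq_apply_cfDen fun m ↦ ⌊1 / (m * Ψ m)⌋₊ + 1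
  have ha : ∀ n, 0 < a n := fun n ↦ by
    rw [ha_eq]
    exact Nat.succ_pos _
  refine ⟨a, ha, fun n ↦ ?_⟩
  set q := (cfDen a n : ℝ)
  set r := Ψ (cfDen a n)
  have hq : 0 < q := Nat.cast_pos.2 (cfDen_pos ha n)
  have hr : 0 < r := hpos _
  have hqr : 0 < q * r := mul_pos hq hr
  have ha_cast : (a n : ℝ) = ⌊1 / (q * r)⌋₊ + 1 := by
    rw [ha_eq]
    push_cast
    rfl
  have ha_lower : 1 ≤ a n * (q * r) := by
    rw [ha_cast, ← div_le_iff₀ hqr]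
    exact (Nat.lt_floor_add_one _).le
  have ha_upper : a n * (q * r) ≤ 1 + q * r := by
    rw [ha_cast, add_one_mul]
    gcongr
    exact (le_div_iff₀ hqr).1 (Nat.floor_le (one_div_nonneg.2 hqr.le))
  constructor
  · refine le_of_mul_le_mul_left ?_ (mul_pos (Nat.cast_pos.2 (ha n)) hq)
    calc a n * q * cfError a n ≤ 1 := mul_cfDen_mul_cfError_le_one ha n
      _ ≤ a n * q * r := by rwa [mul_assoc]
  · calc r = r * 1 := (mul_one r).symm
      _ ≤ r * ((a n + 2) * q * cfError a n) :=
        mul_le_mul_of_nonneg_left (one_le_add_two_mul_cfDen_mul_cfError ha n) hr.le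
      _ = (a n * (q * r) + 2 * (q * r)) * cfError a n := by ring
      _ ≤ (1 + 3 * (q * r)) * cfError a n :=
        mul_le_mul_of_nonneg_right (by linarith) (cfError_nonneg ha n)

end PrescribedQuotients

section ApproximationSets

lemma finite_setOf_abs_sub_intCast_le {K : Type*} [Ring K] [LinearOrder K] [IsOrderedRing K]
    [FloorRing K] (x r : K) : {k : ℤ | |x - k| ≤ r}.Finite := by
  refine (finite_Icc ⌈x - r⌉ ⌊x + r⌋).subset fun k hk ↦ ?_
  obtain ⟨hlower, hupper⟩ := abs_sub_le_iff.1 hk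
  exact ⟨Int.ceil_le.2 (sub_le_comm.1 hlower), Int.le_floor.2 (sub_le_iff_le_add'.1 hupper)⟩

lemma mem_K1_iff_frequently {Ψ : ℕ → ℝ} {ζ : ℝ} :
    ζ ∈ K1 Ψ ↔ Irrational ζ ∧ ∃ᶠ q : ℕ in atTop, ∃ p : ℤ, |q * ζ - p| ≤ Ψ q := by
  refine and_congr_right fun _ ↦ ⟨fun hinf ↦ ?_, fun hfreq ↦ ?_⟩
  · refine Nat.frequently_atTop_iff_infinite.2 fun hfin ↦ hinf (Finite.of_finite_fibers Prod.fst
      (hfin.subset (image_subset_iff.2 fun qp hqp ↦ ⟨qp.2, hqp.2⟩)) fun q _ ↦ ?_)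
    refine ((finite_singleton q).prod (finite_setOf_abs_sub_intCast_le (q * ζ) (Ψ q))).subset ?_
    rintro ⟨q, p⟩ ⟨⟨-, hp⟩, rfl⟩
    exact ⟨rfl, hp⟩
  · refine ((Nat.frequently_atTop_iff_infinite.1
      (hfreq.and_eventually (eventually_ge_atTop 1))).mono ?_).of_image Prod.fst
    rintro q ⟨⟨p, hp⟩, hq⟩
    exact ⟨(q, p), ⟨hq, hp⟩, rfl⟩

lemma cfValue_mem_K1 {a : ℕ → ℕ} {Ψ : ℕ → ℝ} (ha : ∀ n, 0 < a n)
    (h : ∃ᶠ n in atTop, cfError a n ≤ Ψ (cfDen a n)) : cfValue a ∈ K1 Ψ :=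
  mem_K1_iff_frequently.2 ⟨irrational_cfValue ha, (tendsto_cfDen_atTop ha).frequently <|
    h.mono fun n hn ↦ ⟨cfNum a n, (abs_cfDen_mul_cfValue_sub_cfNum ha n).trans_le hn⟩⟩

lemma cfValue_notMem_K1 {a : ℕ → ℕ} {Ψ : ℕ → ℝ} (ha : ∀ n, 0 < a n) (hanti : Antitone Ψ)
    (h : ∀ᶠ n in atTop, Ψ (cfDen a n) < cfError a n) : cfValue a ∉ K1 Ψ := fun hmem ↦
  (mem_K1_iff_frequently.1 hmem).2 <|
    (eventually_lt_abs_mul_cfValue_sub ha hanti h).mono fun _ hm ⟨k, hk⟩ ↦ (hm k).not_ge hk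

end ApproximationSets

/-- Jarník's theorem (1930): if `Ψ` is positive, non-increasing and `Ψ(x) = o(1/x)`,
then `𝒦₁(Ψ) \ ⋃_{0<c<1} 𝒦₁(cΨ)` is non-empty. -/
theorem jarnik_one_dimensional (Ψ : ℕ → ℝ) (hpos : ∀ q, 0 < Ψ q)
    (hsmall : Tendsto (fun q : ℕ => (q : ℝ) * Ψ q) atTop (nhds 0))
    (hanti : Antitone Ψ) :
    (K1 Ψ \ ⋃ c ∈ Ioo (0 : ℝ) 1, K1 (fun x => c * Ψ x)).Nonempty := by
  obtain ⟨a, ha, herr⟩ := exists_cfError_le_and_le_mul_cfError hpos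
  refine ⟨cfValue a, cfValue_mem_K1 ha (.of_forall fun n ↦ (herr n).1), ?_⟩
  simp only [mem_iUnion, not_exists]
  rintro c ⟨hc0, hc1⟩
  refine cfValue_notMem_K1 ha (hanti.const_mul hc0.le) ?_
  have hlim : Tendsto (fun n ↦ c * (1 + 3 * (cfDen a n * Ψ (cfDen a n)))) atTop (nhds c) := by
    simpa using (((hsmall.comp (tendsto_cfDen_atTop ha)).const_mul 3).const_add 1).const_mul c
  filter_upwards [hlim.eventually_lt_const hc1] with n hn
  calc c * Ψ (cfDen a n)
      ≤ c * ((1 + 3 * (cfDen a n * Ψ (cfDen a n))) * cfError a n) :=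
        mul_le_mul_of_nonneg_left (herr n).2 hc0.le
    _ = c * (1 + 3 * (cfDen a n * Ψ (cfDen a n))) * cfError a n := (mul_assoc _ _ _).symm
    _ < cfError a n := mul_lt_of_lt_one_left (cfError_pos ha n) hn
end

section
/- Let Ψ : ℕ → (0,∞) satisfy Ψ(x) = o(1/x) as x → ∞ and Ψ(l·x) ≤ l·Ψ(x) for all positive integers l, x. Then for every non-empty open real interval I, the set (𝒦₁(Ψ) \ ⋃_{0<c<1} 𝒦₁(cΨ)) ∩ I is uncountable. -/
open Filter Set

/-!
The point `ζ` is the limit of increasing fractions `p₀/q₀ < p₁/q₁ < ⋯` with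
`pₖ₊₁qₖ - pₖqₖ₊₁ = 1` and `qₖ₊₁ = 1/Ψ(qₖ) + O(qₖ)`. Then `qₖζ - pₖ ≤ Ψ(qₖ)`, while
`qₖζ - pₖ ≥ 1/qₖ₊₁ ≥ (1 - o(1))Ψ(qₖ)`. Every `P/Q` with large `Q` and `Q|Qζ - P| < 1/3` is some
`pₖ/qₖ`, not necessarily reduced, and `Ψ(lx) ≤ lΨ(x)` prevents the multiple `(lqₖ, lpₖ)` from doing
better than `(qₖ, pₖ)`.

At each step there are two admissible successors whose intervals of possible limits are disjoint, so
the sequence can be chosen to avoid any prescribed countable set of limits.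
-/

lemma exists_rat_mem_Ioo_lt_den {a b : ℝ} (hab : a < b) (n : ℕ) :
    ∃ r : ℚ, (r : ℝ) ∈ Ioo a b ∧ n < r.den := by
  obtain ⟨x, hx, hax, hxb⟩ := exists_irrational_btwn hab
  obtain ⟨ε, hε, hεpos⟩ :=
    (((hx.eventually_forall_le_dist_cast_rat_of_den_le n).filter_mono nhdsWithin_le_nhds).and
      self_mem_nhdsWithin : ∀ᶠ ε in nhdsWithin (0 : ℝ) (Ioi 0), _).exists
  obtain ⟨r, hxr, hr⟩ := exists_rat_btwn (lt_min hxb (lt_add_of_pos_right x hεpos))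
  have hdist : dist x r < ε := by
    rw [dist_comm, Real.dist_eq, abs_of_pos (sub_pos.mpr hxr)]
    linarith [hr.trans_le (min_le_right _ _)]
  exact ⟨r, ⟨hax.trans hxr, hr.trans_le (min_le_left _ _)⟩,
    not_le.mp fun hden ↦ (hε r hden).not_gt hdist⟩

lemma exists_rat_cross_sub_eq_one (r : ℚ) {L : ℝ} (hL : 0 ≤ L) :
    ∃ s : ℚ, s.num * r.den - r.num * s.den = 1 ∧ (s.den : ℝ) ∈ Ioc L (L + r.den) := by
  obtain ⟨u, v, huv⟩ : IsCoprime r.num r.den := r.isCoprime_num_den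
  obtain ⟨m, hm, -⟩ :=
    existsUnique_add_zsmul_mem_Ioc (Nat.cast_pos.mpr r.pos : (0 : ℝ) < r.den) (-u : ℝ) L
  obtain ⟨q, hq⟩ : ∃ q : ℕ, (q : ℤ) = -u + m * r.den := by
    refine ⟨_, Int.toNat_of_nonneg ?_⟩
    have : (0 : ℝ) < -u + m * r.den := by simpa using hL.trans_lt hm.1
    exact_mod_cast this.le
  have hqL : (q : ℝ) ∈ Ioc L (L + r.den) := by
    have : (q : ℝ) = -u + m * r.den := by exact_mod_cast hq
    simpa [this] using hm
  have hdet : (v + m * r.num) * r.den - r.num * q = 1 := by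
    rw [hq]
    linear_combination huv
  have hcop : IsCoprime (v + m * r.num) (q : ℤ) := ⟨r.den, -r.num, by linear_combination hdet⟩
  have hq0 : q ≠ 0 := by
    rintro rfl
    simpa using hL.trans_lt hqL.1
  exact ⟨⟨v + m * r.num, q, hq0, Int.isCoprime_iff_gcd_eq_one.mp hcop⟩, hdet, hqL⟩

lemma exists_eq_mul_num_den {r : ℚ} {Q : ℕ} {P : ℤ} (h : P * r.den = Q * r.num) :
    ∃ l : ℕ, Q = l * r.den ∧ P = l * r.num := by
  have hdvd : (r.den : ℤ) ∣ Q :=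
    r.isCoprime_num_den.symm.dvd_of_dvd_mul_right ⟨P, by linear_combination -h⟩
  obtain ⟨l, rfl⟩ := Int.natCast_dvd_natCast.mp hdvd
  refine ⟨l, mul_comm _ _, mul_right_cancel₀ (Int.natCast_ne_zero.mpr r.den_nz) ?_⟩
  rw [h]
  push_cast
  ring

lemma one_le_mul_abs_add_mul_abs {q Q : ℕ} {p P : ℤ} (h : P * q ≠ Q * p) (ζ : ℝ) :
    1 ≤ Q * |q * ζ - p| + q * |Q * ζ - P| := by
  have hint : (1 : ℝ) ≤ |(P * q - Q * p : ℝ)| := by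
    exact_mod_cast Int.one_le_abs (sub_ne_zero.mpr h)
  calc (1 : ℝ) ≤ |(P * q - Q * p : ℝ)| := hint
    _ = |Q * (q * ζ - p) - q * (Q * ζ - P)| := by ring_nf
    _ ≤ |Q * (q * ζ - p)| + |q * (Q * ζ - P)| := abs_sub _ _
    _ = Q * |q * ζ - p| + q * |Q * ζ - P| := by simp only [abs_mul, Nat.abs_cast]

lemma den_mul_sub_eq_one_add {r s : ℚ} (hdet : s.num * r.den - r.num * s.den = 1) (ζ : ℝ) :
    s.den * (r.den * ζ - r.num) = 1 + r.den * (s.den * ζ - s.num) := by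
  have : (s.num * r.den - r.num * s.den : ℝ) = 1 := by exact_mod_cast hdet
  linear_combination this

lemma exists_eq_mul_num_den_of_den_le_of_lt_den {r s : ℚ} {ζ : ℝ} {Q : ℕ} {P : ℤ}
    (hdet : s.num * r.den - r.num * s.den = 1) (hrQ : r.den ≤ Q) (hQs : Q < s.den)
    (hs : s.den * |s.den * ζ - s.num| < 1 / 3) (hQ : Q * |Q * ζ - P| < 1 / 3) :
    ∃ l : ℕ, Q = l * r.den ∧ P = l * r.num := by
  have hrQ' : (r.den : ℝ) ≤ Q := Nat.cast_le.mpr hrQ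
  have hQs' : (Q : ℝ) < s.den := Nat.cast_lt.mpr hQs
  by_contra hmul
  have hr := one_le_mul_abs_add_mul_abs (fun h ↦ hmul (exists_eq_mul_num_den h)) ζ
  have hrQP : r.den * |Q * ζ - P| < 1 / 3 :=
    (mul_le_mul_of_nonneg_right hrQ' (abs_nonneg _)).trans_lt hQ
  rcases le_or_gt (2 * (Q : ℝ)) s.den with hfar | hnear
  · have hsr : s.den * |r.den * ζ - r.num| < 4 / 3 :=
      calc s.den * |r.den * ζ - r.num| = |1 + r.den * (s.den * ζ - s.num)| := by
            rw [← den_mul_sub_eq_one_add hdet, abs_mul, Nat.abs_cast]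
        _ ≤ 1 + r.den * |s.den * ζ - s.num| := by
            simpa only [abs_one, abs_mul, Nat.abs_cast] using
              abs_add_le 1 (r.den * (s.den * ζ - s.num))
        _ ≤ 1 + s.den * |s.den * ζ - s.num| := by gcongr; exact hrQ.trans hQs.le
        _ < 4 / 3 := by linarith
    linarith [mul_le_mul_of_nonneg_right hfar (abs_nonneg (r.den * ζ - r.num))]
  · have hne : P * s.den ≠ Q * s.num := by
      intro h
      obtain ⟨l, rfl, -⟩ := exists_eq_mul_num_den h
      have hl : 0 < l := Nat.pos_of_mul_pos_right (r.pos.trans_le hrQ)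
      exact hQs.not_ge (Nat.le_mul_of_pos_left _ hl)
    have hQs_abs : Q * |s.den * ζ - s.num| < 1 / 3 :=
      (mul_le_mul_of_nonneg_right hQs'.le (abs_nonneg _)).trans_lt hs
    linarith [one_le_mul_abs_add_mul_abs hne ζ,
      mul_le_mul_of_nonneg_right hnear.le (abs_nonneg (Q * ζ - P))]

lemma exists_le_lt_succ_of_strictMono {u : ℕ → ℕ} (hu : StrictMono u) {N n : ℕ} (hn : u N ≤ n) :
    ∃ k ≥ N, u k ≤ n ∧ n < u (k + 1) := by
  have hunbdd : ¬ BddAbove (u '' Ici N) := fun hbdd ↦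
    ((Ici_infinite N).image hu.injective.injOn) hbdd.finite
  have hmem : n ∈ ⋃ k ∈ Ici N, Ico (u k) (u (Order.succ k)) := by
    rwa [biUnion_Ici_Ico_map_succ (fun k hk ↦ hu.monotone hk) hunbdd]
  obtain ⟨k, hNk, hk⟩ := mem_iUnion₂.mp hmem
  exact ⟨k, hNk, hk⟩

lemma mul_lt_abs_sub_of_multiple {Ψ : ℕ → ℝ} {l q : ℕ} {p : ℤ} {c ζ : ℝ} (hl : 0 < l)
    (hmul : Ψ (l * q) ≤ l * Ψ q) (hc : 0 ≤ c) (h : c * Ψ q < |q * ζ - p|) :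
    c * Ψ (l * q) < |(l * q : ℕ) * ζ - (l * p : ℤ)| :=
  calc c * Ψ (l * q) ≤ c * (l * Ψ q) := by gcongr
    _ = l * (c * Ψ q) := mul_left_comm _ _ _
    _ < l * |q * ζ - p| := mul_lt_mul_of_pos_left h (Nat.cast_pos.mpr hl)
    _ = |l * (q * ζ - p)| := by rw [abs_mul, Nat.abs_cast]
    _ = |(l * q : ℕ) * ζ - (l * p : ℤ)| := by push_cast; ring_nf

lemma notMem_K1_of_eventually_lt {φ : ℕ → ℝ} {ζ : ℝ}
    (h : ∀ᶠ Q : ℕ in atTop, ∀ P : ℤ, φ Q < |Q * ζ - P|) : ζ ∉ K1 φ := by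
  obtain ⟨N, hN⟩ := eventually_atTop.mp h
  rintro ⟨-, hinf⟩
  refine hinf (Set.Finite.of_finite_fibers Prod.fst ((finite_Iio N).subset ?_) fun Q _ ↦ ?_)
  · rintro _ ⟨⟨Q, P⟩, ⟨-, hQP⟩, rfl⟩
    exact not_le.mp fun hNQ ↦ (hN Q hNQ P).not_ge hQP
  · refine ((finite_singleton Q).prod (finite_Icc ⌈Q * ζ - φ Q⌉ ⌊Q * ζ + φ Q⌋)).subset ?_
    rintro ⟨_, P⟩ ⟨⟨-, hQP⟩, rfl⟩
    rw [abs_le] at hQP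
    exact ⟨rfl, Int.ceil_le.mpr (by linarith [hQP.2]), Int.le_floor.mpr (by linarith [hQP.1])⟩

/-- The real numbers `ζ ≥ p / q` with `|q·ζ - p| ≤ Ψ q`, where `p / q` is the reduced form of `r`:
the closed interval to which Jarník's construction confines its limit at the fraction `r`. -/
def approxWindow (Ψ : ℕ → ℝ) (r : ℚ) : Set ℝ :=
  Icc (r : ℝ) (r + Ψ r.den / r.den)

/-- One step of Jarník's construction: `s` is an upper Farey neighbour of `r` and its denominator
exceeds `1 / Ψ(q)` by at least `q` and at most `3q`, where `q` is the denominator of `r`. -/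
structure IsJarnikStep (Ψ : ℕ → ℝ) (r s : ℚ) : Prop where
  det : s.num * r.den - r.num * s.den = 1
  le_den : (Ψ r.den)⁻¹ + r.den ≤ s.den
  den_le : s.den ≤ (Ψ r.den)⁻¹ + 3 * r.den

section ApproxWindow

variable {Ψ : ℕ → ℝ} {r : ℚ} {ζ : ℝ}

lemma mem_approxWindow_iff : ζ ∈ approxWindow Ψ r ↔ r.den * ζ - r.num ∈ Icc 0 (Ψ r.den) := by
  have hden : (0 : ℝ) < r.den := Nat.cast_pos.mpr r.pos
  rw [approxWindow, mem_Icc, mem_Icc, Rat.cast_def, ← add_div, div_le_iff₀ hden, le_div_iff₀ hden,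
    sub_nonneg, sub_le_iff_le_add', mul_comm ζ]

lemma abs_sub_le_of_mem_approxWindow (hζ : ζ ∈ approxWindow Ψ r) :
    |r.den * ζ - r.num| ≤ Ψ r.den := by
  obtain ⟨hnonneg, hle⟩ := mem_approxWindow_iff.mp hζ
  rwa [abs_of_nonneg hnonneg]

lemma abs_sub_rat_lt_of_mem_approxWindow (hr : r.den * Ψ r.den < 1) (hζ : ζ ∈ approxWindow Ψ r) :
    |ζ - r| < 1 / (r.den : ℝ) ^ 2 := by
  have hden : (0 : ℝ) < r.den := Nat.cast_pos.mpr r.pos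
  calc |ζ - r| = ζ - r := abs_of_nonneg (sub_nonneg.mpr hζ.1)
    _ ≤ Ψ r.den / r.den := sub_le_iff_le_add'.mpr hζ.2
    _ < 1 / (r.den : ℝ) ^ 2 := by
      rw [div_lt_div_iff₀ hden (pow_pos hden 2)]
      nlinarith

lemma exists_approxWindow_subset_Ioo (hlim : Tendsto (fun q : ℕ ↦ (q : ℝ) * Ψ q) atTop (nhds 0))
    {a b : ℝ} (hab : a < b) (N : ℕ) : ∃ r : ℚ, N ≤ r.den ∧ approxWindow Ψ r ⊆ Ioo a b := by
  obtain ⟨c, hac, hcb⟩ := exists_between hab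
  obtain ⟨M, hM⟩ := eventually_atTop.mp (hlim.eventually_lt_const (sub_pos.mpr hcb))
  obtain ⟨r, ⟨har, hrc⟩, hr⟩ := exists_rat_mem_Ioo_lt_den hac (max M N)
  refine ⟨r, (le_max_right M N).trans hr.le, Icc_subset_Ioo har ?_⟩
  have hden : (1 : ℝ) ≤ r.den := Nat.one_le_cast.mpr r.pos
  have hΨ := hM r.den ((le_max_left M N).trans hr.le)
  have hwidth : Ψ r.den / r.den < b - c :=
    calc Ψ r.den / r.den = r.den * Ψ r.den / (r.den : ℝ) ^ 2 := by field_simp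
      _ < (b - c) / (r.den : ℝ) ^ 2 := by gcongr
      _ ≤ b - c := div_le_self (sub_pos.mpr hcb).le (one_le_pow₀ hden)
  linarith

end ApproxWindow

namespace IsJarnikStep

variable {Ψ : ℕ → ℝ} {r s : ℚ} {ζ : ℝ}

lemma den_lt (h : IsJarnikStep Ψ r s) (hr : 0 < Ψ r.den) : r.den < s.den := by
  have : (r.den : ℝ) < s.den := (lt_add_of_pos_left _ (inv_pos.mpr hr)).trans_le h.le_den
  exact_mod_cast this

lemma approxWindow_subset (h : IsJarnikStep Ψ r s) (hr : 0 < Ψ r.den) (hs : s.den * Ψ s.den ≤ 1) :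
    approxWindow Ψ s ⊆ approxWindow Ψ r := by
  intro ζ hζ
  obtain ⟨hnonneg, hle⟩ := mem_approxWindow_iff.mp hζ
  have hden : (0 : ℝ) < s.den := Nat.cast_pos.mpr s.pos
  have hrs := den_mul_sub_eq_one_add h.det ζ
  have hgap : 1 + r.den * Ψ r.den ≤ s.den * Ψ r.den := by
    simpa only [add_mul, inv_mul_cancel₀ hr.ne'] using mul_le_mul_of_nonneg_right h.le_den hr.le
  have hanti : Ψ s.den ≤ Ψ r.den := by
    refine le_of_mul_le_mul_left ?_ hden
    calc s.den * Ψ s.den ≤ 1 := hs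
      _ ≤ 1 + r.den * Ψ r.den := by simpa using mul_nonneg (Nat.cast_nonneg r.den) hr.le
      _ ≤ s.den * Ψ r.den := hgap
  refine mem_approxWindow_iff.mpr ⟨?_, ?_⟩
  · refine (pos_of_mul_pos_right (?_ : 0 < s.den * (r.den * ζ - r.num)) hden.le).le
    rw [hrs]
    positivity
  · refine le_of_mul_le_mul_left ?_ hden
    calc s.den * (r.den * ζ - r.num) = 1 + r.den * (s.den * ζ - s.num) := hrs
      _ ≤ 1 + r.den * Ψ r.den := by gcongr; exact hle.trans hanti
      _ ≤ s.den * Ψ r.den := hgap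

lemma mul_lt_of_mem_approxWindow (h : IsJarnikStep Ψ r s) (hr : 0 < Ψ r.den) {c : ℝ} (hc : 0 ≤ c)
    (hsmall : r.den * Ψ r.den < (1 - c) / 3) (hζ : ζ ∈ approxWindow Ψ s) :
    c * Ψ r.den < r.den * ζ - r.num := by
  have hden : (0 : ℝ) < s.den := Nat.cast_pos.mpr s.pos
  have hgap : s.den * Ψ r.den ≤ 1 + 3 * (r.den * Ψ r.den) := by
    simpa only [add_mul, inv_mul_cancel₀ hr.ne', mul_assoc] using
      mul_le_mul_of_nonneg_right h.den_le hr.le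
  refine lt_of_mul_lt_mul_left ?_ hden.le
  calc s.den * (c * Ψ r.den) = c * (s.den * Ψ r.den) := mul_left_comm _ _ _
    _ ≤ c * (1 + 3 * (r.den * Ψ r.den)) := by gcongr
    _ < 1 := by nlinarith [mul_pos (Nat.cast_pos.mpr r.pos : (0 : ℝ) < r.den) hr]
    _ ≤ 1 + r.den * (s.den * ζ - s.num) :=
      le_add_of_nonneg_right (mul_nonneg (Nat.cast_nonneg _) (mem_approxWindow_iff.mp hζ).1)
    _ = s.den * (r.den * ζ - r.num) := (den_mul_sub_eq_one_add h.det ζ).symm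

end IsJarnikStep

lemma notMem_approxWindow_of_mediant {Ψ : ℕ → ℝ} {r s m : ℚ} {t : ℝ}
    (hdet : s.num * r.den - r.num * s.den = 1) (hnum : m.num = s.num + r.num)
    (hden : m.den = s.den + r.den) (hm : m.den * Ψ m.den < 1) (ht : t ∈ approxWindow Ψ s) :
    t ∉ approxWindow Ψ m := by
  intro htm
  have hs := (mem_approxWindow_iff.mp ht).1
  obtain ⟨hnonneg, hle⟩ := mem_approxWindow_iff.mp htm
  have hrs := den_mul_sub_eq_one_add hdet t
  have hmed : s.den * (m.den * t - m.num) = 1 + m.den * (s.den * t - s.num) := by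
    rw [hnum, hden]
    push_cast
    linear_combination hrs
  have hsm : (s.den : ℝ) ≤ m.den := by
    rw [hden]
    exact_mod_cast Nat.le_add_right _ _
  have hmul : 1 ≤ m.den * Ψ m.den :=
    calc (1 : ℝ) ≤ 1 + m.den * (s.den * t - s.num) :=
          le_add_of_nonneg_right (mul_nonneg (Nat.cast_nonneg _) hs)
      _ = s.den * (m.den * t - m.num) := hmed.symm
      _ ≤ m.den * Ψ m.den := by gcongr
  exact hmul.not_gt hm

lemma exists_mediant {r s : ℚ} (hdet : s.num * r.den - r.num * s.den = 1) :
    ∃ m : ℚ, m.num = s.num + r.num ∧ m.den = s.den + r.den := by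
  have hcop : IsCoprime (s.num + r.num) ((s.den + r.den : ℕ) : ℤ) :=
    ⟨r.den, -r.num, by push_cast; linear_combination hdet⟩
  exact ⟨⟨_, _, (Nat.add_pos_left s.pos _).ne', Int.isCoprime_iff_gcd_eq_one.mp hcop⟩, rfl, rfl⟩

lemma exists_isJarnikStep_notMem_approxWindow {Ψ : ℕ → ℝ} {r : ℚ} (hr : 0 < Ψ r.den)
    (hsmall : ∀ q, r.den ≤ q → q * Ψ q < 1) (t : ℝ) :
    ∃ s, IsJarnikStep Ψ r s ∧ t ∉ approxWindow Ψ s := by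
  obtain ⟨s, hdet, hlt, hle⟩ :=
    exists_rat_cross_sub_eq_one r (L := (Ψ r.den)⁻¹ + r.den) (by positivity)
  by_cases ht : t ∈ approxWindow Ψ s
  · obtain ⟨m, hnum, hden⟩ := exists_mediant hdet
    have hdenR : (m.den : ℝ) = s.den + r.den := by exact_mod_cast hden
    have hrm : r.den ≤ m.den := hden ▸ Nat.le_add_left _ _
    refine ⟨m, ⟨?_, by linarith, by linarith⟩,
      notMem_approxWindow_of_mediant hdet hnum hden (hsmall _ hrm) ht⟩
    rw [hnum, hden]
    push_cast
    linear_combination hdet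
  · exact ⟨s, ⟨hdet, hlt.le, by linarith⟩, ht⟩

lemma exists_jarnikStep_seq {Ψ : ℕ → ℝ} (hpos : ∀ q, 0 < Ψ q) (r₀ : ℚ)
    (hsmall : ∀ q, r₀.den ≤ q → q * Ψ q < 1) (f : ℕ → ℝ) :
    ∃ r : ℕ → ℚ, r 0 = r₀ ∧ (∀ k, IsJarnikStep Ψ (r k) (r (k + 1))) ∧
      ∀ k, f k ∉ approxWindow Ψ (r (k + 1)) := by
  have hnext (k : ℕ) (r : {r : ℚ // r₀.den ≤ r.den}) :
      ∃ s : {s : ℚ // r₀.den ≤ s.den}, IsJarnikStep Ψ r s ∧ f k ∉ approxWindow Ψ s := by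
    obtain ⟨s, hs, hfs⟩ := exists_isJarnikStep_notMem_approxWindow (hpos r.1.den)
      (fun q hq ↦ hsmall q (r.2.trans hq)) (f k)
    exact ⟨⟨s, r.2.trans (hs.den_lt (hpos _)).le⟩, hs, hfs⟩
  choose next hnext using hnext
  let r : ℕ → {r : ℚ // r₀.den ≤ r.den} := fun n ↦ Nat.rec ⟨r₀, le_rfl⟩ next n
  exact ⟨fun k ↦ (r k).1, rfl, fun k ↦ (hnext k (r k)).1, fun k ↦ (hnext k (r k)).2⟩

section JarnikSequence

variable {Ψ : ℕ → ℝ} {r : ℕ → ℚ} {ζ : ℝ}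

lemma strictMono_den (hpos : ∀ q, 0 < Ψ q) (hstep : ∀ k, IsJarnikStep Ψ (r k) (r (k + 1))) :
    StrictMono fun k ↦ (r k).den :=
  strictMono_nat_of_lt_succ fun k ↦ (hstep k).den_lt (hpos _)

lemma exists_forall_mem_approxWindow (hpos : ∀ q, 0 < Ψ q)
    (hstep : ∀ k, IsJarnikStep Ψ (r k) (r (k + 1)))
    (hsmall : ∀ k, (r k).den * Ψ (r k).den ≤ 1) : ∃ ζ, ∀ k, ζ ∈ approxWindow Ψ (r k) := by
  obtain ⟨ζ, hζ⟩ := IsCompact.nonempty_iInter_of_sequence_nonempty_isCompact_isClosed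
    (fun k ↦ approxWindow Ψ (r k)) (fun k ↦ (hstep k).approxWindow_subset (hpos _) (hsmall (k + 1)))
    (fun k ↦ nonempty_Icc.mpr
      (le_add_of_nonneg_right (div_nonneg (hpos _).le (Nat.cast_nonneg _))))
    isCompact_Icc (fun _ ↦ isClosed_Icc)
  exact ⟨ζ, mem_iInter.mp hζ⟩

lemma irrational_of_forall_mem_approxWindow (hden : StrictMono fun k ↦ (r k).den)
    (hsmall : ∀ k, (r k).den * Ψ (r k).den < 1) (hζ : ∀ k, ζ ∈ approxWindow Ψ (r k)) :
    Irrational ζ := by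
  have hinj : Function.Injective r := .of_comp (f := Rat.den) hden.injective
  refine (Real.infinite_rat_abs_sub_lt_one_div_den_sq_iff_irrational ζ).mp
    ((infinite_range_of_injective hinj).mono ?_)
  rintro _ ⟨k, rfl⟩
  exact abs_sub_rat_lt_of_mem_approxWindow (hsmall k) (hζ k)

lemma mem_K1_of_forall_mem_approxWindow (hden : StrictMono fun k ↦ (r k).den)
    (hsmall : ∀ k, (r k).den * Ψ (r k).den < 1) (hζ : ∀ k, ζ ∈ approxWindow Ψ (r k)) :
    ζ ∈ K1 Ψ := by
  have hinj : Function.Injective fun k ↦ ((r k).den, (r k).num) :=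
    .of_comp (f := Prod.fst) hden.injective
  refine ⟨irrational_of_forall_mem_approxWindow hden hsmall hζ,
    (infinite_range_of_injective hinj).mono ?_⟩
  rintro _ ⟨k, rfl⟩
  exact ⟨(r k).pos, abs_sub_le_of_mem_approxWindow (hζ k)⟩

lemma eventually_lt_abs_of_forall_mem_approxWindow (hpos : ∀ q, 0 < Ψ q)
    (hlim : Tendsto (fun q : ℕ ↦ (q : ℝ) * Ψ q) atTop (nhds 0))
    (hmul : ∀ l x : ℕ, 1 ≤ l → 1 ≤ x → Ψ (l * x) ≤ l * Ψ x)
    (hstep : ∀ k, IsJarnikStep Ψ (r k) (r (k + 1)))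
    (hζ : ∀ k, ζ ∈ approxWindow Ψ (r k)) {c : ℝ} (hc0 : 0 ≤ c) (hc1 : c < 1) :
    ∀ᶠ Q : ℕ in atTop, ∀ P : ℤ, c * Ψ Q < |Q * ζ - P| := by
  have hden := strictMono_den hpos hstep
  obtain ⟨N, hN⟩ := eventually_atTop.mp
    ((hlim.eventually_lt_const (by linarith : 0 < (1 - c) / 3)).and
      (hlim.eventually_lt_const (by norm_num : (0 : ℝ) < 1 / 3)))
  filter_upwards [eventually_ge_atTop N, eventually_ge_atTop (r N).den] with Q hNQ hQ P
  by_contra! hQP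
  obtain ⟨k, hNk, hkQ, hQk⟩ := exists_le_lt_succ_of_strictMono hden hQ
  have hNden {j : ℕ} (hj : N ≤ j) : N ≤ (r j).den := hj.trans (hden.le_apply (x := j))
  have hnext : (r (k + 1)).den * |(r (k + 1)).den * ζ - (r (k + 1)).num| < 1 / 3 :=
    (mul_le_mul_of_nonneg_left (abs_sub_le_of_mem_approxWindow (hζ _))
      (Nat.cast_nonneg _)).trans_lt (hN _ (hNden (Nat.le_succ_of_le hNk))).2
  have hQsmall : Q * |Q * ζ - P| < 1 / 3 :=
    (mul_le_mul_of_nonneg_left (hQP.trans (mul_le_of_le_one_left (hpos Q).le hc1.le))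
      (Nat.cast_nonneg _)).trans_lt (hN Q hNQ).2
  obtain ⟨l, rfl, rfl⟩ :=
    exists_eq_mul_num_den_of_den_le_of_lt_den (hstep k).det hkQ hQk hnext hQsmall
  have hl : 1 ≤ l := Nat.pos_of_mul_pos_right ((r k).pos.trans_le hkQ)
  have hk : c * Ψ (r k).den < |(r k).den * ζ - (r k).num| :=
    ((hstep k).mul_lt_of_mem_approxWindow (hpos _) hc0 (hN _ (hNden hNk)).1
      (hζ (k + 1))).trans_le (le_abs_self _)
  exact hQP.not_gt (mul_lt_abs_sub_of_multiple hl (hmul l _ hl (r k).pos) hc0 hk)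

end JarnikSequence

/-- If `Ψ` is positive, satisfies `Ψ(x) = o(1/x)` and `Ψ(l·x) ≤ l·Ψ(x)` for all positive
integers `l, x`, then for every non-empty open interval `(a, b)` the set
`(𝒦₁(Ψ) \ ⋃_{0<c<1} 𝒦₁(cΨ)) ∩ (a, b)` is uncountable. -/
theorem jarnik_one_dimensional_dense (Ψ : ℕ → ℝ) (hpos : ∀ q, 0 < Ψ q)
    (hsmall : Tendsto (fun q : ℕ => (q : ℝ) * Ψ q) atTop (nhds 0))
    (hB2 : ∀ l x : ℕ, 1 ≤ l → 1 ≤ x → Ψ (l * x) ≤ (l : ℝ) * Ψ x)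
    (a b : ℝ) (hab : a < b) :
    ¬ ((K1 Ψ \ ⋃ c ∈ Ioo (0 : ℝ) 1, K1 (fun x => c * Ψ x)) ∩ Ioo a b).Countable := by
  intro hcount
  obtain ⟨f, hf⟩ := countable_iff_exists_subset_range.mp hcount
  obtain ⟨N, hN⟩ := eventually_atTop.mp (hsmall.eventually_lt_const one_pos)
  obtain ⟨r₀, hr₀, hr₀_sub⟩ := exists_approxWindow_subset_Ioo hsmall hab N
  obtain ⟨r, rfl, hstep, havoid⟩ :=
    exists_jarnikStep_seq hpos r₀ (fun q hq ↦ hN q (hr₀.trans hq)) f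
  have hden := strictMono_den hpos hstep
  have hr (k : ℕ) : (r k).den * Ψ (r k).den < 1 :=
    hN _ (hr₀.trans (hden.monotone (Nat.zero_le k)))
  obtain ⟨ζ, hζ⟩ := exists_forall_mem_approxWindow hpos hstep fun k ↦ (hr k).le
  have hmem : ζ ∈ K1 Ψ := mem_K1_of_forall_mem_approxWindow hden hr hζ
  have hnotMem : ζ ∉ ⋃ c ∈ Ioo (0 : ℝ) 1, K1 (fun x => c * Ψ x) := by
    simp only [mem_iUnion, not_exists]
    exact fun c hc ↦ notMem_K1_of_eventually_lt
      (eventually_lt_abs_of_forall_mem_approxWindow hpos hsmall hB2 hstep hζ hc.1.le hc.2)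
  obtain ⟨k, rfl⟩ := hf ⟨⟨hmem, hnotMem⟩, hr₀_sub (hζ 0)⟩
  exact havoid k (hζ (k + 1))
end

section
/- Let Ψ : ℕ → (0,∞) satisfy Ψ(x) = o(1/x) as x → ∞. Then for every non-empty open real interval I, the set (𝒦₁*(Ψ) \ ⋃_{0<c<1} 𝒦₁*(cΨ)) ∩ I is uncountable. -/
open Filter Set

/-- `K1star Ψ` is the set of irrational `ζ` such that `|q·ζ - p| ≤ Ψ q` holds for
infinitely many pairs `(q, p) ∈ ℕ × ℤ` with `q ≥ 1` and `gcd(p, q) = 1`. -/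
def K1star (Ψ : ℕ → ℝ) : Set ℝ :=
  {ζ : ℝ | Irrational ζ ∧
    {qp : ℕ × ℤ | 1 ≤ qp.1 ∧ Int.gcd qp.2 (qp.1 : ℤ) = 1 ∧
      |(qp.1 : ℝ) * ζ - (qp.2 : ℝ)| ≤ Ψ qp.1}.Infinite}

/-!
Take a backward continued fraction, with convergents `P n / Q n` increasing to `ζ`. The remainder
`Q n * ζ - P n` lies between `1 / Q (n + 1)` and `1 / (Q (n + 1) - Q n)`. Choosing each partial
quotient so that `Q (n + 1) = 1 / Ψ (Q n) + O (Q n)` makes the remainder at most `Ψ (Q n)`, while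
its ratio to `Ψ (Q n)` tends to `1` because `q * Ψ q` tends to `0`. A reduced fraction that is not
a convergent satisfies `q * |q * ζ - p| ≥ 1 / 8`, so only convergents matter for large `q`, and `ζ`
is in `K1star Ψ` but in no `K1star (c Ψ)` with `c < 1`. Two consecutive integers are admissible as
partial quotient at every step, and the expansion of `ζ` is unique: this gives an injection of the
subsets of `ℕ` into the set in question. A suitable initial convergent places `ζ` in the interval.
-/

theorem one_le_mul_abs_add_mul_abs_s2 {K : Type*} [CommRing K] [LinearOrder K] [IsStrictOrderedRing K]
    {p q p' q' : ℤ} (hne : p * q' ≠ p' * q) (ζ : K) :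
    1 ≤ |(q : K)| * |q' * ζ - p'| + |(q' : K)| * |q * ζ - p| := by
  have hdet : (1 : K) ≤ |(p * q' - p' * q : K)| := by
    exact_mod_cast Int.one_le_abs (sub_ne_zero.mpr hne)
  calc (1 : K) ≤ |(p * q' - p' * q : K)| := hdet
    _ = |q * (q' * ζ - p') - q' * (q * ζ - p)| := by ring_nf
    _ ≤ |(q : K)| * |q' * ζ - p'| + |(q' : K)| * |q * ζ - p| := by
      simpa only [abs_mul] using abs_sub (q * (q' * ζ - p') : K) (q' * (q * ζ - p))

theorem mem_K1star_iff_frequently {Φ : ℕ → ℝ} {ζ : ℝ} :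
    ζ ∈ K1star Φ ↔ Irrational ζ ∧
      ∃ᶠ q : ℕ in atTop, 0 < q ∧ ∃ p : ℤ, IsCoprime p q ∧ |q * ζ - p| ≤ Φ q := by
  rw [Nat.frequently_atTop_iff_infinite, K1star, mem_ofPred_eq]
  refine and_congr_right fun _ => ?_
  set S := {qp : ℕ × ℤ | 1 ≤ qp.1 ∧ Int.gcd qp.2 (qp.1 : ℤ) = 1 ∧
    |(qp.1 : ℝ) * ζ - (qp.2 : ℝ)| ≤ Φ qp.1}
  have himage : {q : ℕ | 0 < q ∧ ∃ p : ℤ, IsCoprime p q ∧ |q * ζ - p| ≤ Φ q} = Prod.fst '' S := by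
    ext q
    simp [S, Int.isCoprime_iff_gcd_eq_one, Nat.one_le_iff_ne_zero, pos_iff_ne_zero]
  have hfibers : ∀ q, (S ∩ Prod.fst ⁻¹' {q}).Finite := fun q => by
    refine ((finite_Icc ⌈q * ζ - Φ q⌉ ⌊q * ζ + Φ q⌋).image (Prod.mk q)).subset ?_
    rintro ⟨q', p⟩ ⟨⟨-, -, hle⟩, rfl⟩
    obtain ⟨hlo, hhi⟩ := abs_le.mp hle
    exact ⟨p, ⟨Int.ceil_le.mpr (by linarith), Int.le_floor.mpr (by linarith)⟩, rfl⟩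
  rw [himage]
  exact ⟨fun hS hfin => hS (hfin.of_finite_fibers _ fun q _ => hfibers q), Infinite.of_image _⟩

theorem exists_det_eq_one_of_isCoprime {p : ℤ} {q : ℕ} (hpq : IsCoprime p q) (hq : 0 < q)
    (N : ℕ) : ∃ (p' : ℤ) (q' : ℕ), N ≤ q' ∧ p' * q - p * q' = 1 := by
  obtain ⟨u, v, huv⟩ := hpq
  let t : ℤ := |u| + N
  have hlarge : N ≤ t * q - u := by
    have hqt : t * 1 ≤ t * q := mul_le_mul_of_nonneg_left (mod_cast hq) (by positivity)
    linarith [le_abs_self u, show t = |u| + N from rfl]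
  refine ⟨v + t * p, (t * q - u).toNat, by omega, ?_⟩
  rw [Int.toNat_of_nonneg (by omega)]
  linear_combination huv

/-- `P n` and `Q n` are the numerators and denominators of consecutive convergents of a backward
(Hirzebruch–Jung) continued fraction `a₀ - 1 / (a₁ - 1 / (a₂ - ⋯))`, whose partial quotients are
large enough for the denominators to double. The recurrence
`(P, Q) (n + 2) = a n • (P, Q) (n + 1) - (P, Q) n` is encoded by the determinant condition, and
the chain may start at any convergent. -/
structure IsBackwardChain (P : ℕ → ℤ) (Q : ℕ → ℕ) : Prop where
  den_pos : ∀ n, 0 < Q n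
  two_mul_den_le : ∀ n, 2 * Q n ≤ Q (n + 1)
  det : ∀ n, P (n + 1) * Q n - P n * Q (n + 1) = 1

/-- `P n / Q n` are convergents of a backward continued fraction with value `ζ`; convergence is
encoded by the remainders `Q n * ζ - P n` being positive and decreasing. -/
structure IsBackwardExpansion (P : ℕ → ℤ) (Q : ℕ → ℕ) (ζ : ℝ) : Prop
    extends IsBackwardChain P Q where
  rem_pos : ∀ n, 0 < Q n * ζ - P n
  rem_succ_lt : ∀ n, Q (n + 1) * ζ - P (n + 1) < Q n * ζ - P n

namespace IsBackwardChain

variable {P : ℕ → ℤ} {Q : ℕ → ℕ}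

theorem den_strictMono (h : IsBackwardChain P Q) : StrictMono Q :=
  strictMono_nat_of_lt_succ fun n => by linarith [h.den_pos n, h.two_mul_den_le n]

theorem isCoprime (h : IsBackwardChain P Q) (n : ℕ) : IsCoprime (P n) (Q n) :=
  ⟨-Q (n + 1), P (n + 1), by linarith [h.det n]⟩

theorem two_lt_det_add_two (h : IsBackwardChain P Q) (n : ℕ) :
    2 < P (n + 2) * Q n - P n * Q (n + 2) := by
  have hpos : (0 : ℤ) < Q n := mod_cast h.den_pos n
  have hgrowth : (2 * Q (n + 1) : ℤ) ≤ Q (n + 2) := mod_cast h.two_mul_den_le (n + 1)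
  have hdet : (P (n + 2) * Q n - P n * Q (n + 2)) * Q (n + 1) = (Q n + Q (n + 2) : ℤ) := by
    linear_combination (Q n : ℤ) * h.det (n + 1) + (Q (n + 2) : ℤ) * h.det n
  refine lt_of_mul_lt_mul_right ?_ (Int.natCast_nonneg (Q (n + 1)))
  linarith

/-- The value is the supremum of the convergents `P n / Q n`; the mediant-like fractions
`(P (n + 1) - P n) / (Q (n + 1) - Q n)` decrease and bound it from above. -/
theorem exists_isBackwardExpansion (h : IsBackwardChain P Q) :
    ∃ ζ : ℝ, IsBackwardExpansion P Q ζ := by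
  have hpos (n) : (0 : ℝ) < Q n := mod_cast h.den_pos n
  have hgap (n) : (0 : ℝ) < Q (n + 1) - Q n :=
    sub_pos.mpr (mod_cast h.den_strictMono n.lt_succ_self)
  have hdet (n) : (P (n + 1) * Q n - P n * Q (n + 1) : ℝ) = 1 := mod_cast h.det n
  let lower (n : ℕ) : ℝ := P n / Q n
  let upper (n : ℕ) : ℝ := (P (n + 1) - P n) / (Q (n + 1) - Q n)
  have hlower : StrictMono lower := strictMono_nat_of_lt_succ fun n => by
    rw [div_lt_div_iff₀ (hpos _) (hpos _)]
    linarith [hdet n]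
  have hupper : StrictAnti upper := strictAnti_nat_of_succ_lt fun n => by
    have hdet₂ : (2 : ℝ) < P (n + 2) * Q n - P n * Q (n + 2) := mod_cast h.two_lt_det_add_two n
    rw [div_lt_div_iff₀ (hgap _) (hgap _)]
    linarith [hdet n, hdet (n + 1)]
  have hle : lower ≤ upper := fun n => by
    rw [div_le_div_iff₀ (hpos _) (hgap _)]
    linarith [hdet n]
  have hmem := mem_iInter.mp
    (hlower.monotone.ciSup_mem_iInter_Icc_of_antitone hupper.antitone hle)
  refine ⟨⨆ n, lower n, h, fun n => ?_, fun n => ?_⟩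
  · have hlt := (hlower n.lt_succ_self).trans_le (hmem (n + 1)).1
    rw [div_lt_iff₀ (hpos n)] at hlt
    linarith
  · have hlt := (hmem (n + 1)).2.trans_lt (hupper n.lt_succ_self)
    rw [lt_div_iff₀ (hgap n)] at hlt
    linarith

end IsBackwardChain

/-- The denominators `Q (n + 1)` and `Q (n + 2)` are related so that the remainder at
`Q (n + 1)`, which is about `1 / Q (n + 2)`, is just below `Ψ (Q (n + 1))`. -/
def IsAdapted (Ψ : ℕ → ℝ) (Q : ℕ → ℕ) : Prop :=
  ∀ n, Q (n + 2) * Ψ (Q (n + 1)) ∈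
    Icc (1 + Q (n + 1) * Ψ (Q (n + 1))) (1 + 5 * (Q (n + 1) * Ψ (Q (n + 1))))

namespace IsBackwardExpansion

variable {P P' : ℕ → ℤ} {Q Q' : ℕ → ℕ} {ζ : ℝ}

theorem den_succ_mul_rem_sub (h : IsBackwardExpansion P Q ζ) (n : ℕ) :
    Q (n + 1) * (Q n * ζ - P n) - Q n * (Q (n + 1) * ζ - P (n + 1)) = 1 := by
  have hdet : (P (n + 1) * Q n - P n * Q (n + 1) : ℝ) = 1 := mod_cast h.det n
  linear_combination hdet

theorem one_lt_den_succ_mul_rem (h : IsBackwardExpansion P Q ζ) (n : ℕ) :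
    1 < Q (n + 1) * (Q n * ζ - P n) := by
  have hpos : (0 : ℝ) < Q n := mod_cast h.den_pos n
  linarith [h.den_succ_mul_rem_sub n, mul_pos hpos (h.rem_pos (n + 1))]

theorem den_sub_den_mul_rem_lt_one (h : IsBackwardExpansion P Q ζ) (n : ℕ) :
    (Q (n + 1) - Q n) * (Q n * ζ - P n) < 1 := by
  have hpos : (0 : ℝ) < Q n := mod_cast h.den_pos n
  linarith [h.den_succ_mul_rem_sub n, mul_lt_mul_of_pos_left (h.rem_succ_lt n) hpos]

theorem den_succ_mul_rem_lt_two (h : IsBackwardExpansion P Q ζ) (n : ℕ) :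
    Q (n + 1) * (Q n * ζ - P n) < 2 := by
  have hgrowth : (2 * Q n : ℝ) ≤ Q (n + 1) := mod_cast h.two_mul_den_le n
  nlinarith [h.den_sub_den_mul_rem_lt_one n, mul_le_mul_of_nonneg_right hgrowth (h.rem_pos n).le]

theorem succ_unique (h : IsBackwardExpansion P Q ζ) (h' : IsBackwardExpansion P' Q' ζ) {n : ℕ}
    (hP : P n = P' n) (hQ : Q n = Q' n) : P (n + 1) = P' (n + 1) ∧ Q (n + 1) = Q' (n + 1) := by
  have hdet := h.det n
  have hdet' := h'.det n
  have hlo := h.one_lt_den_succ_mul_rem n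
  have hhi := h.den_sub_den_mul_rem_lt_one n
  have hlo' := h'.one_lt_den_succ_mul_rem n
  have hhi' := h'.den_sub_den_mul_rem_lt_one n
  rw [← hP, ← hQ] at hdet' hlo' hhi'
  have hdvd : (Q n : ℤ) ∣ Q (n + 1) - Q' (n + 1) :=
    (h.isCoprime n).symm.dvd_of_dvd_mul_left ⟨P (n + 1) - P' (n + 1), by linarith⟩
  have hclose : |(Q (n + 1) - Q' (n + 1) : ℝ)| < Q n := by
    rw [abs_sub_lt_iff]
    constructor <;> exact lt_of_mul_lt_mul_right (by linarith) (h.rem_pos n).le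
  have hden : (Q (n + 1) : ℤ) = Q' (n + 1) :=
    sub_eq_zero.mp (Int.eq_zero_of_abs_lt_dvd hdvd (mod_cast hclose))
  have hQ_ne : (Q n : ℤ) ≠ 0 := mod_cast (h.den_pos n).ne'
  rw [← hden] at hdet'
  exact ⟨mul_right_cancel₀ hQ_ne (by linarith), mod_cast hden⟩

theorem den_unique (h : IsBackwardExpansion P Q ζ) (h' : IsBackwardExpansion P' Q' ζ)
    (hP : P 0 = P' 0) (hQ : Q 0 = Q' 0) : Q = Q' := by
  have hagree : ∀ n, P n = P' n ∧ Q n = Q' n := fun n => by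
    induction n with
    | zero => exact ⟨hP, hQ⟩
    | succ n ih => exact h.succ_unique h' ih.1 ih.2
  exact funext fun n => (hagree n).2

theorem mem_Ioo (h : IsBackwardExpansion P Q ζ) (n : ℕ) :
    ζ ∈ Ioo (P n / Q n : ℝ) ((P (n + 1) - P n) / (Q (n + 1) - Q n)) := by
  have hpos : (0 : ℝ) < Q n := mod_cast h.den_pos n
  have hgap : (0 : ℝ) < Q (n + 1) - Q n :=
    sub_pos.mpr (mod_cast h.den_strictMono n.lt_succ_self)
  rw [Set.mem_Ioo, div_lt_iff₀ hpos, lt_div_iff₀ hgap]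
  constructor <;> linarith [h.rem_pos n, h.rem_succ_lt n]

/-- Legendre's criterion. Take `n` with `Q n < 4 * q ≤ Q (n + 1)`. If `p / q ≠ P n / Q n`, then
`1 ≤ q * |Q n * ζ - P n| + Q n * |q * ζ - p|`, and the first summand is below `1 / 2`. -/
theorem exists_eq_of_mul_abs_lt (h : IsBackwardExpansion P Q ζ) {p : ℤ} {q : ℕ}
    (hq : Q 0 < 4 * q) (hcop : IsCoprime p q) (hlt : q * |q * ζ - p| < 1 / 8) :
    ∃ n, P n = p ∧ Q n = q := by
  obtain ⟨n, hn, hn'⟩ :=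
    h.den_strictMono.exists_between_of_tendsto_atTop h.den_strictMono.tendsto_atTop hq
  have hq_pos : 0 < q := by omega
  have hcross : p * Q n = P n * q := by
    by_contra hne
    have hsum := one_le_mul_abs_add_mul_abs_s2 hne ζ
    simp only [Int.cast_natCast, Nat.abs_cast, abs_of_pos (h.rem_pos n)] at hsum
    have hrem : 4 * q * (Q n * ζ - P n) ≤ Q (n + 1) * (Q n * ζ - P n) :=
      mul_le_mul_of_nonneg_right (mod_cast hn') (h.rem_pos n).le
    have herr : Q n * |q * ζ - p| ≤ 4 * q * |q * ζ - p| :=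
      mul_le_mul_of_nonneg_right (mod_cast hn.le) (abs_nonneg _)
    linarith [h.den_succ_mul_rem_lt_two n]
  have hQ : (0 : ℤ) < Q n := mod_cast h.den_pos n
  obtain ⟨hp, hden⟩ := Rat.div_int_inj hQ (mod_cast hq_pos)
    (Int.isCoprime_iff_nat_coprime.mp (h.isCoprime n)) (Int.isCoprime_iff_nat_coprime.mp hcop)
    ((div_eq_div_iff (mod_cast hQ.ne') (mod_cast hq_pos.ne')).mpr (mod_cast hcross.symm))
  exact ⟨n, hp, mod_cast hden⟩

theorem irrational (h : IsBackwardExpansion P Q ζ) : Irrational ζ := by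
  rintro ⟨r, rfl⟩
  have hnum : (r * r.den : ℝ) = r.num := mod_cast r.mul_den_eq_num
  have hden : (0 : ℝ) < r.den := mod_cast r.den_pos
  have hint : r.den * (Q r.den * (r : ℝ) - P r.den) =
      ((Q r.den * r.num - P r.den * r.den : ℤ) : ℝ) := by
    push_cast
    linear_combination (Q r.den : ℝ) * hnum
  have hone : 1 ≤ r.den * (Q r.den * (r : ℝ) - P r.den) := by
    have hrem := mul_pos hden (h.rem_pos r.den)
    rw [hint] at hrem ⊢
    exact_mod_cast hrem
  have hlarge : 2 * r.den ≤ Q (r.den + 1) :=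
    (Nat.mul_le_mul_left 2 h.den_strictMono.le_apply).trans (h.two_mul_den_le _)
  have hle : 2 * r.den * (Q r.den * (r : ℝ) - P r.den) ≤
      Q (r.den + 1) * (Q r.den * (r : ℝ) - P r.den) :=
    mul_le_mul_of_nonneg_right (mod_cast hlarge) (h.rem_pos r.den).le
  linarith [h.den_succ_mul_rem_lt_two r.den]

theorem mem_K1star_of_frequently (h : IsBackwardExpansion P Q ζ) {Φ : ℕ → ℝ}
    (hfreq : ∃ᶠ n in atTop, Q n * ζ - P n ≤ Φ (Q n)) : ζ ∈ K1star Φ := by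
  refine mem_K1star_iff_frequently.mpr ⟨h.irrational, ?_⟩
  refine h.den_strictMono.tendsto_atTop.frequently (hfreq.mono fun n hle => ?_)
  exact ⟨h.den_pos n, P n, h.isCoprime n, by rwa [abs_of_pos (h.rem_pos n)]⟩

theorem frequently_rem_le_of_mem_K1star (h : IsBackwardExpansion P Q ζ) {Φ : ℕ → ℝ}
    (hΦ : ∀ᶠ q : ℕ in atTop, q * Φ q < 1 / 8) (hζ : ζ ∈ K1star Φ) :
    ∃ᶠ n in atTop, Q n * ζ - P n ≤ Φ (Q n) := by
  refine frequently_atTop.mpr fun N => ?_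
  obtain ⟨q, ⟨hq, p, hcop, hle⟩, hsmall, hlarge⟩ :=
    ((mem_K1star_iff_frequently.mp hζ).2.and_eventually
      (hΦ.and (eventually_ge_atTop (Q N)))).exists
  have hzero : Q 0 ≤ Q N := h.den_strictMono.monotone N.zero_le
  obtain ⟨n, rfl, rfl⟩ := h.exists_eq_of_mul_abs_lt (by omega) hcop
    ((mul_le_mul_of_nonneg_left hle q.cast_nonneg).trans_lt hsmall)
  exact ⟨n, h.den_strictMono.le_iff_le.mp hlarge, (le_abs_self _).trans hle⟩

theorem mem_K1star_of_isAdapted (h : IsBackwardExpansion P Q ζ) {Ψ : ℕ → ℝ}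
    (hQ : IsAdapted Ψ Q) : ζ ∈ K1star Ψ := by
  refine h.mem_K1star_of_frequently (Eventually.frequently ?_)
  filter_upwards [eventually_ge_atTop 1] with m hm
  obtain ⟨n, rfl⟩ := Nat.exists_eq_add_of_le' hm
  have hgap : (0 : ℝ) < Q (n + 2) - Q (n + 1) :=
    sub_pos.mpr (mod_cast h.den_strictMono (Nat.lt_succ_self _))
  refine (lt_of_mul_lt_mul_left ?_ hgap.le).le
  linarith [h.den_sub_den_mul_rem_lt_one (n + 1), (hQ n).1]

theorem notMem_K1star_of_isAdapted (h : IsBackwardExpansion P Q ζ) {Ψ : ℕ → ℝ}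
    (hsmall : Tendsto (fun q : ℕ => (q : ℝ) * Ψ q) atTop (nhds 0)) (hQ : IsAdapted Ψ Q)
    {c : ℝ} (hc : c ∈ Ioo (0 : ℝ) 1) : ζ ∉ K1star fun q => c * Ψ q := by
  obtain ⟨hc₀, hc₁⟩ := hc
  have hcsmall : Tendsto (fun q : ℕ => q * (c * Ψ q)) atTop (nhds 0) := by
    simpa only [mul_zero, mul_left_comm] using hsmall.const_mul c
  refine mt (h.frequently_rem_le_of_mem_K1star (hcsmall.eventually_lt_const (by norm_num)))
    (not_frequently.mpr ?_)
  have hlim : Tendsto (fun n => c * (1 + 5 * (Q n * Ψ (Q n)))) atTop (nhds c) := by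
    simpa only [Function.comp_apply, mul_zero, add_zero, mul_one] using
      (((hsmall.comp h.den_strictMono.tendsto_atTop).const_mul 5).const_add 1).const_mul c
  filter_upwards [hlim.eventually_lt_const hc₁, eventually_ge_atTop 1] with m hlt hm
  obtain ⟨n, rfl⟩ := Nat.exists_eq_add_of_le' hm
  refine not_le.mpr (lt_of_mul_lt_mul_left ?_ (Nat.cast_nonneg (Q (n + 2))))
  calc Q (n + 2) * (c * Ψ (Q (n + 1))) = c * (Q (n + 2) * Ψ (Q (n + 1))) := by ring
    _ ≤ c * (1 + 5 * (Q (n + 1) * Ψ (Q (n + 1)))) := mul_le_mul_of_nonneg_left (hQ n).2 hc₀.le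
    _ < 1 := hlt
    _ < Q (n + 2) * (Q (n + 1) * ζ - P (n + 1)) := h.one_lt_den_succ_mul_rem (n + 1)

end IsBackwardExpansion

/-- The convergents (numerator, denominator) of the backward continued fraction starting with
`x₀`, `x₁`, whose `n`-th partial quotient `A n q` may depend on the current denominator `q`.
The subtraction of denominators does not truncate when they increase and `A` is positive. -/
def backwardConvergent (A : ℕ → ℕ → ℕ) (x₀ x₁ : ℤ × ℕ) : ℕ → ℤ × ℕ
  | 0 => x₀
  | 1 => x₁
  | n + 2 =>
    let x := backwardConvergent A x₀ x₁ n
    let y := backwardConvergent A x₀ x₁ (n + 1)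
    (A n y.2 * y.1 - x.1, A n y.2 * y.2 - x.2)

/-- The denominators `Q` satisfy the recurrence of a backward continued fraction whose `n`-th
partial quotient is `A n (Q (n + 1))`, written without subtraction. -/
def HasQuotients (A : ℕ → ℕ → ℕ) (Q : ℕ → ℕ) : Prop :=
  ∀ n, Q (n + 2) + Q n = A n (Q (n + 1)) * Q (n + 1)

section Construction

variable {A : ℕ → ℕ → ℕ} {x₀ x₁ : ℤ × ℕ} (hA : ∀ n q, 3 ≤ A n q)
  (hpos : 0 < x₀.2) (hgrowth : 2 * x₀.2 ≤ x₁.2)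
include hA hgrowth

theorem two_mul_backwardConvergent_den_le (n : ℕ) :
    2 * (backwardConvergent A x₀ x₁ n).2 ≤ (backwardConvergent A x₀ x₁ (n + 1)).2 := by
  induction n with
  | zero => exact hgrowth
  | succ n ih =>
    rw [backwardConvergent]
    have hmul := Nat.mul_le_mul_right (backwardConvergent A x₀ x₁ (n + 1)).2
      (hA n (backwardConvergent A x₀ x₁ (n + 1)).2)
    omega

theorem hasQuotients_backwardConvergent :
    HasQuotients A fun n => (backwardConvergent A x₀ x₁ n).2 := fun n => by
  have hle := two_mul_backwardConvergent_den_le hA hgrowth n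
  have hmul := Nat.mul_le_mul_right (backwardConvergent A x₀ x₁ (n + 1)).2
    (hA n (backwardConvergent A x₀ x₁ (n + 1)).2)
  simp only [backwardConvergent]
  omega

include hpos

theorem isBackwardChain_backwardConvergent (hdet : x₁.1 * x₀.2 - x₀.1 * x₁.2 = 1) :
    IsBackwardChain (fun n => (backwardConvergent A x₀ x₁ n).1)
      (fun n => (backwardConvergent A x₀ x₁ n).2) where
  den_pos n := by
    induction n with
    | zero => exact hpos
    | succ n ih => linarith [two_mul_backwardConvergent_den_le hA hgrowth n]
  two_mul_den_le := two_mul_backwardConvergent_den_le hA hgrowth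
  det n := by
    induction n with
    | zero => exact hdet
    | succ n ih =>
      set x := backwardConvergent A x₀ x₁ with hx
      have hnum : (x (n + 2)).1 = A n (x (n + 1)).2 * (x (n + 1)).1 - (x n).1 := by
        rw [hx, backwardConvergent]
      have hden : ((x (n + 2)).2 + (x n).2 : ℤ) = A n (x (n + 1)).2 * (x (n + 1)).2 :=
        mod_cast hasQuotients_backwardConvergent hA hgrowth n
      linear_combination ih + ((x (n + 1)).2 : ℤ) * hnum - (x (n + 1)).1 * hden

end Construction

/-- The partial quotients adapted to `Ψ`, with a free choice between two consecutive values at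
each step that records whether `n ∈ S`. -/
noncomputable def adaptedQuotient (Ψ : ℕ → ℝ) (S : Set ℕ) (n q : ℕ) : ℕ :=
  ⌈1 / (q * Ψ q)⌉₊ + 3 + S.indicator 1 n

section AdaptedQuotient

variable {Ψ : ℕ → ℝ} {S S' : Set ℕ}

theorem three_le_adaptedQuotient (n q : ℕ) : 3 ≤ adaptedQuotient Ψ S n q := by
  rw [adaptedQuotient]
  omega

theorem eq_of_adaptedQuotient_eq {q : ℕ → ℕ}
    (h : ∀ n, adaptedQuotient Ψ S n (q n) = adaptedQuotient Ψ S' n (q n)) : S = S' :=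
  indicator_one_inj ℕ (funext fun n => Nat.add_left_cancel (h n))

theorem adaptedQuotient_mul_mem_Icc {q : ℕ} (hq : 0 < q * Ψ q) (n : ℕ) :
    adaptedQuotient Ψ S n q * (q * Ψ q) ∈ Icc (1 + 3 * (q * Ψ q)) (1 + 5 * (q * Ψ q)) := by
  have hceil := Nat.le_ceil (1 / (q * Ψ q))
  have hceil' := Nat.ceil_lt_add_one (one_div_pos.mpr hq).le
  have hchoice : ((S.indicator 1 n : ℕ) : ℝ) ≤ 1 := mod_cast indicator_le_self S (1 : ℕ → ℕ) n
  have hone : 1 / (q * Ψ q) * (q * Ψ q) = 1 := one_div_mul_cancel hq.ne'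
  rw [adaptedQuotient]
  push_cast
  constructor
  · calc 1 + 3 * (q * Ψ q) = (1 / (q * Ψ q) + 3 + 0) * (q * Ψ q) := by
          linear_combination -hone
      _ ≤ _ := by gcongr; positivity
  · calc _ ≤ (1 / (q * Ψ q) + 1 + 3 + 1) * (q * Ψ q) := by gcongr
      _ = 1 + 5 * (q * Ψ q) := by linear_combination hone

theorem IsBackwardChain.isAdapted {P : ℕ → ℤ} {Q : ℕ → ℕ} (h : IsBackwardChain P Q)
    (hpos : ∀ q, 0 < Ψ q) (hrec : HasQuotients (adaptedQuotient Ψ S) Q) :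
    IsAdapted Ψ Q := fun n => by
  have hQ : (0 : ℝ) < Q (n + 1) := mod_cast h.den_pos (n + 1)
  have hgrowth : (2 * Q n : ℝ) ≤ Q (n + 1) := mod_cast h.two_mul_den_le n
  have hrec' : (Q (n + 2) + Q n : ℝ) = adaptedQuotient Ψ S n (Q (n + 1)) * Q (n + 1) :=
    mod_cast hrec n
  have hsplit : Q (n + 2) * Ψ (Q (n + 1)) = adaptedQuotient Ψ S n (Q (n + 1)) *
      (Q (n + 1) * Ψ (Q (n + 1))) - Q n * Ψ (Q (n + 1)) := by
    linear_combination Ψ (Q (n + 1)) * hrec'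
  have hlast : 0 ≤ Q n * Ψ (Q (n + 1)) := by have := hpos (Q (n + 1)); positivity
  have hlast' := mul_le_mul_of_nonneg_right hgrowth (hpos (Q (n + 1))).le
  obtain ⟨hlo, hhi⟩ := adaptedQuotient_mul_mem_Icc (S := S) (mul_pos hQ (hpos (Q (n + 1)))) n
  rw [hsplit]
  constructor <;> linarith

theorem exists_adapted_expansion (hpos : ∀ q, 0 < Ψ q) {x₀ x₁ : ℤ × ℕ} (hx₀ : 0 < x₀.2)
    (hgrowth : 2 * x₀.2 ≤ x₁.2) (hdet : x₁.1 * x₀.2 - x₀.1 * x₁.2 = 1) (S : Set ℕ) :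
    ∃ (P : ℕ → ℤ) (Q : ℕ → ℕ) (ζ : ℝ), IsBackwardExpansion P Q ζ ∧ IsAdapted Ψ Q ∧
      HasQuotients (adaptedQuotient Ψ S) Q ∧ (P 0, Q 0) = x₀ ∧ (P 1, Q 1) = x₁ := by
  have hA := three_le_adaptedQuotient (Ψ := Ψ) (S := S)
  have hchain := isBackwardChain_backwardConvergent hA hx₀ hgrowth hdet
  have hrec := hasQuotients_backwardConvergent hA hgrowth
  obtain ⟨ζ, hζ⟩ := hchain.exists_isBackwardExpansion
  exact ⟨_, _, ζ, hζ, hchain.isAdapted hpos hrec, hrec, rfl, rfl⟩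

theorem IsBackwardExpansion.choice_unique {P P' : ℕ → ℤ} {Q Q' : ℕ → ℕ} {ζ : ℝ}
    (h : IsBackwardExpansion P Q ζ) (h' : IsBackwardExpansion P' Q' ζ)
    (hzero : (P 0, Q 0) = (P' 0, Q' 0)) (hrec : HasQuotients (adaptedQuotient Ψ S) Q)
    (hrec' : HasQuotients (adaptedQuotient Ψ S') Q') : S = S' := by
  obtain rfl := h.den_unique h' (congrArg Prod.fst hzero) (congrArg Prod.snd hzero)
  refine eq_of_adaptedQuotient_eq (Ψ := Ψ) (q := fun n => Q (n + 1)) fun n => ?_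
  exact Nat.eq_of_mul_eq_mul_right (h.den_pos (n + 1)) ((hrec n).symm.trans (hrec' n))

end AdaptedQuotient

theorem exists_initial_convergents {a b : ℝ} (hab : a < b) : ∃ x₀ x₁ : ℤ × ℕ,
    0 < x₀.2 ∧ 2 * x₀.2 ≤ x₁.2 ∧ x₁.1 * x₀.2 - x₀.1 * x₁.2 = 1 ∧
      a < x₀.1 / x₀.2 ∧ ((x₁.1 - x₀.1) / (x₁.2 - x₀.2) : ℝ) < b := by
  obtain ⟨r, har, hrb⟩ := exists_rat_btwn hab
  obtain ⟨N, hN⟩ := exists_nat_one_div_lt (sub_pos.mpr hrb)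
  obtain ⟨p, q, hq, hdet⟩ :=
    exists_det_eq_one_of_isCoprime r.isCoprime_num_den r.den_pos (2 * r.den + N)
  refine ⟨(r.num, r.den), (p, q), r.den_pos, by omega, hdet, ?_, ?_⟩
  · rwa [← Rat.cast_def]
  · have hden : (1 : ℝ) ≤ r.den := mod_cast r.den_pos
    have hgap : (N + 1 : ℝ) ≤ q - r.den := by
      have : (2 * r.den + N : ℝ) ≤ q := mod_cast hq
      linarith
    have hgap_pos : (0 : ℝ) < q - r.den := by linarith [N.cast_nonneg (α := ℝ)]
    have hdet' : (p * r.den - r.num * q : ℝ) = 1 := mod_cast hdet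
    calc ((p - r.num) / (q - r.den) : ℝ) = r + 1 / (r.den * (q - r.den)) := by
          rw [Rat.cast_def]
          field_simp
          linear_combination hdet'
      _ ≤ r + 1 / (N + 1) := by
          gcongr
          nlinarith
      _ < b := by linarith

/-- If `Ψ` is positive and satisfies `Ψ(x) = o(1/x)`, then for every non-empty open
interval `(a, b)` the set `(𝒦₁*(Ψ) \ ⋃_{0<c<1} 𝒦₁*(cΨ)) ∩ (a, b)` is uncountable. -/
theorem jarnik_one_dimensional_coprime (Ψ : ℕ → ℝ) (hpos : ∀ q, 0 < Ψ q)
    (hsmall : Tendsto (fun q : ℕ => (q : ℝ) * Ψ q) atTop (nhds 0))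
    (a b : ℝ) (hab : a < b) :
    ¬ ((K1star Ψ \ ⋃ c ∈ Ioo (0 : ℝ) 1, K1star (fun x => c * Ψ x)) ∩ Ioo a b).Countable := by
  obtain ⟨x₀, x₁, hx₀, hgrowth, hdet, hax₀, hx₁b⟩ := exists_initial_convergents hab
  choose P Q f hf hQ hrec h₀ h₁ using exists_adapted_expansion hpos hx₀ hgrowth hdet
  have hf_inj : Function.Injective f := fun S S' hS =>
    (hf S).choice_unique (hS ▸ hf S') ((h₀ S).trans (h₀ S').symm) (hrec S) (hrec S')
  have hf_mem : ∀ S, f S ∈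
      (K1star Ψ \ ⋃ c ∈ Ioo (0 : ℝ) 1, K1star (fun x => c * Ψ x)) ∩ Ioo a b := fun S => by
    refine ⟨⟨(hf S).mem_K1star_of_isAdapted (hQ S), ?_⟩, ?_⟩
    · simp only [mem_iUnion, not_exists]
      exact fun c hc => (hf S).notMem_K1star_of_isAdapted hsmall (hQ S) hc
    · simp only [← h₀ S, ← h₁ S] at hax₀ hx₁b
      exact Ioo_subset_Ioo hax₀.le hx₁b.le ((hf S).mem_Ioo 0)
  intro hcount
  have := hcount.to_subtype
  have : Countable (Set ℕ) := (hf_inj.codRestrict hf_mem).countable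
  obtain ⟨g, hg⟩ := exists_injective_nat (Set ℕ)
  exact Function.cantor_injective g hg
end

section
/- Let b ≥ 2 be an integer, J(b) ⊆ {0,1,…,b−1} with at least two elements, and let Ψ : ℕ → (0,∞) satisfy Ψ(x) = o(1/x) as x → ∞ and be non-increasing. Then for every constant c with 0 < c < 1/b, the set (𝒦₁(Ψ) \ 𝒦₁(cΨ)) ∩ K_{J(b)} is uncountable. -/
open Filter Set

/-- `baseExpSet b J` is the set of numbers in `[0,1]` admitting a base-`b` expansion all
of whose digits lie in `J`. -/
def baseExpSet (b : ℕ) (J : Set ℕ) : Set ℝ :=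
  {x : ℝ | x ∈ Icc (0 : ℝ) 1 ∧ ∃ d : ℕ → ℕ, (∀ n, d n ∈ J) ∧
    x = ∑' n : ℕ, (d n : ℝ) / (b : ℝ) ^ (n + 1)}

/-!
For digits `u` and `u + t` in `J`, the map `digitMap b u t` sends the expansions with digits `0` and
`1` into `baseExpSet b J`, so one constructs such expansions `ξ` and controls the approximations of
their images. Truncated expansions are extended by foldings, `w ↦ w + 1 / b ^ (2 * n + e)` with `n`
the length of `w`: as in the folding lemma for continued fractions, a fraction that approximates the
folding too well also approximates `w` too well, so foldings remain badly approximable, and their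
convergents with denominator about `b ^ n` have quality `b ^ (-e)`.

To hit the gap between `c * Ψ` and `Ψ`, fold `w` first with gap `e` and forever after with gap
`g`, keeping `e + g` fixed. For small `e` the image of the limit avoids `Ψ`, for large `e` it does
not, and one step changes the distances that matter by a factor at most `b`. The first failing `e`
therefore still avoids `Ψ / b`, hence `c * Ψ` with a margin, which persists on a small
neighbourhood. Since lengths under foldings at most double, one first moves the length of `w` to a
scale where `q * Ψ q` is nearly maximal. Iterating with nested intervals, each of which also
leaves out one member of a given sequence, shows that no sequence exhausts the set.
-/

/-! ### Elementary inequalities -/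

lemma one_le_abs_cast {q : ℤ} (hq : q ≠ 0) : (1 : ℝ) ≤ |(q : ℝ)| := by
  exact_mod_cast Int.one_le_abs hq

lemma two_le_cast_base (b : ℕ) [b.AtLeastTwo] : (2 : ℝ) ≤ b := by
  exact_mod_cast Nat.AtLeastTwo.prop

lemma cast_base_pos (b : ℕ) [b.AtLeastTwo] : (0 : ℝ) < b := by
  linarith [two_le_cast_base b]

lemma one_le_base_pow (b n : ℕ) [b.AtLeastTwo] : (1 : ℝ) ≤ (b : ℝ) ^ n :=
  one_le_pow₀ (by linarith [two_le_cast_base b])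

lemma two_pow_le_base_pow (b : ℕ) [b.AtLeastTwo] {i n : ℕ} (h : i ≤ n) :
    (2 : ℝ) ^ i ≤ (b : ℝ) ^ n := by
  have hb := two_le_cast_base b
  exact (pow_le_pow_right₀ (by norm_num) h).trans (pow_le_pow_left₀ (by norm_num) hb n)

lemma one_div_base_pow_anti (b : ℕ) [b.AtLeastTwo] {i j : ℕ} (h : i ≤ j) :
    1 / (b : ℝ) ^ j ≤ 1 / (b : ℝ) ^ i :=
  one_div_pow_le_one_div_pow_of_le (by linarith [two_le_cast_base b]) h

lemma two_mul_one_div_pow_succ_le (b : ℕ) [b.AtLeastTwo] (i : ℕ) :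
    2 * (1 / (b : ℝ) ^ (i + 1)) ≤ 1 / (b : ℝ) ^ i := by
  have hb := two_le_cast_base b
  rw [pow_succ, mul_one_div, div_le_div_iff₀ (by positivity) (by positivity)]
  nlinarith [one_le_base_pow b i]

lemma exists_pow_mul_near (b : ℕ) [b.AtLeastTwo] {K : ℝ} {N : ℕ} (hK : 0 < K)
    (h : (b : ℝ) ^ N * K ≤ 1) : ∃ m ≥ N, (b : ℝ) ^ m * K ≤ 1 ∧ 1 < (b : ℝ) ^ (m + 1) * K := by
  have hb : (1 : ℝ) < b := by linarith [two_le_cast_base b]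
  rw [← le_div_iff₀ hK] at h
  obtain ⟨m, hm, hm'⟩ := exists_nat_pow_near ((one_le_base_pow b N).trans h) hb
  refine ⟨m, ?_, (le_div_iff₀ hK).1 hm, (div_lt_iff₀ hK).1 hm'⟩
  exact Nat.lt_succ_iff.1 ((pow_lt_pow_iff_right₀ hb).1 (h.trans_lt hm'))

section FoldingInequalities

variable {a d w β B ε : ℝ}

lemma folding_inequality_of_le (ha : 1 ≤ a) (hw : 1 ≤ w) (hB : 1 ≤ B) (hβ : 16 * B ≤ β)
    (hε : 0 < ε) (hε' : ε ≤ 1 / 16) (had : a ≤ d) (hβw : β * w ≤ a + d) (hd : d ≤ a + β * w)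
    (h : ε * (B + a / w + w / a) ≤ a * w) : ε * (β * B + a / d + d / a) ≤ a * d := by
  have ha₀ : 0 < a := by linarith
  have hw₀ : 0 < w := by linarith
  have hβ₀ : 0 < β := by linarith
  have ratio_le_one : a / d ≤ 1 := (div_le_one (ha₀.trans_le had)).2 had
  have ratio_le : d / a ≤ 1 + β * (w / a) := by
    rw [div_le_iff₀ ha₀]
    field_simp
    linarith
  have hreduce : ε * (β * B + a / d + d / a) ≤ ε * (β * B + 2 + β * (w / a)) :=
    mul_le_mul_of_nonneg_left (by linarith) hε.le
  refine hreduce.trans ?_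
  rcases le_or_gt (2 * (a * w)) (ε * β) with hlarge | hsmall
  · have hscaled : β * (ε * (B + a / w + w / a)) ≤ β * (a * w) := by gcongr
    have hsq : 2 * a ^ 2 ≤ ε * β * (a / w) := by
      rw [← mul_div_assoc, le_div_iff₀ hw₀]
      nlinarith
    nlinarith [mul_le_mul_of_nonneg_left hβw ha₀.le]
  · have hB' : 8 * ε * B < a * w := by nlinarith
    have haw : 1 ≤ a * w := one_le_mul_of_one_le_of_one_le ha hw
    have hwa : w / a ≤ a * w := by
      rw [div_le_iff₀ ha₀]
      nlinarith [mul_pos ha₀ hw₀]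
    have hβB : β * (8 * ε * B) ≤ β * (a * w) := by gcongr
    have hε_term : ε * (β * (w / a)) ≤ 1 / 16 * (β * (a * w)) := by gcongr
    nlinarith

lemma folding_inequality (ha : 1 ≤ a) (hd : 1 ≤ d) (hw : 1 ≤ w) (hB : 1 ≤ B) (hβ : 16 * B ≤ β)
    (hε : 0 < ε) (hε' : ε ≤ 1 / 16) (hβw : β * w ≤ a + d) (hda : d ≤ a + β * w)
    (had : a ≤ d + β * w) (h₁ : ε * (B + a / w + w / a) ≤ a * w)
    (h₂ : ε * (B + d / w + w / d) ≤ d * w) : ε * (β * B + a / d + d / a) ≤ a * d := by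
  rcases le_total a d with h | h
  · exact folding_inequality_of_le ha hw hB hβ hε hε' h hβw hda h₁
  · rw [add_right_comm, mul_comm a d]
    exact folding_inequality_of_le hd hw hB hβ hε hε' h (by linarith) had h₂

lemma crude_folding_inequality {τ X : ℝ} (ha : 0 ≤ a) (hd : 0 ≤ d) (hβ : 0 ≤ β) (hτ : 1 ≤ τ)
    (hβw : β * w ≤ τ * a + d) (h₁ : X ≤ a * w) (h₂ : X ≤ τ * d * w) :
    β * X ≤ 2 * τ ^ 2 * (a * d) := by
  rcases le_total (τ * a) d with h | h
  · calc β * X ≤ β * (a * w) := by gcongr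
      _ = a * (β * w) := by ring
      _ ≤ a * (d + d) := by gcongr; linarith
      _ = 2 * 1 ^ 2 * (a * d) := by ring
      _ ≤ 2 * τ ^ 2 * (a * d) := by gcongr
  · calc β * X ≤ β * (τ * d * w) := by gcongr
      _ = τ * d * (β * w) := by ring
      _ ≤ τ * d * (τ * a + τ * a) := by gcongr; linarith
      _ = 2 * τ ^ 2 * (a * d) := by ring

end FoldingInequalities

lemma exists_two_pow_mul_pow_between {α l H : ℝ} {p : ℕ} (hα : 0 < α) (hαp : α < 2 ^ p)
    (hl : 0 < l) (hlH : l * 2 ^ p ≤ H * α) :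
    ∃ Y : ℕ, ∀ J₀ : ℕ, ∃ D₀ : ℝ, ∀ D ≥ D₀, ∃ J ≥ J₀, ∃ y ≤ Y,
      l * (2 ^ J * α ^ y) ≤ D ∧ D ≤ H * (2 ^ J * α ^ y) := by
  have hH : 0 < H := pos_of_mul_pos_left (lt_of_lt_of_le (by positivity) hlH) hα.le
  have hρ : 1 < 2 ^ p / α := (one_lt_div hα).2 hαp
  obtain ⟨Y, hY⟩ := pow_unbounded_of_one_lt 2 hρ
  refine ⟨Y, fun J₀ ↦ ⟨H * 2 ^ (J₀ + p * Y), fun D hD ↦ ?_⟩⟩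
  have hD₀ : 0 < D := lt_of_lt_of_le (by positivity) hD
  have hpow : (1 : ℝ) ≤ 2 ^ (J₀ + p * Y) := one_le_pow₀ one_le_two
  obtain ⟨K, hK, hDK⟩ := exists_nat_pow_near (x := 2 * D / H) (y := 2)
    (by rw [le_div_iff₀ hH]; nlinarith) one_lt_two
  rw [le_div_iff₀ hH] at hK
  rw [div_lt_iff₀ hH, pow_succ] at hDK
  obtain ⟨y, hy, hy'⟩ := exists_nat_pow_near (x := H * 2 ^ K / D) (y := 2 ^ p / α)
    (by rw [le_div_iff₀ hD₀]; linarith) hρ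
  have hyY : y ≤ Y := by
    by_contra! hYy
    have hle : (2 ^ p / α) ^ Y ≤ (2 ^ p / α) ^ y := pow_le_pow_right₀ hρ.le hYy.le
    have hle' : H * 2 ^ K / D ≤ 2 := (div_le_iff₀ hD₀).2 (by linarith)
    linarith
  have hJ₀K : J₀ + p * Y ≤ K := by
    have hlt : (2 : ℝ) ^ (J₀ + p * Y) < 2 ^ (K + 1) := by
      rw [pow_succ]
      exact lt_of_mul_lt_mul_left (by linarith) hH.le
    have := (pow_lt_pow_iff_right₀ one_lt_two).1 hlt
    omega
  have hpy : p * y ≤ p * Y := Nat.mul_le_mul_left p hyY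
  obtain ⟨J, rfl⟩ : ∃ J, K = J + p * y := ⟨K - p * y, by omega⟩
  have h2p : (0 : ℝ) < (2 ^ p) ^ y := by positivity
  rw [pow_add, pow_mul] at hy hy'
  refine ⟨J, by omega, y, hyY, ?_, ?_⟩
  · rw [div_pow, div_lt_div_iff₀ hD₀ (by positivity), pow_succ, pow_succ] at hy'
    have hlt : H * α * (2 ^ J * α ^ y) < 2 ^ p * D := lt_of_mul_lt_mul_left (by linarith) h2p.le
    have hle : l * 2 ^ p * (2 ^ J * α ^ y) ≤ H * α * (2 ^ J * α ^ y) := by gcongr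
    exact le_of_mul_le_mul_left (a := 2 ^ p) (by linarith) (by positivity)
  · rw [div_pow, div_le_div_iff₀ (by positivity) hD₀] at hy
    exact le_of_mul_le_mul_left (by linarith) h2p

lemma exists_iterate_mul_add_one_eq {α : ℕ} (hα : 2 ≤ α) (y : ℕ) :
    ∃ C < α ^ y, ∀ x, (fun x ↦ α * x + 1)^[y] x = α ^ y * x + C := by
  induction y with
  | zero => exact ⟨0, by simp, by simp⟩
  | succ y ih =>
    obtain ⟨C, hC, h⟩ := ih
    refine ⟨α * C + 1, ?_, fun x ↦ ?_⟩
    · calc α * C + 1 < α * (C + 1) := by rw [mul_add]; omega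
        _ ≤ α ^ (y + 1) := by rw [pow_succ']; exact Nat.mul_le_mul_left _ hC
    · rw [Function.iterate_succ_apply', h]; ring

/-- The constant `2 ^ (N + 3) - 2` is the factor by which `BAdic.IsBad.exists_stretch` multiplies
lengths. It is not a power of `2`, so combining it with doublings reaches all large lengths up to
`τ`. -/
lemma exists_iterate_near (N : ℕ) :
    ∃ Y τ : ℕ, ∀ J₀ : ℕ, ∃ D₀ : ℕ, ∀ D ≥ D₀, ∃ J ≥ J₀, ∃ ν, ∃ y ≤ Y, ν / 2 ^ J = N ∧
      (fun x ↦ (2 ^ (N + 3) - 2) * x + 1)^[y] ν ≤ D ∧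
      D ≤ (fun x ↦ (2 ^ (N + 3) - 2) * x + 1)^[y] ν + τ := by
  have hN_lt : N + 1 ≤ 2 ^ N := Nat.lt_two_pow_self
  have hp : 2 ^ (N + 3) = 8 * 2 ^ N := by ring
  set α := 2 ^ (N + 3) - 2 with hα
  have hα_real : (α : ℝ) = 2 ^ (N + 3) - 2 := by
    rw [hα, Nat.cast_sub (by omega)]; norm_num
  have hpow : (8 : ℝ) * (N + 1) ≤ 2 ^ (N + 3) := by
    rw [pow_add, mul_comm]
    norm_num
    exact_mod_cast hN_lt
  obtain ⟨Y, hY⟩ := exists_two_pow_mul_pow_between (α := α) (l := N + 1 / 4) (H := N + 3 / 4)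
    (p := N + 3) (by rw [hα_real]; linarith [N.cast_nonneg (α := ℝ)]) (by rw [hα_real]; linarith)
    (by positivity) (by rw [hα_real]; linarith)
  refine ⟨Y, α ^ Y, fun J₀ ↦ ?_⟩
  obtain ⟨D₀, hD₀⟩ := hY (J₀ + 2)
  refine ⟨⌈D₀⌉₊, fun D hD ↦ ?_⟩
  obtain ⟨J, hJ, y, hy, hlow, hupp⟩ := hD₀ D (Nat.ceil_le.1 hD)
  obtain ⟨C, hC, hiter⟩ := exists_iterate_mul_add_one_eq (α := α) (by omega) y
  have hαy : 0 < α ^ y := Nat.pow_pos (by omega)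
  have hJ4 : (4 : ℝ) ≤ 2 ^ J := by
    calc (4 : ℝ) = 2 ^ 2 := by norm_num
      _ ≤ 2 ^ J := pow_le_pow_right₀ one_le_two (by omega)
  have hαy_real : (0 : ℝ) < (α : ℝ) ^ y := by exact_mod_cast hαy
  have hC_real : (C : ℝ) < (α : ℝ) ^ y := by exact_mod_cast hC
  have hlow' : N * 2 ^ J * α ^ y + C ≤ D := by
    have : (N : ℝ) * 2 ^ J * α ^ y + C ≤ D := by nlinarith
    exact_mod_cast this
  have hupp' : D < (N + 1) * 2 ^ J * α ^ y := by
    have : (D : ℝ) < (N + 1) * 2 ^ J * α ^ y := by nlinarith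
    exact_mod_cast this
  refine ⟨J, by omega, (D - C) / α ^ y, y, hy, ?_, ?_, ?_⟩
  · rw [Nat.div_div_eq_div_mul, mul_comm (α ^ y), Nat.div_eq_of_lt_le]
    · rw [← mul_assoc]; omega
    · rw [← mul_assoc]; omega
  · have := Nat.mul_div_le (D - C) (α ^ y)
    rw [hiter]
    omega
  · have := Nat.lt_mul_div_succ (D - C) hαy
    have hY_le : α ^ y ≤ α ^ Y := Nat.pow_le_pow_right (by omega) hy
    rw [hiter]
    rw [mul_add] at this
    omega

/-! ### Approximation functions -/

/-- `AvoidsOn Φ I ζ` says that no fraction with denominator in `I` approximates `ζ` as closely as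
`Φ` asks for. -/
def AvoidsOn (Φ : ℕ → ℝ) (I : Set ℕ) (ζ : ℝ) : Prop := ∀ q ∈ I, ∀ p : ℤ, Φ q < |(q : ℝ) * ζ - p|

section AvoidsOn

variable {Φ Φ' : ℕ → ℝ} {I : Set ℕ} {ζ ζ' : ℝ}

lemma AvoidsOn.perturb (h : AvoidsOn Φ I ζ) (hζ : ∀ q ∈ I, |(q : ℝ) * ζ - q * ζ'| ≤ Φ q - Φ' q) :
    AvoidsOn Φ' I ζ' := fun q hq p ↦ by
  linarith [h q hq p, hζ q hq, abs_sub_le ((q : ℝ) * ζ) (q * ζ') p]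

lemma irrational_of_avoidsOn_Ici {N : ℕ} (hΦ : ∀ q, 0 ≤ Φ q) (h : AvoidsOn Φ (Ici N) ζ) :
    Irrational ζ := by
  rintro ⟨r, rfl⟩
  have hr : ((r.den * (N + 1) : ℕ) : ℝ) * r - ((r.num * (N + 1) : ℤ) : ℝ) = 0 := by
    have : (r.den : ℝ) * r = r.num := by exact_mod_cast Rat.den_mul_eq_num r
    push_cast
    rw [← this]
    ring
  have := h (r.den * (N + 1)) (by rw [mem_Ici]; nlinarith [r.den_pos]) (r.num * (N + 1))
  rw [hr, abs_zero] at this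
  exact (hΦ _).not_gt this

lemma mem_K1_iff : ζ ∈ K1 Φ ↔ Irrational ζ ∧ ∀ N, ¬ AvoidsOn Φ (Ici N) ζ := by
  refine and_congr_right fun _ ↦ ⟨fun hinf N h ↦ hinf ?_, fun h hfin ↦ ?_⟩
  · refine ((finite_Iio N).biUnion fun q _ ↦
      ((finite_Icc ⌈q * ζ - Φ q⌉ ⌊q * ζ + Φ q⌋).image (Prod.mk q))).subset ?_
    rintro ⟨q, p⟩ ⟨-, hqp⟩
    have hqN : q < N := by
      by_contra! hq
      exact hqp.not_gt (h q hq p)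
    rw [abs_le] at hqp
    refine mem_biUnion hqN ⟨p, ⟨Int.ceil_le.2 ?_, Int.le_floor.2 ?_⟩, rfl⟩ <;> linarith
  · obtain ⟨N, hN⟩ := (hfin.image Prod.fst).bddAbove
    refine h (N + 1) fun q hq p ↦ ?_
    by_contra! hqp
    have := hN ⟨(q, p), ⟨le_of_add_le_right hq, hqp⟩, rfl⟩
    exact (Nat.lt_of_succ_le hq).not_ge this

lemma AvoidsOn.eventually (h : AvoidsOn Φ I ζ) (hI : I.Finite) (hlt : ∀ q ∈ I, Φ' q < Φ q) :
    ∀ᶠ ζ' in nhds ζ, AvoidsOn Φ' I ζ' := by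
  have hnear : ∀ᶠ ζ' in nhds ζ, ∀ q ∈ I, |(q : ℝ) * ζ - q * ζ'| < Φ q - Φ' q := by
    refine (eventually_all_finite hI).2 fun q hq ↦ ?_
    have hcont : Tendsto (fun ζ' ↦ |(q : ℝ) * ζ - q * ζ'|) (nhds ζ) (nhds |(q : ℝ) * ζ - q * ζ|) :=
      Continuous.tendsto (by fun_prop) ζ
    exact hcont.eventually_lt_const (by simpa using hlt q hq)
  exact hnear.mono fun ζ' hζ' ↦ h.perturb fun q hq ↦ (hζ' q hq).le

lemma eventually_not_avoidsOn (h : ¬ AvoidsOn Φ I ζ) (hlt : ∀ q ∈ I, Φ q < Φ' q) :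
    ∀ᶠ ζ' in nhds ζ, ¬ AvoidsOn Φ' I ζ' := by
  simp only [AvoidsOn, not_forall, not_lt] at h ⊢
  obtain ⟨q, hq, p, hqp⟩ := h
  have hcont : Tendsto (fun ζ' ↦ |(q : ℝ) * ζ' - p|) (nhds ζ) (nhds |(q : ℝ) * ζ - p|) :=
    Continuous.tendsto (by fun_prop) ζ
  exact (hcont.eventually_lt_const (hqp.trans_lt (hlt q hq))).mono fun ζ' h ↦ ⟨q, hq, p, h.le⟩

lemma eventually_not_avoidsOn_Ico {N : ℕ} (h : ¬ AvoidsOn Φ (Ici N) ζ) :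
    ∀ᶠ M in atTop, ¬ AvoidsOn Φ (Ico N M) ζ := by
  simp only [AvoidsOn, not_forall] at h ⊢
  obtain ⟨q, hq, hqp⟩ := h
  exact (eventually_gt_atTop q).mono fun M hM ↦ ⟨q, ⟨hq, hM⟩, hqp⟩

lemma mem_K1_diff_of_strictMono {Ψ : ℕ → ℝ} {c : ℝ} {Y : ℕ → ℕ} (hΨ : ∀ q, 0 ≤ Ψ q) (hc : 0 ≤ c)
    (hY : StrictMono Y) (havoid : ∀ k, AvoidsOn (fun q ↦ c * Ψ q) (Ico (Y k) (Y (k + 1))) ζ)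
    (hmeet : ∀ k, ¬ AvoidsOn Ψ (Ico (Y k) (Y (k + 1))) ζ) :
    ζ ∈ K1 Ψ \ K1 (fun q ↦ c * Ψ q) := by
  have hcover : ⋃ k, Ico (Y k) (Y (k + 1)) = Ici (Y 0) :=
    iUnion_Ico_map_succ_eq_Ici (fun k ↦ hY.monotone k.zero_le)
      hY.not_bddAbove_range_of_wellFoundedLT
  have havoid' : AvoidsOn (fun q ↦ c * Ψ q) (Ici (Y 0)) ζ := fun q hq ↦ by
    obtain ⟨k, hk⟩ := mem_iUnion.1 (hcover.ge hq)
    exact havoid k q hk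
  have hirr := irrational_of_avoidsOn_Ici (fun q ↦ mul_nonneg hc (hΨ q)) havoid'
  exact ⟨mem_K1_iff.2 ⟨hirr, fun N h ↦ hmeet N fun q hq ↦ h q (hY.le_apply.trans hq.1)⟩,
    fun h ↦ (mem_K1_iff.1 h).2 _ havoid'⟩

end AvoidsOn

section Scale

variable {b : ℕ} [b.AtLeastTwo] {Φ : ℕ → ℝ}

lemma exists_forall_ge_le_of_tendsto_zero {f : ℕ → ℝ} (hf : ∀ n, 0 < f n)
    (hlim : Tendsto f atTop (nhds 0)) (D : ℕ) : ∃ d ≥ D, ∀ k ≥ d, f k ≤ f d := by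
  have hinv : Tendsto f⁻¹ cofinite atTop := by
    rw [Nat.cofinite_eq_atTop]
    exact (tendsto_nhdsWithin_iff.2 ⟨hlim, .of_forall hf⟩).inv_tendsto_nhdsGT_zero
  obtain ⟨d, hd, hmin⟩ := hinv.exists_within_forall_le (s := Ici D) nonempty_Ici
  exact ⟨d, hd, fun k hk ↦ (inv_le_inv₀ (hf d) (hf k)).1 (hmin k (le_trans hd hk))⟩

lemma mul_le_of_forall_pow_mul_le {s d q₀ q : ℕ} (hΦ : ∀ q, 0 ≤ Φ q) (hanti : Antitone Φ)
    (hd : ∀ k ≥ d, (b : ℝ) ^ k * Φ (b ^ k) ≤ (b : ℝ) ^ d * Φ (b ^ d))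
    (hlow : (b : ℝ) ^ d ≤ (b : ℝ) ^ s * q₀) (hupp : q₀ ≤ b ^ d) (hq : q₀ ≤ q) :
    q * Φ q ≤ (b : ℝ) ^ (s + 1) * (q₀ * Φ q₀) := by
  have hb := two_le_cast_base b
  have hb_nat : 1 < b := Nat.AtLeastTwo.prop
  have hmain : q * Φ q ≤ b * ((b : ℝ) ^ d * Φ q₀) := by
    rcases lt_or_ge q (b ^ d) with h | h
    · have hq' : (q : ℝ) ≤ (b : ℝ) ^ d := by exact_mod_cast h.le
      calc q * Φ q ≤ (b : ℝ) ^ d * Φ q₀ := mul_le_mul hq' (hanti hq) (hΦ _) (by positivity)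
        _ ≤ b * ((b : ℝ) ^ d * Φ q₀) :=
          le_mul_of_one_le_left (mul_nonneg (by positivity) (hΦ _)) (by linarith)
    · obtain ⟨k, hk, hk'⟩ := exists_nat_pow_near ((Nat.one_le_pow _ _ hb_nat.le).trans h) hb_nat
      have hdk : d ≤ k := Nat.lt_succ_iff.1 ((Nat.pow_lt_pow_iff_right hb_nat).1 (h.trans_lt hk'))
      have hq' : (q : ℝ) ≤ (b : ℝ) ^ (k + 1) := by exact_mod_cast hk'.le
      calc q * Φ q ≤ (b : ℝ) ^ (k + 1) * Φ (b ^ k) :=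
            mul_le_mul hq' (hanti hk) (hΦ _) (by positivity)
        _ = b * ((b : ℝ) ^ k * Φ (b ^ k)) := by ring
        _ ≤ b * ((b : ℝ) ^ d * Φ (b ^ d)) := mul_le_mul_of_nonneg_left (hd k hdk) (by positivity)
        _ ≤ b * ((b : ℝ) ^ d * Φ q₀) := by gcongr b * (_ * ?_); exact hanti hupp
  calc q * Φ q ≤ b * ((b : ℝ) ^ d * Φ q₀) := hmain
    _ ≤ b * ((b : ℝ) ^ s * q₀ * Φ q₀) := by gcongr; exact hΦ _
    _ = (b : ℝ) ^ (s + 1) * (q₀ * Φ q₀) := by ring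

lemma exists_scale (b : ℕ) [b.AtLeastTwo] (hΦ : ∀ q, 0 < Φ q) (hanti : Antitone Φ)
    (hlim : Tendsto (fun q : ℕ ↦ (q : ℝ) * Φ q) atTop (nhds 0)) (D : ℕ) :
    ∃ d ≥ D, ∀ s q₀ q : ℕ, (b : ℝ) ^ d ≤ (b : ℝ) ^ s * q₀ → q₀ ≤ b ^ d → q₀ ≤ q →
      q * Φ q ≤ (b : ℝ) ^ (s + 1) * (q₀ * Φ q₀) := by
  have hb := cast_base_pos b
  have hlim' : Tendsto (fun k ↦ (b : ℝ) ^ k * Φ (b ^ k)) atTop (nhds 0) := by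
    simpa [Function.comp_def] using
      hlim.comp (tendsto_pow_atTop_atTop_of_one_lt (Nat.AtLeastTwo.prop : 1 < b))
  obtain ⟨d, hd, hmax⟩ := exists_forall_ge_le_of_tendsto_zero
    (fun k ↦ mul_pos (by positivity) (hΦ _)) hlim' D
  exact ⟨d, hd, fun s q₀ q ↦ mul_le_of_forall_pow_mul_le (fun q ↦ (hΦ q).le) hanti hmax⟩

lemma eventually_forall_ge_mul_lt (hlim : Tendsto (fun q : ℕ ↦ (q : ℝ) * Φ q) atTop (nhds 0))
    (C : ℝ) {ε : ℝ} (hε : 0 < ε) : ∀ᶠ N in atTop, ∀ q ≥ N, C * (q * Φ q) < ε :=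
  eventually_forall_ge_atTop.2 ((hlim.const_mul C).eventually_lt_const (by simpa using hε))

end Scale

/-! ### Digits -/

/-- The affine map which replaces the digits `d n` of a base-`b` expansion by `u + t * d n`. -/
noncomputable def digitMap (b u t : ℕ) (ξ : ℝ) : ℝ := u / (b - 1) + t * ξ

/-- The denominator of the approximations to `ξ` that arise from approximations to
`digitMap b u t ξ` with denominator `q`. -/
def pullDenom (b t q : ℕ) : ℤ := ((b : ℤ) - 1) * t * q

section DigitMap

variable {b u t q : ℕ} {y ε : ℝ}

lemma digitMap_sub (b u t : ℕ) (ξ ξ' : ℝ) :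
    digitMap b u t ξ - digitMap b u t ξ' = t * (ξ - ξ') := by
  rw [digitMap, digitMap]
  ring

lemma continuous_digitMap (b u t : ℕ) : Continuous (digitMap b u t) := by
  unfold digitMap
  fun_prop

lemma injective_digitMap (b u : ℕ) {t : ℕ} (ht : t ≠ 0) : Function.Injective (digitMap b u t) :=
  fun ξ ξ' h ↦ by simpa [digitMap, ht] using h

variable [b.AtLeastTwo]

lemma pullDenom_ne_zero (ht : t ≠ 0) (hq : q ≠ 0) : pullDenom b t q ≠ 0 := by
  have : (2 : ℤ) ≤ b := by exact_mod_cast Nat.AtLeastTwo.prop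
  have hb : (b : ℤ) - 1 ≠ 0 := by omega
  simp [pullDenom, ht, hq, hb]

lemma abs_pullDenom_le (ht : t < b) : |(pullDenom b t q : ℝ)| ≤ (b : ℝ) ^ 2 * q := by
  have hb := two_le_cast_base b
  have ht' : (t : ℝ) ≤ b := by exact_mod_cast ht.le
  have hb' : (0 : ℝ) ≤ b - 1 := by linarith
  rw [pullDenom]
  push_cast
  rw [abs_of_nonneg (by positivity), sq]
  gcongr
  linarith

lemma pullDenom_mul_sub (u t q : ℕ) (ξ : ℝ) (p : ℤ) :
    (pullDenom b t q : ℝ) * ξ - (((b : ℤ) - 1) * p - u * q : ℤ)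
      = (b - 1) * (q * digitMap b u t ξ - p) := by
  have : (b : ℝ) - 1 ≠ 0 := by linarith [two_le_cast_base b]
  rw [pullDenom, digitMap]
  push_cast
  field_simp
  ring

lemma lt_abs_mul_digitMap_sub {ξ : ℝ} (ht : t < b) (hy : (b : ℝ) ^ 3 * (q * y) < ε)
    (h : ∀ P : ℤ, ε ≤ |(pullDenom b t q : ℝ)| * |(pullDenom b t q : ℝ) * ξ - P|) (p : ℤ) :
    y < |(q : ℝ) * digitMap b u t ξ - p| := by
  have hb := two_le_cast_base b
  have hpull : ε ≤ (b : ℝ) ^ 3 * (q * |(q : ℝ) * digitMap b u t ξ - p|) := by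
    calc ε ≤ _ := h (((b : ℤ) - 1) * p - u * q)
      _ = |(pullDenom b t q : ℝ)| * ((b - 1) * |(q : ℝ) * digitMap b u t ξ - p|) := by
        rw [pullDenom_mul_sub, abs_mul, abs_of_nonneg (by linarith : (0 : ℝ) ≤ b - 1)]
      _ ≤ (b : ℝ) ^ 2 * q * (b * |(q : ℝ) * digitMap b u t ξ - p|) := by
        have := mul_nonneg (by linarith : (0 : ℝ) ≤ b - 1)
          (abs_nonneg ((q : ℝ) * digitMap b u t ξ - p))
        gcongr
        · exact abs_pullDenom_le ht
        · linarith
      _ = _ := by ring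
  exact lt_of_mul_lt_mul_left
    (lt_of_mul_lt_mul_left (hy.trans_le hpull) (by positivity)) (Nat.cast_nonneg q)

end DigitMap

section BaseExpansion

variable {b : ℕ} {J : Set ℕ} {d : ℕ → ℕ} {x : ℝ}

lemma hasSum_tsum_div_pow (hd : ∀ n, d n < b) :
    HasSum (fun n ↦ (d n : ℝ) / (b : ℝ) ^ (n + 1)) (∑' n, (d n : ℝ) / (b : ℝ) ^ (n + 1)) := by
  have := Real.summable_ofDigitsTerm (digits := fun n ↦ (⟨d n, hd n⟩ : Fin b))
  exact (this.congr fun n ↦ by simp [Real.ofDigitsTerm, div_eq_mul_inv]).hasSum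

lemma baseExpSet_eq_image_ofDigits (hJ : ∀ j ∈ J, j < b) :
    baseExpSet b J = Real.ofDigits '' univ.pi fun _ ↦ {i : Fin b | (i : ℕ) ∈ J} := by
  refine Subset.antisymm ?_ ?_
  · rintro _ ⟨-, d, hd, rfl⟩
    exact ⟨fun n ↦ ⟨d n, hJ _ (hd n)⟩, fun n _ ↦ hd n, by
      simp [Real.ofDigits, Real.ofDigitsTerm, div_eq_mul_inv]⟩
  · rintro _ ⟨d, hd, rfl⟩
    exact ⟨⟨Real.ofDigits_nonneg d, Real.ofDigits_le_one d⟩, fun n ↦ d n, fun n ↦ hd n trivial, by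
      simp [Real.ofDigits, Real.ofDigitsTerm, div_eq_mul_inv]⟩

lemma isClosed_baseExpSet (hJ : ∀ j ∈ J, j < b) : IsClosed (baseExpSet b J) := by
  rw [baseExpSet_eq_image_ofDigits hJ]
  exact ((isCompact_univ_pi fun _ ↦ (toFinite _).isCompact).image
    Real.continuous_ofDigits).isClosed

lemma mem_baseExpSet_of_hasSum (hJ : ∀ j ∈ J, j < b) (hd : ∀ n, d n ∈ J)
    (hx : HasSum (fun n ↦ (d n : ℝ) / (b : ℝ) ^ (n + 1)) x) : x ∈ baseExpSet b J := by
  rw [baseExpSet_eq_image_ofDigits hJ]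
  refine ⟨fun n ↦ ⟨d n, hJ _ (hd n)⟩, fun n _ ↦ hd n, ?_⟩
  rw [← hx.tsum_eq]
  simp [Real.ofDigits, Real.ofDigitsTerm, div_eq_mul_inv]

variable [b.AtLeastTwo]

lemma hasSum_const_div_pow_succ (b : ℕ) [b.AtLeastTwo] (u : ℝ) :
    HasSum (fun n : ℕ ↦ u / (b : ℝ) ^ (n + 1)) (u / (b - 1)) := by
  have hb := two_le_cast_base b
  have hb₁ : (b : ℝ) - 1 ≠ 0 := by linarith
  convert! (hasSum_geometric_of_lt_one (inv_nonneg.2 (by linarith : (0 : ℝ) ≤ b))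
    (inv_lt_one_of_one_lt₀ (by linarith))).mul_left (u / b) using 1
  · funext n
    rw [inv_pow, pow_succ]
    field_simp
  · field_simp

lemma digitMap_mem_baseExpSet {u t : ℕ} {ξ : ℝ} (hJ : ∀ j ∈ J, j < b) (hu : u ∈ J) (hut : u + t ∈ J)
    (hξ : ξ ∈ baseExpSet b {0, 1}) : digitMap b u t ξ ∈ baseExpSet b J := by
  have hb : 2 ≤ b := Nat.AtLeastTwo.prop
  obtain ⟨-, d, hd, rfl⟩ := hξ
  have hd' : ∀ n, d n = 0 ∨ d n = 1 := hd
  refine mem_baseExpSet_of_hasSum (d := fun n ↦ u + t * d n) hJ (fun n ↦ ?_) ?_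
  · rcases hd' n with h | h <;> simpa [h]
  · have hsum := (hasSum_const_div_pow_succ b u).add
      ((hasSum_tsum_div_pow fun n ↦ (by have := hd' n; omega : d n < b)).mul_left (t : ℝ))
    convert! hsum using 1
    funext n
    push_cast
    ring

end BaseExpansion

/-! ### Truncated expansions -/

/-- A truncated base-`b` expansion, encoding the rational `num / b ^ exp`. The exponent records
the length of the expansion, so trailing zeros are significant. -/
structure BAdic (b : ℕ) where
  num : ℤ
  exp : ℕ

namespace BAdic

variable {b : ℕ}

/-- The rational number encoded by a truncated expansion. -/
noncomputable def val (w : BAdic b) : ℝ := w.num / (b : ℝ) ^ w.exp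

/-- The truncated expansion of `w.val + T / b ^ (w.exp + k)` of length `w.exp + k`. -/
def append (w : BAdic b) (k : ℕ) (T : ℤ) : BAdic b := ⟨w.num * (b : ℤ) ^ k + T, w.exp + k⟩

/-- The folding of `w` with gap `e`: the truncated expansion of
`w.val + 1 / b ^ (2 * w.exp + e)`. -/
def fold (w : BAdic b) (e : ℕ) : BAdic b := w.append (w.exp + e) 1

/-- `w.IsResidue q c` says that `q * w.val` is congruent to `c / b ^ w.exp` modulo `1`. -/
def IsResidue (w : BAdic b) (q c : ℤ) : Prop := (b : ℤ) ^ w.exp ∣ w.num * q - c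

/-- `w.val` is badly approximable with constant `ε`: since a residue `c` of `q` satisfies
`c / b ^ w.exp = q * w.val - p` for an integer `p`, this bounds `|q| * |q * w.val - p|` below by `ε`
whenever it does not vanish. -/
def IsBad (w : BAdic b) (ε : ℝ) : Prop :=
  ∀ q c : ℤ, q ≠ 0 → c ≠ 0 → w.IsResidue q c → ε * (b : ℝ) ^ w.exp ≤ |(q : ℝ)| * |(c : ℝ)|

/-- A strengthening of `IsBad`, asked only of the denominators `q` that are not multiples of `m`;
for `m = 0` there is no exception. Thanks to the two additional terms on the left, the constant `ε`
is not diminished by foldings. -/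
def IsStronglyBad (w : BAdic b) (m : ℤ) (ε : ℝ) : Prop :=
  ∀ q c : ℤ, ¬ m ∣ q → c ≠ 0 → w.IsResidue q c →
    ε * ((b : ℝ) ^ w.exp + |(q : ℝ)| / |(c : ℝ)| + |(c : ℝ)| / |(q : ℝ)|) ≤ |(q : ℝ)| * |(c : ℝ)|

variable {w w' : BAdic b} {q c m T : ℤ} {k e g n : ℕ} {ε ε' : ℝ}

lemma IsStronglyBad.mono (h : w.IsStronglyBad m ε) (hε : ε' ≤ ε) : w.IsStronglyBad m ε' :=
  fun q c hq hc hr ↦ (mul_le_mul_of_nonneg_right hε (by positivity)).trans (h q c hq hc hr)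

lemma IsStronglyBad.le_mul (h : w.IsStronglyBad m ε) (hε : 0 ≤ ε) (hq : ¬ m ∣ q) (hc : c ≠ 0)
    (hr : w.IsResidue q c) : ε * (b : ℝ) ^ w.exp ≤ |(q : ℝ)| * |(c : ℝ)| := by
  refine le_trans (mul_le_mul_of_nonneg_left ?_ hε) (h q c hq hc hr)
  rw [add_assoc]
  exact le_add_of_nonneg_right (by positivity)

lemma IsStronglyBad.isBad (h : w.IsStronglyBad 0 ε) (hε : 0 ≤ ε) : w.IsBad ε :=
  fun _ _ hq hc hr ↦ h.le_mul hε (by simpa using hq) hc hr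

lemma IsBad.isStronglyBad (h : w.IsBad ε) (hε : ε ≤ 1) : w.IsStronglyBad 0 (ε / 3) := by
  intro q c hq hc hr
  have hq : q ≠ 0 := by simpa using hq
  have hq₁ := one_le_abs_cast hq
  have hc₁ := one_le_abs_cast hc
  have div_le_mul {x y : ℝ} (hx : 1 ≤ x) (hy : 1 ≤ y) : ε * (x / y) ≤ x * y :=
    calc ε * (x / y) ≤ 1 * (x / 1) := by gcongr
      _ ≤ x * y := by nlinarith
  have := h q c hq hc hr
  linarith [div_le_mul hq₁ hc₁, div_le_mul hc₁ hq₁]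

lemma exists_isResidue_of_append (h : (w.append k T).IsResidue q c) :
    ∃ c₀ : ℤ, c = T * q + (b : ℤ) ^ k * c₀ ∧ w.IsResidue q c₀ := by
  obtain ⟨p, hp⟩ := h
  refine ⟨w.num * q - (b : ℤ) ^ w.exp * p, ?_, ⟨p, by ring⟩⟩
  simp only [append, pow_add] at hp
  linear_combination -hp

lemma IsResidue.swap {c₀ : ℤ} (hr : w.IsResidue q c₀) (hk : w.exp ≤ k)
    (hc : c = T * q + (b : ℤ) ^ k * c₀) : w.IsResidue c (T * c₀) := by
  have hsplit : w.num * c - T * c₀ = T * (w.num * q - c₀) + (b : ℤ) ^ k * (w.num * c₀) := by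
    rw [hc]; ring
  rw [IsResidue, hsplit]
  exact dvd_add (hr.mul_left _) ((pow_dvd_pow _ hk).mul_right _)

lemma isCoprime_append (hT : IsCoprime (b : ℤ) T) (hk : k ≠ 0) :
    IsCoprime (b : ℤ) (w.append k T).num := by
  obtain ⟨l, rfl⟩ := Nat.exists_eq_succ_of_ne_zero hk
  have hnum : (w.append (l + 1) T).num = T + b * (w.num * (b : ℤ) ^ l) := by
    simp only [append]; ring
  rw [hnum]
  exact hT.add_mul_left_right _

lemma IsResidue.pow_dvd (hw : IsCoprime (b : ℤ) w.num) (h : w.IsResidue q 0) :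
    (b : ℤ) ^ w.exp ∣ q :=
  hw.pow_left.dvd_of_dvd_mul_left (by simpa [IsResidue] using h)

lemma pow_le_abs_of_dvd (hq : q ≠ 0) (h : (b : ℤ) ^ n ∣ q) : (b : ℝ) ^ n ≤ |(q : ℝ)| := by
  exact_mod_cast Int.le_of_dvd (abs_pos.2 hq) ((dvd_abs _ _).2 h)

lemma IsResidue.swap_sub {s l : ℕ} {c₀ : ℤ} (hr : w.IsResidue q c₀) (hexp : w.exp = s + l)
    (hexp' : w'.exp = s + l) (hnum : w.num = w'.num + (b : ℤ) ^ s) (hl : l ≤ s)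
    (hw : (b : ℤ) ^ l ∣ w.num - 1) (hc : c = 1 * q + (b : ℤ) ^ s * c₀) : w'.IsResidue c c₀ := by
  have hmod : (b : ℤ) ^ l ∣ w.num * c₀ - q := by
    have hsplit : w.num * c₀ - q = (w.num - 1) * (c₀ + q) - (w.num * q - c₀) := by ring
    rw [hsplit]
    exact dvd_sub (hw.mul_right _) ((pow_dvd_pow _ (by omega)).trans hr)
  have hsplit : w'.num * c - c₀ =
      (w.num * q - c₀) + (b : ℤ) ^ s * ((w.num * c₀ - q) - (b : ℤ) ^ s * c₀) := by
    rw [hc, hnum]; ring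
  rw [IsResidue, hexp', hsplit]
  refine dvd_add (hexp ▸ hr) ?_
  rw [pow_add]
  exact mul_dvd_mul_left _ (dvd_sub hmod ((pow_dvd_pow _ hl).mul_right _))

/-- The interval of length `1 / b ^ (2 * w.exp)` starting at `w.val`; it contains the intervals of
all foldings of `w`. -/
def window (w : BAdic b) : Set ℝ := Icc w.val (w.val + 1 / (b : ℝ) ^ (2 * w.exp))

/-- The closure of the set of reals whose expansion starts with `w`. -/
def cylinder (w : BAdic b) : Set ℝ := Icc w.val (w.val + 1 / (b : ℝ) ^ w.exp)

lemma val_mem_window (w : BAdic b) : w.val ∈ w.window :=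
  ⟨le_rfl, le_add_of_nonneg_right (by positivity)⟩

/-- The `j`-fold iteration of folding with gap `g`. -/
def chain (w : BAdic b) (g j : ℕ) : BAdic b := (fun v : BAdic b ↦ v.fold g)^[j] w

lemma chain_zero (w : BAdic b) (g : ℕ) : w.chain g 0 = w := rfl

lemma chain_succ (w : BAdic b) (g j : ℕ) : w.chain g (j + 1) = (w.chain g j).fold g :=
  Function.iterate_succ_apply' _ _ _

lemma chain_exp (w : BAdic b) (g j : ℕ) : (w.chain g j).exp + g = 2 ^ j * (w.exp + g) := by
  induction j with
  | zero => simp [chain_zero]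
  | succ j ih =>
    rw [chain_succ, pow_succ]
    simp only [fold, append]
    linarith

lemma chain_exp_eq (h : w.exp = w'.exp) (g j : ℕ) : (w.chain g j).exp = (w'.chain g j).exp := by
  have hw := w.chain_exp g j
  have hw' := w'.chain_exp g j
  rw [h] at hw
  omega

lemma isCoprime_fold (w : BAdic b) (he : e ≠ 0) : IsCoprime (b : ℤ) (w.fold e).num :=
  isCoprime_append isCoprime_one_right (by omega)

lemma isCoprime_chain (hw : IsCoprime (b : ℤ) w.num) (hg : g ≠ 0) (j : ℕ) :
    IsCoprime (b : ℤ) (w.chain g j).num := by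
  cases j with
  | zero => exact hw
  | succ j => rw [chain_succ]; exact isCoprime_fold _ hg

/-- The truncated expansions with digits `0` and `1`, first and last digit `1`. -/
inductive IsBinary : BAdic b → Prop
  | one : IsBinary ⟨1, 1⟩
  | append {w : BAdic b} {k : ℕ} : w.IsBinary → k ≠ 0 → (w.append k 1).IsBinary

lemma IsBinary.exp_ne_zero (h : w.IsBinary) : w.exp ≠ 0 := by
  induction h with
  | one => exact one_ne_zero
  | append _ hk _ => exact (Nat.add_pos_right _ (Nat.pos_of_ne_zero hk)).ne'

lemma IsBinary.isCoprime (h : w.IsBinary) : IsCoprime (b : ℤ) w.num := by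
  cases h with
  | one => exact isCoprime_one_right
  | append _ hk => exact isCoprime_append isCoprime_one_right hk

lemma IsBinary.fold (h : w.IsBinary) (he : e ≠ 0) : (w.fold e).IsBinary :=
  h.append (by omega)

lemma IsBinary.chain (h : w.IsBinary) (hg : g ≠ 0) (j : ℕ) : (w.chain g j).IsBinary := by
  induction j with
  | zero => exact h
  | succ j ih => rw [chain_succ]; exact ih.fold hg

lemma pow_dvd_num_fold_sub_one (w : BAdic b) {l : ℕ} (hl : l ≤ w.exp + e) :
    (b : ℤ) ^ l ∣ (w.fold e).num - 1 := by
  simpa [BAdic.fold, BAdic.append] using (pow_dvd_pow (b : ℤ) hl).mul_left w.num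

/-- The approximation property that is passed from one stage of the construction to the next. The
bound `ε * b ^ 7 ≤ 1` allows foldings with the gaps `4` and `5` without loss in `ε`. -/
structure IsAdmissible (w : BAdic b) (ε : ℝ) : Prop where
  isBinary : w.IsBinary
  pos : 0 < ε
  mul_pow_le_one : ε * (b : ℝ) ^ 7 ≤ 1
  isStronglyBad : w.IsStronglyBad 0 ε

lemma IsAdmissible.mono (h : w.IsAdmissible ε) (hε' : 0 < ε') (hle : ε' ≤ ε) :
    w.IsAdmissible ε' where
  isBinary := h.isBinary
  pos := hε'
  mul_pow_le_one := (mul_le_mul_of_nonneg_right hle (by positivity)).trans h.mul_pow_le_one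
  isStronglyBad := h.isStronglyBad.mono hle

variable [b.AtLeastTwo]

/-! ### Foldings -/

lemma IsStronglyBad.fold_bound {c₀ : ℤ} (h : w.IsStronglyBad m ε) (hε : 0 < ε) (hε' : ε ≤ 1 / 16)
    (he : 4 ≤ e) (hq : ¬ m ∣ q) (hc : ¬ m ∣ c) (hc₀ : c₀ ≠ 0) (hr : w.IsResidue q c₀)
    (hqc : c = 1 * q + (b : ℤ) ^ (w.exp + e) * c₀) :
    ε * ((b : ℝ) ^ (w.fold e).exp + |(q : ℝ)| / |(c : ℝ)| + |(c : ℝ)| / |(q : ℝ)|)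
      ≤ |(q : ℝ)| * |(c : ℝ)| := by
  have ne_zero {x : ℤ} (hx : ¬ m ∣ x) : x ≠ 0 := fun h0 ↦ hx (h0 ▸ dvd_zero m)
  have hβ : (0 : ℝ) ≤ (b : ℝ) ^ (w.exp + e) := by positivity
  have hc_real : (c : ℝ) = q + (b : ℝ) ^ (w.exp + e) * c₀ := by rw [hqc]; push_cast; ring
  have hβw : (b : ℝ) ^ (w.exp + e) * |(c₀ : ℝ)| = |(c : ℝ) - q| := by
    rw [hc_real, add_sub_cancel_left, abs_mul, abs_of_nonneg hβ]
  have hgap : 16 * (b : ℝ) ^ w.exp ≤ (b : ℝ) ^ (w.exp + e) := by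
    rw [pow_add, mul_comm]
    gcongr
    simpa [show (2 : ℝ) ^ 4 = 16 by norm_num] using two_pow_le_base_pow b he
  have hr' : w.IsResidue c c₀ := by simpa using hr.swap (by omega) hqc
  have hexp : (b : ℝ) ^ (w.fold e).exp = (b : ℝ) ^ (w.exp + e) * (b : ℝ) ^ w.exp := by
    simp only [fold, append]; ring
  rw [hexp]
  refine folding_inequality (one_le_abs_cast (ne_zero hq)) (one_le_abs_cast (ne_zero hc))
    (one_le_abs_cast hc₀) (one_le_base_pow b _) hgap hε hε' ?_ ?_ ?_ (h q c₀ hq hc₀ hr)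
    (h c c₀ hc hc₀ hr') <;> rw [hβw]
  · linarith [abs_sub (c : ℝ) q]
  · linarith [abs_sub_abs_le_abs_sub (c : ℝ) q]
  · linarith [abs_sub_abs_le_abs_sub (q : ℝ) c, abs_sub_comm (c : ℝ) q]

lemma IsStronglyBad.fold_of_dvd (h : w.IsStronglyBad m ε) (hw : IsCoprime (b : ℤ) w.num)
    (hm : m ∣ (b : ℤ) ^ w.exp) (hε : 0 < ε) (hε' : ε ≤ 1 / 16) (he : 4 ≤ e) :
    (w.fold e).IsStronglyBad m ε := by
  intro q c hq _ hr
  obtain ⟨c₀, hqc, hr₀⟩ := exists_isResidue_of_append hr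
  have hc₀ : c₀ ≠ 0 := by
    rintro rfl
    exact hq (hm.trans (hr₀.pow_dvd hw))
  have hmβ : m ∣ (b : ℤ) ^ (w.exp + e) * c₀ := (hm.trans (pow_dvd_pow _ (by omega))).mul_right _
  have hc : ¬ m ∣ c := by rwa [hqc, one_mul, dvd_add_left hmβ]
  exact h.fold_bound hε hε' he hq hc hc₀ hr₀ hqc

lemma IsStronglyBad.fold (h : w.IsStronglyBad 0 ε) (hw : IsCoprime (b : ℤ) w.num)
    (hε : 0 < ε) (he : 4 ≤ e) (hεe : 4 * ε * (b : ℝ) ^ e ≤ 1) :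
    (w.fold e).IsStronglyBad 0 ε := by
  intro q c hq hc hr
  obtain ⟨c₀, hqc, hr₀⟩ := exists_isResidue_of_append hr
  have hpow : (16 : ℝ) ≤ (b : ℝ) ^ e :=
    le_trans (by norm_num) (two_pow_le_base_pow b he)
  have hε' : ε ≤ 1 / 16 := by nlinarith
  rcases eq_or_ne c₀ 0 with rfl | hc₀
  · obtain rfl : c = q := by simpa using hqc
    have hdvd := pow_le_abs_of_dvd hc (hr₀.pow_dvd hw)
    have hexp : (b : ℝ) ^ (w.fold e).exp = (b : ℝ) ^ e * ((b : ℝ) ^ w.exp) ^ 2 := by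
      simp only [BAdic.fold, append]; ring
    have hsq : ((b : ℝ) ^ w.exp) ^ 2 ≤ |(c : ℝ)| ^ 2 := by gcongr
    have hsq₁ : 1 ≤ |(c : ℝ)| ^ 2 := one_le_pow₀ (one_le_abs_cast hc)
    have hc' : |(c : ℝ)| ≠ 0 := by positivity
    rw [hexp, div_self hc']
    nlinarith [sq_nonneg ((b : ℝ) ^ w.exp)]
  · exact h.fold_bound hε hε' he hq (by simpa using hc) hc₀ hr₀ hqc

lemma IsBad.append (h : w.IsBad ε) (hw : IsCoprime (b : ℤ) w.num) (hT : T ≠ 0)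
    (hTb : |(T : ℝ)| ≤ b) (hεe : ε * (b : ℝ) ^ e ≤ 1) :
    (w.append (w.exp + e) T).IsBad (ε / (b : ℝ) ^ 3) := by
  intro q c hq hc hr
  obtain ⟨c₀, hqc, hr₀⟩ := exists_isResidue_of_append hr
  have hb := two_le_cast_base b
  have hT₁ := one_le_abs_cast hT
  have hexp : (b : ℝ) ^ (w.append (w.exp + e) T).exp
      = (b : ℝ) ^ (w.exp + e) * (b : ℝ) ^ w.exp := by
    simp only [BAdic.append]; ring
  rw [div_mul_eq_mul_div, div_le_iff₀ (by positivity), hexp]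
  rcases eq_or_ne c₀ 0 with rfl | hc₀
  · have hdvd := pow_le_abs_of_dvd hq (hr₀.pow_dvd hw)
    have hqc : |(c : ℝ)| = |(T : ℝ)| * |(q : ℝ)| := by simp [hqc, abs_mul]
    calc ε * ((b : ℝ) ^ (w.exp + e) * (b : ℝ) ^ w.exp)
        = ε * (b : ℝ) ^ e * ((b : ℝ) ^ w.exp * (b : ℝ) ^ w.exp) := by ring
      _ ≤ 1 * (|(q : ℝ)| * |(q : ℝ)|) := by gcongr
      _ ≤ |(T : ℝ)| * (|(q : ℝ)| * |(q : ℝ)|) := by gcongr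
      _ = |(q : ℝ)| * |(c : ℝ)| := by rw [hqc]; ring
      _ ≤ |(q : ℝ)| * |(c : ℝ)| * (b : ℝ) ^ 3 :=
        le_mul_of_one_le_right (by positivity) (one_le_base_pow b 3)
  · have hswap := h c (T * c₀) hc (mul_ne_zero hT hc₀) (hr₀.swap (by omega) hqc)
    have hβw : (b : ℝ) ^ (w.exp + e) * |(c₀ : ℝ)| ≤ |(T : ℝ)| * |(q : ℝ)| + |(c : ℝ)| := by
      have hc_real : (b : ℝ) ^ (w.exp + e) * c₀ = c - T * q := by rw [hqc]; push_cast; ring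
      calc (b : ℝ) ^ (w.exp + e) * |(c₀ : ℝ)| = |(c : ℝ) - T * q| := by
            rw [← hc_real, abs_mul, abs_pow, Nat.abs_cast]
        _ ≤ |(T : ℝ)| * |(q : ℝ)| + |(c : ℝ)| := by
            linarith [abs_sub (c : ℝ) (T * q), abs_mul (T : ℝ) q]
    calc ε * ((b : ℝ) ^ (w.exp + e) * (b : ℝ) ^ w.exp)
        = (b : ℝ) ^ (w.exp + e) * (ε * (b : ℝ) ^ w.exp) := by ring
      _ ≤ 2 * |(T : ℝ)| ^ 2 * (|(q : ℝ)| * |(c : ℝ)|) :=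
        crude_folding_inequality (abs_nonneg _) (abs_nonneg _) (by positivity) hT₁ hβw
          (h q c₀ hq hc₀ hr₀) (by push_cast [abs_mul] at hswap; linarith)
      _ ≤ b * (b : ℝ) ^ 2 * (|(q : ℝ)| * |(c : ℝ)|) := by gcongr
      _ = |(q : ℝ)| * |(c : ℝ)| * (b : ℝ) ^ 3 := by ring

/-- Folding by less than the length of `w`: the overlap of `l` digits is compensated by the
neighbour `w'` of `w`, which is the expansion that occurs when `q` and `c` are exchanged. -/
lemma IsBad.underfold {s l : ℕ} (h : w.IsBad ε) (h' : w'.IsBad ε) (hcop : IsCoprime (b : ℤ) w.num)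
    (hexp : w.exp = s + l) (hexp' : w'.exp = s + l) (hnum : w.num = w'.num + (b : ℤ) ^ s)
    (hl : l ≤ s) (hw : (b : ℤ) ^ l ∣ w.num - 1) (hε : ε ≤ 1) : (w.append s 1).IsBad (ε / b) := by
  intro q c hq hc hr
  obtain ⟨c₀, hqc, hr₀⟩ := exists_isResidue_of_append hr
  have hb := two_le_cast_base b
  have happend : (b : ℝ) ^ (w.append s 1).exp = (b : ℝ) ^ s * (b : ℝ) ^ w.exp := by
    simp only [BAdic.append]; ring
  rw [div_mul_eq_mul_div, div_le_iff₀ (by positivity), happend]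
  rcases eq_or_ne c₀ 0 with rfl | hc₀
  · obtain rfl : c = q := by simpa using hqc
    have hdvd := pow_le_abs_of_dvd hc (hr₀.pow_dvd hcop)
    have hs : (b : ℝ) ^ s ≤ (b : ℝ) ^ w.exp := pow_le_pow_right₀ (by linarith) (by omega)
    calc ε * ((b : ℝ) ^ s * (b : ℝ) ^ w.exp) ≤ 1 * ((b : ℝ) ^ w.exp * (b : ℝ) ^ w.exp) := by gcongr
      _ ≤ 1 * (|(c : ℝ)| * |(c : ℝ)|) := by gcongr
      _ ≤ |(c : ℝ)| * |(c : ℝ)| * b := by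
        rw [one_mul]; exact le_mul_of_one_le_right (by positivity) (by linarith)
  · have hβw : (b : ℝ) ^ s * |(c₀ : ℝ)| ≤ 1 * |(q : ℝ)| + |(c : ℝ)| := by
      have hc_real : (b : ℝ) ^ s * c₀ = c - q := by rw [hqc]; push_cast; ring
      calc (b : ℝ) ^ s * |(c₀ : ℝ)| = |(c : ℝ) - q| := by
            rw [← hc_real, abs_mul, abs_pow, Nat.abs_cast]
        _ ≤ 1 * |(q : ℝ)| + |(c : ℝ)| := by linarith [abs_sub (c : ℝ) q]
    have hswap := h' c c₀ hc hc₀ (hr₀.swap_sub hexp hexp' hnum hl hw hqc)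
    rw [hexp', ← hexp] at hswap
    calc ε * ((b : ℝ) ^ s * (b : ℝ) ^ w.exp) = (b : ℝ) ^ s * (ε * (b : ℝ) ^ w.exp) := by ring
      _ ≤ 2 * 1 ^ 2 * (|(q : ℝ)| * |(c : ℝ)|) :=
        crude_folding_inequality (abs_nonneg _) (abs_nonneg _) (by positivity) le_rfl hβw
          (h q c₀ hq hc₀ hr₀) (by linarith)
      _ = |(q : ℝ)| * |(c : ℝ)| * 2 := by ring
      _ ≤ |(q : ℝ)| * |(c : ℝ)| * b := by gcongr

lemma val_append (w : BAdic b) (k : ℕ) (T : ℤ) :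
    (w.append k T).val = w.val + T / (b : ℝ) ^ (w.exp + k) := by
  have hb := cast_base_pos b
  simp only [val, append]
  push_cast
  field_simp
  ring

lemma val_fold (w : BAdic b) (e : ℕ) : (w.fold e).val = w.val + 1 / (b : ℝ) ^ (2 * w.exp + e) := by
  rw [fold, val_append, Int.cast_one, two_mul, add_assoc]

lemma window_subset_cylinder (w : BAdic b) : w.window ⊆ w.cylinder :=
  Icc_subset_Icc_right (add_le_add_right (one_div_base_pow_anti b (by omega)) _)

lemma cylinder_append_one_subset (w : BAdic b) (k : ℕ) :
    (w.append k 1).cylinder ⊆ Icc w.val (w.val + 2 * (1 / (b : ℝ) ^ (w.exp + k))) := by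
  rw [cylinder, val_append, Int.cast_one]
  refine Icc_subset_Icc (le_add_of_nonneg_right (by positivity)) ?_
  simp only [append]
  linarith

lemma cylinder_append_subset_cylinder (w : BAdic b) (hk : k ≠ 0) :
    (w.append k 1).cylinder ⊆ w.cylinder := by
  obtain ⟨l, rfl⟩ := Nat.exists_eq_succ_of_ne_zero hk
  refine (w.cylinder_append_one_subset _).trans (Icc_subset_Icc_right (add_le_add_right ?_ _))
  exact (two_mul_one_div_pow_succ_le b (w.exp + l)).trans
    (one_div_base_pow_anti b (j := w.exp + l) (by omega))

lemma cylinder_fold_subset_window (w : BAdic b) (he : e ≠ 0) :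
    (w.fold e).cylinder ⊆ w.window := by
  obtain ⟨l, rfl⟩ := Nat.exists_eq_succ_of_ne_zero he
  refine (w.cylinder_append_one_subset _).trans (Icc_subset_Icc_right (add_le_add_right ?_ _))
  exact (two_mul_one_div_pow_succ_le b (w.exp + (w.exp + l))).trans
    (one_div_base_pow_anti b (j := w.exp + (w.exp + l)) (by omega))

lemma chain_val_sub (h : w.exp = w'.exp) (g j : ℕ) :
    (w.chain g j).val - (w'.chain g j).val = w.val - w'.val := by
  induction j with
  | zero => rfl
  | succ j ih => rw [chain_succ, chain_succ, val_fold, val_fold, chain_exp_eq h, ← ih]; ring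

lemma window_chain_subset (w : BAdic b) (hg : g ≠ 0) (j : ℕ) :
    (w.chain g j).window ⊆ w.window := by
  induction j with
  | zero => rfl
  | succ j ih =>
    rw [chain_succ]
    exact (window_subset_cylinder _).trans ((cylinder_fold_subset_window _ hg).trans ih)

lemma IsBad.chain (h : w.IsBad ε) (hw : IsCoprime (b : ℤ) w.num) (hε : 0 ≤ ε) (hg : g ≠ 0)
    (hεg : ε * (b : ℝ) ^ g ≤ 1) (j : ℕ) : (w.chain g j).IsBad (ε / ((b : ℝ) ^ 3) ^ j) := by
  induction j with
  | zero => simpa [chain_zero] using h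
  | succ j ih =>
    rw [chain_succ, pow_succ, ← div_div]
    refine ih.append (isCoprime_chain hw hg j) one_ne_zero ?_ ?_
    · simpa using (by linarith [two_le_cast_base b] : (1 : ℝ) ≤ b)
    · refine (mul_le_mul_of_nonneg_right (div_le_self hε ?_) (by positivity)).trans hεg
      exact one_le_pow₀ (one_le_base_pow b 3)

lemma IsStronglyBad.chain (h : w.IsStronglyBad 0 ε) (hw : IsCoprime (b : ℤ) w.num) (hε : 0 < ε)
    (hg : 4 ≤ g) (hεg : 4 * ε * (b : ℝ) ^ g ≤ 1) (j : ℕ) :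
    (w.chain g j).IsStronglyBad 0 ε := by
  induction j with
  | zero => exact h
  | succ j ih =>
    rw [chain_succ]
    exact ih.fold (isCoprime_chain hw (by omega) j) hε hg hεg

lemma IsStronglyBad.chain_of_dvd (h : w.IsStronglyBad m ε) (hw : IsCoprime (b : ℤ) w.num)
    (hm : m ∣ (b : ℤ) ^ w.exp) (hε : 0 < ε) (hε' : ε ≤ 1 / 16) (hg : 4 ≤ g) (j : ℕ) :
    (w.chain g j).IsStronglyBad m ε := by
  induction j with
  | zero => exact h
  | succ j ih =>
    rw [chain_succ]
    refine ih.fold_of_dvd (isCoprime_chain hw (by omega) j)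
      (hm.trans (pow_dvd_pow _ ?_)) hε hε' hg
    have hexp := w.chain_exp g j
    have : 1 * (w.exp + g) ≤ 2 ^ j * (w.exp + g) := by gcongr; exact Nat.one_le_two_pow
    omega

/-! ### Admissible expansions of all large lengths, up to a bounded error -/

lemma num_eq_add_pow {s l : ℕ} (hexp : w.exp = s + l) (hexp' : w'.exp = s + l)
    (hval : w.val - w'.val = 1 / (b : ℝ) ^ l) : w.num = w'.num + (b : ℤ) ^ s := by
  have hb := cast_base_pos b
  have hnum : (w.num : ℝ) = w'.num + (b : ℝ) ^ s := by
    rw [val, val, hexp, hexp', pow_add] at hval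
    field_simp at hval
    linarith
  exact_mod_cast hnum

lemma IsBad.exists_neighbour_chains (h : w.IsBad ε) (hw : IsCoprime (b : ℤ) w.num) (hε : 0 ≤ ε)
    (hεb : ε * (b : ℝ) ^ 4 ≤ 1) (i : ℕ) :
    ∃ u' : BAdic b, u'.exp = ((w.fold 4).chain 4 i).exp ∧
      ((w.fold 4).chain 4 i).val - u'.val = 1 / (b : ℝ) ^ (2 * w.exp + 3) ∧
      ((w.fold 4).chain 4 i).IsBad (ε / (b : ℝ) ^ (3 * (i + 1))) ∧
      u'.IsBad (ε / (b : ℝ) ^ (3 * (i + 1))) := by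
  have hb := two_le_cast_base b
  have hcop : IsCoprime (b : ℤ) (1 - b) := ⟨1, 1, by ring⟩
  have hloss : ε / (b : ℝ) ^ (3 * (i + 1)) = ε / (b : ℝ) ^ 3 / ((b : ℝ) ^ 3) ^ i := by
    rw [div_div]; congr 1; ring
  have hεb' : ε / (b : ℝ) ^ 3 * (b : ℝ) ^ 4 ≤ 1 :=
    (mul_le_mul_of_nonneg_right (div_le_self hε (one_le_base_pow b 3)) (by positivity)).trans hεb
  have hbad : (w.fold 4).IsBad (ε / (b : ℝ) ^ 3) :=
    h.append hw one_ne_zero (by simpa using (by linarith : (1 : ℝ) ≤ b)) hεb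
  have hbad' : (w.append (w.exp + 4) (1 - b)).IsBad (ε / (b : ℝ) ^ 3) := by
    have hb_int : (2 : ℤ) ≤ b := by exact_mod_cast hb
    refine h.append hw (by omega) ?_ hεb
    rw [abs_le]
    constructor <;> push_cast <;> linarith
  have hexp : (w.append (w.exp + 4) (1 - b)).exp = (w.fold 4).exp := rfl
  refine ⟨(w.append (w.exp + 4) (1 - b)).chain 4 i, chain_exp_eq hexp _ _, ?_, ?_, ?_⟩
  · rw [chain_val_sub hexp.symm, BAdic.fold, val_append, val_append,
      show w.exp + (w.exp + 4) = 2 * w.exp + 3 + 1 by ring, pow_succ]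
    push_cast
    field_simp
    ring
  · rw [hloss]
    exact hbad.chain (isCoprime_fold w (by norm_num)) (by positivity) (by norm_num) hεb' i
  · rw [hloss]
    exact hbad'.chain (isCoprime_append hcop (by omega)) (by positivity) (by norm_num) hεb' i

lemma IsBad.exists_stretch (h : w.IsBad ε) (hw : w.IsBinary) (hε : 0 ≤ ε)
    (hεb : ε * (b : ℝ) ^ 4 ≤ 1) (i : ℕ) :
    ∃ v : BAdic b, v.IsBinary ∧ v.exp + 4 = (2 ^ (i + 3) - 2) * (w.exp + 4) + 1 ∧
      v.IsBad (ε / (b : ℝ) ^ (3 * (i + 2) + 1)) ∧ v.window ⊆ w.window := by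
  obtain ⟨u', hexp', hval, hbad, hbad'⟩ := h.exists_neighbour_chains hw.isCoprime hε hεb (i + 1)
  have hu : ((w.fold 4).chain 4 (i + 1)).IsBinary := (hw.fold (by norm_num)).chain (by norm_num) _
  have hlen := (w.fold 4).chain_exp 4 (i + 1)
  have hlen₀ : (w.fold 4).exp + 4 = 2 * (w.exp + 4) := by simp only [BAdic.fold, BAdic.append]; ring
  have hpow : 4 ≤ 2 ^ (i + 2) := Nat.pow_le_pow_right two_pos (by omega : 2 ≤ i + 2)
  obtain ⟨a, ha⟩ : ∃ a, 2 ^ (i + 2) = a + 4 := ⟨2 ^ (i + 2) - 4, by omega⟩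
  have hlen' : ((w.fold 4).chain 4 (i + 1)).exp + 4 = (a + 4) * (w.exp + 4) := by
    rw [hlen, hlen₀, ← ha]; ring
  obtain ⟨s, hs⟩ : ∃ s, ((w.fold 4).chain 4 (i + 1)).exp = s + (2 * w.exp + 3) :=
    ⟨((w.fold 4).chain 4 (i + 1)).exp - (2 * w.exp + 3), by rw [add_mul] at hlen'; omega⟩
  have hs' : s = (a + 2) * (w.exp + 4) + 1 := by rw [hs] at hlen'; linarith
  have hεle : ε / (b : ℝ) ^ (3 * (i + 1 + 1)) ≤ 1 := by
    refine (div_le_self hε (one_le_base_pow b _)).trans ?_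
    exact (le_mul_of_one_le_right hε (one_le_base_pow b 4)).trans hεb
  have hdvd : (b : ℤ) ^ (2 * w.exp + 3) ∣ ((w.fold 4).chain 4 (i + 1)).num - 1 := by
    rw [chain_succ]
    refine pow_dvd_num_fold_sub_one _ ?_
    rw [chain_exp, hlen₀]
    have := Nat.one_le_two_pow (n := i)
    nlinarith
  refine ⟨((w.fold 4).chain 4 (i + 1)).append s 1, hu.append (by omega), ?_, ?_, ?_⟩
  · have hfactor : 2 ^ (i + 3) - 2 = 2 * a + 6 := by rw [pow_succ]; omega
    rw [hfactor]
    simp only [BAdic.append]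
    linarith
  · have := hbad.underfold hbad' hu.isCoprime hs (hexp'.trans hs)
      (num_eq_add_pow hs (hexp'.trans hs) hval) (by nlinarith) hdvd hεle
    rwa [div_div, ← pow_succ] at this
  · calc _ ⊆ (((w.fold 4).chain 4 (i + 1)).append s 1).cylinder := window_subset_cylinder _
      _ ⊆ ((w.fold 4).chain 4 (i + 1)).cylinder := cylinder_append_subset_cylinder _ (by omega)
      _ ⊆ ((w.fold 4).chain 4 i).window := by
        rw [chain_succ]; exact cylinder_fold_subset_window _ (by norm_num)
      _ ⊆ (w.fold 4).window := window_chain_subset _ (by norm_num) i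
      _ ⊆ (w.fold 4).cylinder := window_subset_cylinder _
      _ ⊆ w.window := cylinder_fold_subset_window _ (by norm_num)

lemma IsBad.exists_iterated_stretch (h : w.IsBad ε) (hw : w.IsBinary) (hε : 0 ≤ ε)
    (hεb : ε * (b : ℝ) ^ 4 ≤ 1) (i y : ℕ) :
    ∃ v : BAdic b, v.IsBinary ∧
      v.exp + 4 = (fun x ↦ (2 ^ (i + 3) - 2) * x + 1)^[y] (w.exp + 4) ∧
      v.IsBad (ε / (b : ℝ) ^ ((3 * (i + 2) + 1) * y)) ∧ v.window ⊆ w.window := by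
  induction y with
  | zero => exact ⟨w, hw, rfl, by simpa using h, Subset.rfl⟩
  | succ y ih =>
    obtain ⟨u, hu, hlen, hbad, hsub⟩ := ih
    have hle : ε / (b : ℝ) ^ ((3 * (i + 2) + 1) * y) ≤ ε := div_le_self hε (one_le_base_pow b _)
    obtain ⟨v, hv, hlen', hbad', hsub'⟩ := hbad.exists_stretch hu (by positivity)
      ((mul_le_mul_of_nonneg_right hle (by positivity)).trans hεb) i
    refine ⟨v, hv, ?_, ?_, hsub'.trans hsub⟩
    · rw [Function.iterate_succ_apply', ← hlen, hlen']
    · rwa [div_div, ← pow_add, ← mul_add_one] at hbad'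

lemma IsAdmissible.four_mul_pow_le_one (h : w.IsAdmissible ε) (he : e ≤ 5) :
    4 * ε * (b : ℝ) ^ e ≤ 1 := by
  have hb := two_le_cast_base b
  have hε := h.pos
  have hpow : (b : ℝ) ^ e ≤ (b : ℝ) ^ 5 := pow_le_pow_right₀ (by linarith) he
  calc 4 * ε * (b : ℝ) ^ e ≤ (b : ℝ) ^ 2 * ε * (b : ℝ) ^ 5 := by gcongr; nlinarith
    _ = ε * (b : ℝ) ^ 7 := by ring
    _ ≤ 1 := h.mul_pow_le_one

lemma IsAdmissible.fold (h : w.IsAdmissible ε) (he : 4 ≤ e) (he' : e ≤ 5) :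
    (w.fold e).IsAdmissible ε where
  isBinary := h.isBinary.fold (by omega)
  pos := h.pos
  mul_pow_le_one := h.mul_pow_le_one
  isStronglyBad := h.isStronglyBad.fold h.isBinary.isCoprime h.pos he (h.four_mul_pow_le_one he')

lemma IsAdmissible.exists_of_div_two_pow (h : w.IsAdmissible ε) (J : ℕ) :
    ∀ D : ℕ, D / 2 ^ J = w.exp + 4 →
      ∃ v : BAdic b, v.exp + 4 = D ∧ v.IsAdmissible ε ∧ v.window ⊆ w.window := by
  induction J with
  | zero => exact fun D hD ↦ ⟨w, by simpa using hD.symm, h, Subset.rfl⟩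
  | succ J ih =>
    intro D hD
    obtain ⟨v, hv, hadm, hsub⟩ := ih (D / 2) (by rw [Nat.div_div_eq_div_mul, ← pow_succ', hD])
    obtain ⟨e, he, he', hDe⟩ : ∃ e, 4 ≤ e ∧ e ≤ 5 ∧ v.exp + (v.exp + e) + 4 = D :=
      ⟨D - 2 * v.exp - 4, by omega, by omega, by omega⟩
    exact ⟨v.fold e, hDe, hadm.fold he he', (window_subset_cylinder _).trans
      ((cylinder_fold_subset_window _ (by omega)).trans hsub)⟩

lemma IsAdmissible.exists_near (h : w.IsAdmissible ε) :
    ∃ ε₁ > 0, ∃ τ : ℕ, ∀ M : ℕ, ∃ D : ℕ, ∀ d ≥ D, ∃ v v₁ : BAdic b, M ≤ v.exp ∧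
      v.IsAdmissible ε ∧ v.window ⊆ w.window ∧
      v₁.IsAdmissible ε₁ ∧ v₁.window ⊆ v.window ∧ v₁.exp ≤ d ∧ d ≤ v₁.exp + τ := by
  obtain ⟨Y, τ, hY⟩ := exists_iterate_near (w.exp + 4)
  set i := w.exp + 4
  have hε := h.pos
  have hε₁ : ε / (b : ℝ) ^ ((3 * (i + 2) + 1) * Y) / 3 ≤ ε :=
    (div_le_self (by positivity) (by norm_num)).trans (div_le_self hε.le (one_le_base_pow b _))
  have hε₁_mul := (mul_le_mul_of_nonneg_right hε₁ (by positivity)).trans h.mul_pow_le_one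
  refine ⟨ε / (b : ℝ) ^ ((3 * (i + 2) + 1) * Y) / 3,
    div_pos (div_pos hε (by linarith [one_le_base_pow b ((3 * (i + 2) + 1) * Y)])) three_pos, τ,
    fun M ↦ ?_⟩
  obtain ⟨D₀, hD₀⟩ := hY (M + 4)
  refine ⟨D₀, fun d hd ↦ ?_⟩
  obtain ⟨J, hJ, ν, y, hy, hν, hlow, hupp⟩ := hD₀ (d + 4) (by omega)
  obtain ⟨v, hlen, hv, hsub⟩ := h.exists_of_div_two_pow J ν hν
  have hεb : ε * (b : ℝ) ^ 4 ≤ 1 := by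
    have := h.four_mul_pow_le_one (e := 4) (by norm_num)
    nlinarith [mul_pos hε (pow_pos (cast_base_pos b) 4)]
  have hε_le : ε ≤ 1 := (le_mul_of_one_le_right hε.le (one_le_base_pow b 4)).trans hεb
  obtain ⟨v₁, hv₁, hlen₁, hbad, hsub₁⟩ :=
    (hv.isStronglyBad.isBad hε.le).exists_iterated_stretch hv.isBinary hε.le hεb i y
  rw [hlen] at hlen₁
  refine ⟨v, v₁, ?_, hv, hsub, ⟨hv₁, ?_, hε₁_mul, ?_⟩, hsub₁, by omega, by omega⟩
  · have hJν : 2 ^ J ≤ ν := by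
      by_contra! hlt
      rw [Nat.div_eq_of_lt hlt] at hν
      omega
    have := Nat.lt_two_pow_self (n := J)
    omega
  · have := one_le_base_pow b ((3 * (i + 2) + 1) * Y)
    positivity
  · refine (hbad.isStronglyBad ((div_le_self hε.le (one_le_base_pow b _)).trans hε_le)).mono ?_
    have hb := two_le_cast_base b
    gcongr
    linarith

/-! ### Limits of foldings -/

lemma IsStronglyBad.le_abs_mul_abs_val_sub (h : w.IsStronglyBad m ε) (hε : 0 ≤ ε) (hq : ¬ m ∣ q)
    {p : ℤ} (hp : (q : ℝ) * w.val ≠ p) : ε ≤ |(q : ℝ)| * |(q : ℝ) * w.val - p| := by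
  have hb := pow_pos (cast_base_pos b) w.exp
  have hc : ((w.num * q - p * (b : ℤ) ^ w.exp : ℤ) : ℝ)
      = ((q : ℝ) * w.val - p) * (b : ℝ) ^ w.exp := by
    rw [val]
    push_cast
    field_simp
  have hc₀ : w.num * q - p * (b : ℤ) ^ w.exp ≠ 0 := by
    intro h₀
    rw [h₀, Int.cast_zero, zero_eq_mul] at hc
    exact hc.elim (fun h ↦ hp (sub_eq_zero.1 h)) hb.ne'
  have := h.le_mul hε hq hc₀ ⟨p, by ring⟩
  rw [hc, abs_mul, abs_of_pos hb, ← mul_assoc] at this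
  exact le_of_mul_le_mul_right this hb

lemma IsStronglyBad.le_of_tendsto {v : ℕ → BAdic b} {ξ : ℝ} (h : ∀ j, (v j).IsStronglyBad m ε)
    (hε : 0 ≤ ε) (hv : Function.Injective fun j ↦ (v j).val)
    (hξ : Tendsto (fun j ↦ (v j).val) atTop (nhds ξ)) (hq : ¬ m ∣ q) (p : ℤ) :
    ε ≤ |(q : ℝ)| * |(q : ℝ) * ξ - p| := by
  have hq₀ : (q : ℝ) ≠ 0 := by
    rintro hq₀
    exact hq (by simp [Int.cast_eq_zero.1 hq₀])
  refine ge_of_tendsto (((hξ.const_mul (q : ℝ)).sub_const (p : ℝ)).abs.const_mul |(q : ℝ)|) ?_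
  rw [← Nat.cofinite_eq_atTop]
  filter_upwards [hv.tendsto_cofinite.eventually (eventually_cofinite_ne ((p : ℝ) / q))] with j hj
  refine (h j).le_abs_mul_abs_val_sub hε hq fun hp ↦ hj ?_
  rw [eq_div_iff hq₀, mul_comm, hp]

lemma IsStronglyBad.half_le (h : w.IsStronglyBad 0 ε) (hw : IsCoprime (b : ℤ) w.num) (hε : 0 < ε)
    (hε' : ε ≤ 1 / 2) (hq : q ≠ 0) (hqw : |(q : ℝ)| ≤ ε * (b : ℝ) ^ w.exp) {ξ : ℝ}
    (hξ : ξ ∈ w.window) (p : ℤ) : ε / 2 ≤ |(q : ℝ)| * |(q : ℝ) * ξ - p| := by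
  have hb := pow_pos (cast_base_pos b) w.exp
  have hp : (q : ℝ) * w.val ≠ p := by
    intro hp
    have hr : w.IsResidue q 0 := by
      refine ⟨p, ?_⟩
      rw [val, mul_div_assoc', div_eq_iff hb.ne'] at hp
      have : q * w.num = p * (b : ℤ) ^ w.exp := by exact_mod_cast hp
      linarith
    nlinarith [pow_le_abs_of_dvd hq (hr.pow_dvd hw)]
  have hdist : |ξ - w.val| ≤ 1 / ((b : ℝ) ^ w.exp * (b : ℝ) ^ w.exp) := by
    rw [← pow_add, ← two_mul, abs_of_nonneg (by linarith [hξ.1])]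
    linarith [hξ.2]
  have herror : |(q : ℝ)| * (|(q : ℝ)| * |ξ - w.val|) ≤ ε * ε := by
    calc |(q : ℝ)| * (|(q : ℝ)| * |ξ - w.val|)
        ≤ (ε * (b : ℝ) ^ w.exp) * ((ε * (b : ℝ) ^ w.exp) *
          (1 / ((b : ℝ) ^ w.exp * (b : ℝ) ^ w.exp))) := by gcongr
      _ = ε * ε := by field_simp
  have htri : |(q : ℝ) * w.val - p| ≤ |(q : ℝ) * ξ - p| + |(q : ℝ)| * |ξ - w.val| := by
    have := abs_sub_le ((q : ℝ) * w.val) (q * ξ) p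
    rw [← mul_sub, abs_mul, abs_sub_comm w.val] at this
    linarith
  have := h.le_abs_mul_abs_val_sub hε.le (by simpa using hq) hp
  nlinarith [mul_le_mul_of_nonneg_left htri (abs_nonneg (q : ℝ))]

lemma injective_val_chain (w : BAdic b) (g : ℕ) : Function.Injective fun j ↦ (w.chain g j).val := by
  refine (strictMono_nat_of_lt_succ fun j ↦ ?_).injective
  have := cast_base_pos b
  rw [chain_succ, val_fold]
  exact lt_add_of_pos_right _ (by positivity)

/-- The limit of the successive foldings of `w`, the first one with gap `e` and all others with gap
`g`. -/
noncomputable def foldLimit (w : BAdic b) (e g : ℕ) : ℝ :=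
  w.val + (b : ℝ) ^ g * ∑' i : ℕ, 1 / (b : ℝ) ^ (2 ^ i * (2 * w.exp + e + g))

omit [b.AtLeastTwo] in
lemma foldLimit_sub_val (w : BAdic b) (e g : ℕ) :
    w.foldLimit e (g + 1) - w.val = b * (w.foldLimit (e + 1) g - w.val) := by
  rw [foldLimit, foldLimit, show 2 * w.exp + (e + 1) + g = 2 * w.exp + e + (g + 1) by ring]
  ring

lemma val_chain_fold (w : BAdic b) (e g j : ℕ) : ((w.fold e).chain g j).val = w.val +
    (b : ℝ) ^ g * ∑ i ∈ Finset.range (j + 1), 1 / (b : ℝ) ^ (2 ^ i * (2 * w.exp + e + g)) := by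
  have hb := cast_base_pos b
  have hterm (i : ℕ) : (b : ℝ) ^ g * (1 / (b : ℝ) ^ (i + g)) = 1 / (b : ℝ) ^ i := by
    rw [pow_add]; field_simp
  induction j with
  | zero => simpa [chain_zero, val_fold] using (hterm (2 * w.exp + e)).symm
  | succ j ih =>
    have hexp : 2 * ((w.fold e).chain g j).exp + g + g = 2 ^ (j + 1) * (2 * w.exp + e + g) := by
      have := (w.fold e).chain_exp g j
      simp only [fold, append] at this ⊢
      rw [pow_succ]
      linarith
    rw [chain_succ, val_fold, ih, Finset.sum_range_succ _ (j + 1), ← hterm, hexp]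
    ring

lemma summable_one_div_pow_two_pow_mul (b : ℕ) [b.AtLeastTwo] {Λ : ℕ} (hΛ : Λ ≠ 0) :
    Summable fun i : ℕ ↦ 1 / (b : ℝ) ^ (2 ^ i * Λ) := by
  refine summable_geometric_two.of_nonneg_of_le (fun i ↦ by positivity) fun i ↦ ?_
  rw [one_div_pow]
  refine one_div_le_one_div_of_le (by positivity) (two_pow_le_base_pow b ?_)
  exact Nat.lt_two_pow_self.le.trans (Nat.le_mul_of_pos_right _ (Nat.pos_of_ne_zero hΛ))

lemma tendsto_val_chain_fold (w : BAdic b) (e : ℕ) (hg : g ≠ 0) :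
    Tendsto (fun j ↦ ((w.fold e).chain g j).val) atTop (nhds (w.foldLimit e g)) := by
  simp only [val_chain_fold]
  exact (((summable_one_div_pow_two_pow_mul b (by omega)).hasSum.tendsto_sum_nat.comp
    (tendsto_add_atTop_nat 1)).const_mul _).const_add _

lemma foldLimit_mem_window_chain (w : BAdic b) (e : ℕ) (hg : g ≠ 0) (j : ℕ) :
    w.foldLimit e g ∈ ((w.fold e).chain g j).window := by
  refine isClosed_Icc.mem_of_tendsto (w.tendsto_val_chain_fold e hg) ?_
  filter_upwards [eventually_ge_atTop j] with i hi
  obtain ⟨l, rfl⟩ := Nat.exists_eq_add_of_le' hi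
  have hchain : (w.fold e).chain g (l + j) = ((w.fold e).chain g j).chain g l :=
    Function.iterate_add_apply _ _ _ _
  rw [hchain]
  exact window_chain_subset _ hg l (val_mem_window _)

lemma foldLimit_mem_Icc (w : BAdic b) (e : ℕ) (hg : g ≠ 0) :
    w.foldLimit e g ∈ Icc w.val (w.val + 2 * (1 / (b : ℝ) ^ (2 * w.exp + e))) := by
  rw [two_mul w.exp, add_assoc w.exp]
  exact w.cylinder_append_one_subset _
    (window_subset_cylinder _ (w.foldLimit_mem_window_chain e hg 0))

lemma foldLimit_mem_window (w : BAdic b) (he : e ≠ 0) (hg : g ≠ 0) :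
    w.foldLimit e g ∈ w.window :=
  cylinder_fold_subset_window w he
    (window_subset_cylinder _ (w.foldLimit_mem_window_chain e hg 0))

lemma IsAdmissible.le_one_div (h : w.IsAdmissible ε) : ε ≤ 1 / 16 := by
  have := two_pow_le_base_pow b (i := 4) (n := 7) (by norm_num)
  rw [le_div_iff₀ (by norm_num)]
  refine (mul_le_mul_of_nonneg_left ?_ h.pos.le).trans h.mul_pow_le_one
  linarith

lemma IsAdmissible.chain_fold (h : w.IsAdmissible ε) (he : 4 ≤ e) (hg : 4 ≤ g) (hek : e ≤ k)
    (hgk : g ≤ k) (j : ℕ) :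
    ((w.fold e).chain g j).IsAdmissible (min ε (1 / (b : ℝ) ^ (k + 2))) := by
  have hb := two_le_cast_base b
  have hpos : 0 < min ε (1 / (b : ℝ) ^ (k + 2)) := lt_min h.pos (by positivity)
  have hgap {i : ℕ} (hi : i ≤ k) : 4 * min ε (1 / (b : ℝ) ^ (k + 2)) * (b : ℝ) ^ i ≤ 1 := by
    calc 4 * min ε (1 / (b : ℝ) ^ (k + 2)) * (b : ℝ) ^ i
        ≤ (b : ℝ) ^ 2 * (1 / (b : ℝ) ^ (k + 2)) * (b : ℝ) ^ k := by
          gcongr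
          · nlinarith
          · exact min_le_right _ _
          · linarith
      _ = 1 := by rw [pow_add]; field_simp
  have hw := h.mono hpos (min_le_left _ _)
  exact ⟨(hw.isBinary.fold (by omega)).chain (by omega) j, hpos, hw.mul_pow_le_one,
    (hw.isStronglyBad.fold hw.isBinary.isCoprime hpos he (hgap hek)).chain
      (isCoprime_fold w (by omega)) hpos hg (hgap hgk) j⟩

/-- The denominators `q` for which `(b - 1) * q * digitMap b u t w.val` is an integer, when `w.num`
is coprime to `b`. -/
def resonant (w : BAdic b) (t : ℕ) : Set ℕ := {q | (b : ℤ) ^ w.exp ∣ pullDenom b t q}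

section Resonant

variable {u t d Y Z : ℕ} {r : ℚ} {I : Set ℕ} {Φ : ℕ → ℝ}

lemma exists_int_of_mem_resonant (u : ℕ) (hd : d ∈ w.resonant t) :
    ∃ M : ℤ, (b - 1) * (d * digitMap b u t w.val) = M := by
  obtain ⟨R, hR⟩ := hd
  have hb := cast_base_pos b
  have hR' : (pullDenom b t d : ℝ) = (b : ℝ) ^ w.exp * R := by rw [hR]; push_cast; rfl
  have hval : (pullDenom b t d : ℝ) * w.val = R * w.num := by
    rw [hR', val]
    field_simp
  refine ⟨R * w.num + u * d, ?_⟩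
  have := pullDenom_mul_sub (b := b) u t d w.val 0
  push_cast at this ⊢
  linarith

lemma mem_resonant_of_eq (hw : IsCoprime (b : ℤ) w.num) {p : ℤ}
    (hp : d * digitMap b u t w.val = p) : d ∈ w.resonant t := by
  have hb := cast_base_pos b
  have h := pullDenom_mul_sub (b := b) u t d w.val p
  rw [hp, sub_self, mul_zero, sub_eq_zero, val, mul_div_assoc', div_eq_iff (by positivity)] at h
  refine IsResidue.pow_dvd hw ⟨((b : ℤ) - 1) * p - u * d, ?_⟩
  have : pullDenom b t d * w.num = (((b : ℤ) - 1) * p - u * d) * (b : ℤ) ^ w.exp := by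
    exact_mod_cast h
  linarith

lemma exists_rat_eq_digitMap (w : BAdic b) (u t : ℕ) :
    ∃ r : ℚ, r = digitMap b u t w.val ∧ r.den ≤ b ^ (w.exp + 1) := by
  have hb := two_le_cast_base b
  have hb₁ : (b : ℝ) - 1 ≠ 0 := by linarith
  refine ⟨((u * (b : ℤ) ^ w.exp + (b - 1) * t * w.num : ℤ) : ℚ) / (((b : ℤ) - 1) * b ^ w.exp : ℤ),
    ?_, ?_⟩
  · rw [digitMap, val]
    push_cast
    field_simp
  · have hb_int : (2 : ℤ) ≤ b := by exact_mod_cast Nat.AtLeastTwo.prop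
    have hpow : (0 : ℤ) < (b : ℤ) ^ w.exp := by positivity
    have hle := Int.le_of_dvd (mul_pos (by omega) hpow)
      (Rat.den_dvd (u * (b : ℤ) ^ w.exp + (b - 1) * t * w.num) (((b : ℤ) - 1) * b ^ w.exp))
    rw [Rat.divInt_eq_div] at hle
    have hle' : (b - 1) * (b : ℤ) ^ w.exp ≤ (b : ℤ) ^ (w.exp + 1) := by
      rw [pow_succ]
      linarith
    exact_mod_cast hle.trans hle'

lemma pow_le_mul_den (hw : IsCoprime (b : ℤ) w.num) (hr : r = digitMap b u t w.val) (ht₀ : t ≠ 0)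
    (ht : t < b) : b ^ w.exp ≤ b ^ 2 * r.den := by
  have hmem : r.den ∈ w.resonant t := by
    refine mem_resonant_of_eq (u := u) hw (p := r.num) ?_
    rw [← hr]
    exact_mod_cast Rat.den_mul_eq_num r
  have := (pow_le_abs_of_dvd (pullDenom_ne_zero ht₀ r.den_ne_zero) hmem).trans (abs_pullDenom_le ht)
  exact_mod_cast this

lemma IsAdmissible.avoidsOn_diff_resonant (hw : w.IsAdmissible ε) (ht : t < b) (he : 4 ≤ e)
    (hg : 4 ≤ g) (hZ : ∀ q ≥ Z, (b : ℝ) ^ 3 * (q * Φ q) < ε)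
    (h : ∀ ξ ∈ w.window, AvoidsOn Φ (Ico Y Z) (digitMap b u t ξ)) :
    AvoidsOn Φ (Ici Y \ w.resonant t) (digitMap b u t (w.foldLimit e g)) := by
  rintro q ⟨hq, hq_res⟩ p
  rcases lt_or_ge q Z with hqZ | hqZ
  · exact h _ (w.foldLimit_mem_window (by omega) (by omega)) q ⟨hq, hqZ⟩ p
  have hcop := hw.isBinary.isCoprime
  have hbad : w.IsStronglyBad ((b : ℤ) ^ w.exp) ε := fun q c hq hc hr ↦
    hw.isStronglyBad q c (fun h ↦ hq (by simp [zero_dvd_iff.1 h])) hc hr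
  have hfold : (w.fold e).IsStronglyBad ((b : ℤ) ^ w.exp) ε :=
    hbad.fold_of_dvd hcop dvd_rfl hw.pos hw.le_one_div he
  have hchain := hfold.chain_of_dvd (isCoprime_fold w (by omega))
    (pow_dvd_pow _ (Nat.le_add_right _ _)) hw.pos hw.le_one_div hg
  exact lt_abs_mul_digitMap_sub ht (hZ q hqZ) (fun P ↦ IsStronglyBad.le_of_tendsto hchain hw.pos.le
    (injective_val_chain _ g) (w.tendsto_val_chain_fold e (by omega)) hq_res P) p

lemma IsAdmissible.avoidsOn_of_gap_le (hw : w.IsAdmissible ε) (ht₀ : t ≠ 0) (ht : t < b)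
    (hg : 4 ≤ g) (hge : g ≤ e) (hI : ∀ q ∈ I, q ≠ 0)
    (hΦ : ∀ q ∈ I, (b : ℝ) ^ 3 * (q * Φ q) < min ε (1 / (b : ℝ) ^ (e + 2))) :
    AvoidsOn Φ I (digitMap b u t (w.foldLimit e g)) := by
  intro q hq p
  have hchain := hw.chain_fold (hg.trans hge) hg le_rfl hge
  exact lt_abs_mul_digitMap_sub ht (hΦ q hq) (fun P ↦ IsStronglyBad.le_of_tendsto
    (fun j ↦ (hchain j).isStronglyBad) (hchain 0).pos.le (injective_val_chain _ g)
    (w.tendsto_val_chain_fold e (by omega))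
    (by simpa using pullDenom_ne_zero ht₀ (hI q hq)) P) p

lemma one_div_le_of_mem_resonant (hr : r = digitMap b u t w.val) (hd : d ∈ w.resonant t)
    (hd₀ : d ≠ 0) (hlt : d < r.den) (p : ℤ) :
    1 / (b : ℝ) ≤ |(d : ℝ) * digitMap b u t w.val - p| := by
  have hb := two_le_cast_base b
  obtain ⟨M, hM⟩ := exists_int_of_mem_resonant u hd
  have hdist : (b - 1) * (d * digitMap b u t w.val - p) = ((M - ((b : ℤ) - 1) * p : ℤ) : ℝ) := by
    rw [mul_sub, hM]
    push_cast
    ring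
  have hne : M - ((b : ℤ) - 1) * p ≠ 0 := by
    intro h₀
    rw [h₀, Int.cast_zero, mul_eq_zero, ← hr, sub_eq_zero, sub_eq_zero] at hdist
    have hp : (d : ℚ) * r = p := by exact_mod_cast hdist.resolve_left (by linarith)
    have hdvd : (r.den : ℤ) ∣ d := by
      have hr_eq : r = Rat.divInt p d := by
        rw [Rat.divInt_eq_div, eq_div_iff (by exact_mod_cast hd₀), mul_comm]
        exact_mod_cast hp
      rw [hr_eq]
      exact Rat.den_dvd p d
    exact (Nat.le_of_dvd (Nat.pos_of_ne_zero hd₀) (by exact_mod_cast hdvd)).not_gt hlt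
  have hone := one_le_abs_cast hne
  rw [← hdist, abs_mul, abs_of_pos (by linarith : (0 : ℝ) < b - 1)] at hone
  rw [div_le_iff₀ (by linarith)]
  nlinarith [abs_nonneg ((d : ℝ) * digitMap b u t w.val - p)]

lemma abs_mul_digitMap_foldLimit_sub_le (w : BAdic b) (ht : t < b) (hg : g ≠ 0)
    (hd : d ≤ b ^ (w.exp + 1)) :
    |(d : ℝ) * digitMap b u t (w.foldLimit e g) - d * digitMap b u t w.val|
      ≤ 2 * (b : ℝ) ^ 2 / (b : ℝ) ^ (w.exp + e) := by
  have hb := cast_base_pos b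
  have ht' : (t : ℝ) ≤ b := by exact_mod_cast ht.le
  have hd' : (d : ℝ) ≤ (b : ℝ) ^ (w.exp + 1) := by exact_mod_cast hd
  obtain ⟨hlow, hupp⟩ := w.foldLimit_mem_Icc e hg
  have := sub_nonneg.2 hlow
  rw [← mul_sub, digitMap_sub, abs_of_nonneg (by positivity)]
  calc (d : ℝ) * (t * (w.foldLimit e g - w.val))
      ≤ (b : ℝ) ^ (w.exp + 1) * (b * (2 * (1 / (b : ℝ) ^ (2 * w.exp + e)))) := by
        gcongr
        linarith
    _ = 2 * (b : ℝ) ^ 2 / (b : ℝ) ^ (w.exp + e) := by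
      rw [show 2 * w.exp + e = w.exp + (w.exp + e) by ring, pow_add _ w.exp (w.exp + e), pow_succ]
      field_simp

lemma avoidsOn_resonant_of_lt_den (hr : r = digitMap b u t w.val) (hr_le : r.den ≤ b ^ (w.exp + 1))
    (ht : t < b) (hexp : w.exp ≠ 0) (he : 4 ≤ e) (hg : g ≠ 0)
    (hI : ∀ q ∈ I, q ∈ w.resonant t ∧ q ≠ 0 ∧ q < r.den ∧ 2 * b * Φ q < 1) :
    AvoidsOn Φ I (digitMap b u t (w.foldLimit e g)) := by
  intro q hq p
  obtain ⟨hq_res, hq₀, hlt, hΦ⟩ := hI q hq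
  have hb := two_le_cast_base b
  have hdist := abs_mul_digitMap_foldLimit_sub_le (u := u) (e := e) w ht hg (hlt.le.trans hr_le)
  have hfar := one_div_le_of_mem_resonant hr hq_res hq₀ hlt p
  have hpow : (b : ℝ) ^ 5 ≤ (b : ℝ) ^ (w.exp + e) := pow_le_pow_right₀ (by linarith) (by omega)
  have hsmall : 2 * (b : ℝ) ^ 2 / (b : ℝ) ^ (w.exp + e) ≤ 1 / (2 * b) := by
    calc 2 * (b : ℝ) ^ 2 / (b : ℝ) ^ (w.exp + e) ≤ 2 * (b : ℝ) ^ 2 / (b : ℝ) ^ 5 := by gcongr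
      _ = 4 / (b : ℝ) ^ 2 * (1 / (2 * b)) := by field_simp; norm_num
      _ ≤ 1 * (1 / (2 * b)) := by
        gcongr
        rw [div_le_one (by positivity)]
        nlinarith
      _ = 1 / (2 * b) := one_mul _
  have hΦ' : Φ q < 1 / (2 * b) := by rw [lt_div_iff₀ (by positivity)]; linarith
  have hhalf : 1 / (b : ℝ) = 1 / (2 * b) + 1 / (2 * b) := by field_simp; norm_num
  have := abs_sub_le ((q : ℝ) * digitMap b u t w.val) (q * digitMap b u t (w.foldLimit e g)) p
  rw [abs_sub_comm (_ * digitMap b u t w.val) (_ * _)] at this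
  linarith

lemma not_avoidsOn_of_le (hr : r = digitMap b u t w.val) (hr_le : r.den ≤ b ^ (w.exp + 1))
    (ht : t < b) (hg : g ≠ 0) (hI : r.den ∈ I)
    (h : 2 * (b : ℝ) ^ 3 ≤ (b : ℝ) ^ e * (r.den * Φ r.den)) :
    ¬ AvoidsOn Φ I (digitMap b u t (w.foldLimit e g)) := by
  intro havoid
  have hb := cast_base_pos b
  have : (0 : ℝ) < r.den := by exact_mod_cast r.den_pos
  have hden_le : (r.den : ℝ) ≤ (b : ℝ) ^ (w.exp + 1) := by exact_mod_cast hr_le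
  have hnum : (r.den : ℝ) * digitMap b u t w.val = r.num := by
    rw [← hr]
    exact_mod_cast Rat.den_mul_eq_num r
  have hdist := (havoid r.den hI r.num).trans_le
    (hnum ▸ abs_mul_digitMap_foldLimit_sub_le (u := u) (e := e) w ht hg hr_le)
  refine h.not_gt ?_
  calc (b : ℝ) ^ e * (r.den * Φ r.den)
      < (b : ℝ) ^ e * (r.den * (2 * (b : ℝ) ^ 2 / (b : ℝ) ^ (w.exp + e))) := by gcongr
    _ ≤ (b : ℝ) ^ e * ((b : ℝ) ^ (w.exp + 1) * (2 * (b : ℝ) ^ 2 / (b : ℝ) ^ (w.exp + e))) := by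
      gcongr
    _ = 2 * (b : ℝ) ^ 3 := by
      rw [pow_add _ w.exp e, pow_succ _ w.exp]
      field_simp

-- Moving one unit from `g` to `e` divides `foldLimit - val` by `b`, and `(b - 1) * q` times the
-- image of `w.val` is an integer, so distances to integers shrink at most by the factor `b`.
lemma avoidsOn_div_of_subset_resonant (hI : I ⊆ w.resonant t)
    (h : AvoidsOn Φ I (digitMap b u t (w.foldLimit e (g + 1)))) :
    AvoidsOn (fun q ↦ Φ q / b) I (digitMap b u t (w.foldLimit (e + 1) g)) := by
  intro q hq p
  have hb := cast_base_pos b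
  obtain ⟨M, hM⟩ := exists_int_of_mem_resonant u (hI hq)
  have hshift : (q : ℝ) * digitMap b u t (w.foldLimit e (g + 1)) - (b * p - M : ℤ)
      = b * (q * digitMap b u t (w.foldLimit (e + 1) g) - p) := by
    have hlim := w.foldLimit_sub_val e g
    have h₁ := digitMap_sub b u t (w.foldLimit e (g + 1)) w.val
    have h₂ := digitMap_sub b u t (w.foldLimit (e + 1) g) w.val
    push_cast
    rw [← hM]
    linear_combination (q : ℝ) * h₁ - q * b * h₂ + q * t * hlim
  have := h q hq (b * p - M)
  rw [hshift, abs_mul, abs_of_pos hb] at this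
  rwa [div_lt_iff₀' hb]

end Resonant

section Transition

variable {u t Y Z : ℕ} {r : ℚ} {Φ : ℕ → ℝ}

lemma IsAdmissible.avoidsOn_Ici (hw : w.IsAdmissible ε) (ht₀ : t ≠ 0) (ht : t < b)
    (hr : r = digitMap b u t w.val) (hr_le : r.den ≤ b ^ (w.exp + 1)) (hY₀ : Y ≠ 0)
    (hY : ∀ q ≥ Y, 2 * b * Φ q < 1) (hg : 4 ≤ g) (hge : g ≤ e)
    (hres : AvoidsOn Φ (Ici Y \ w.resonant t) (digitMap b u t (w.foldLimit e g)))
    (hden : ∀ q ≥ r.den, (b : ℝ) ^ 3 * (q * Φ q) < min ε (1 / (b : ℝ) ^ (e + 2))) :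
    AvoidsOn Φ (Ici Y) (digitMap b u t (w.foldLimit e g)) := by
  have hlarge : AvoidsOn Φ (Ici r.den) (digitMap b u t (w.foldLimit e g)) :=
    hw.avoidsOn_of_gap_le ht₀ ht hg hge (fun q hq ↦ (r.den_pos.trans_le hq).ne') hden
  have hsmall : AvoidsOn Φ (Ico Y r.den ∩ w.resonant t) (digitMap b u t (w.foldLimit e g)) :=
    avoidsOn_resonant_of_lt_den hr hr_le ht hw.isBinary.exp_ne_zero (hg.trans hge) (by omega)
      fun q ⟨⟨hq, hlt⟩, hq_res⟩ ↦
        ⟨hq_res, ((Nat.pos_of_ne_zero hY₀).trans_le hq).ne', hlt, hY q hq⟩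
  intro q hq
  by_cases hq_res : q ∈ w.resonant t
  · rcases lt_or_ge q r.den with hlt | hle
    exacts [hsmall q ⟨⟨hq, hlt⟩, hq_res⟩, hlarge q hle]
  · exact hres q ⟨hq, hq_res⟩

lemma avoidsOn_div_of_succ {I : Set ℕ} (hΦ : ∀ q, 0 ≤ Φ q)
    (hres : AvoidsOn Φ (I \ w.resonant t) (digitMap b u t (w.foldLimit (e + 1) g)))
    (h : AvoidsOn Φ I (digitMap b u t (w.foldLimit e (g + 1)))) :
    AvoidsOn (fun q ↦ Φ q / b) I (digitMap b u t (w.foldLimit (e + 1) g)) := by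
  intro q hq p
  by_cases hq_res : q ∈ w.resonant t
  · exact avoidsOn_div_of_subset_resonant inter_subset_right
      (fun q (hq : q ∈ I ∩ w.resonant t) ↦ h q hq.1) q ⟨hq, hq_res⟩ p
  · exact (div_le_self (hΦ q) (by linarith [two_le_cast_base b])).trans_lt (hres q ⟨hq, hq_res⟩ p)

lemma exists_avoidsOn_div_of_foldLimit_add {I : Set ℕ} (hΦ : ∀ q, 0 ≤ Φ q)
    (hres : ∀ e g, 4 ≤ e → 4 ≤ g →
      AvoidsOn Φ (I \ w.resonant t) (digitMap b u t (w.foldLimit e g)))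
    (he : 4 ≤ e) (hg : 4 ≤ g) (hfirst : AvoidsOn Φ I (digitMap b u t (w.foldLimit e (g + n))))
    (hlast : ¬ AvoidsOn Φ I (digitMap b u t (w.foldLimit (e + n) g))) :
    ∃ e g, 4 ≤ e ∧ 4 ≤ g ∧ AvoidsOn (fun q ↦ Φ q / b) I (digitMap b u t (w.foldLimit e g)) ∧
      ¬ AvoidsOn Φ I (digitMap b u t (w.foldLimit e g)) := by
  induction n generalizing e with
  | zero => exact absurd hfirst hlast
  | succ n ih =>
    by_cases h : AvoidsOn Φ I (digitMap b u t (w.foldLimit (e + 1) (g + n)))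
    · exact ih (by omega) h (by rwa [add_assoc, add_comm 1])
    · exact ⟨e + 1, g + n, by omega, by omega,
        avoidsOn_div_of_succ hΦ (hres _ _ (by omega) (by omega)) hfirst, h⟩

lemma IsAdmissible.exists_avoidsOn_div (hw : w.IsAdmissible ε) (ht₀ : t ≠ 0) (ht : t < b)
    (hr : r = digitMap b u t w.val) (hr_le : r.den ≤ b ^ (w.exp + 1)) (hΦ₀ : ∀ q, 0 < Φ q)
    (hY₀ : Y ≠ 0) (hY : ∀ q ≥ Y, 2 * b * Φ q < 1) (hZ : ∀ q ≥ Z, (b : ℝ) ^ 3 * (q * Φ q) < ε)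
    (hYZ : ∀ ξ ∈ w.window, AvoidsOn Φ (Ico Y Z) (digitMap b u t ξ))
    (hYr : Y ≤ r.den) (hZr : Z ≤ r.den)
    (hκ : ∀ q ≥ r.den, q * Φ q ≤ (b : ℝ) ^ k * (r.den * Φ r.den))
    (hsmall : (b : ℝ) ^ (2 * k + 21) * (r.den * Φ r.den) ≤ 1) :
    ∃ e g, 4 ≤ e ∧ 4 ≤ g ∧
      AvoidsOn (fun q ↦ Φ q / b) (Ici Y) (digitMap b u t (w.foldLimit e g)) ∧
      ¬ AvoidsOn Φ (Ici Y) (digitMap b u t (w.foldLimit e g)) := by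
  have hb := two_le_cast_base b
  have hr₀ : (0 : ℝ) < r.den := by exact_mod_cast r.den_pos
  set K := (b : ℝ) ^ k * (r.den * Φ r.den) with hK
  have hK₀ : 0 < K := mul_pos (by positivity) (mul_pos hr₀ (hΦ₀ _))
  obtain ⟨m, hm, hmK, hmK'⟩ := exists_pow_mul_near b hK₀ (N := k + 21) (by
    rw [hK, ← mul_assoc, ← pow_add, show k + 21 + k = 2 * k + 21 by ring]
    exact hsmall)
  obtain ⟨l, rfl⟩ : ∃ l, m = l + 6 := ⟨m - 6, by omega⟩
  have hfirst : AvoidsOn Φ (Ici Y) (digitMap b u t (w.foldLimit l (4 + (k + 11)))) := by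
    refine hw.avoidsOn_Ici ht₀ ht hr hr_le hY₀ hY (by omega) (by omega)
      (hw.avoidsOn_diff_resonant ht (by omega) (by omega) hZ hYZ) fun q hq ↦
        lt_min (hZ q (hZr.trans hq)) ?_
    rw [lt_div_iff₀ (by positivity)]
    calc (b : ℝ) ^ 3 * (q * Φ q) * (b : ℝ) ^ (l + 2)
        ≤ (b : ℝ) ^ 3 * K * (b : ℝ) ^ (l + 2) := by
          gcongr
          exact hκ q hq
      _ = (b : ℝ) ^ (l + 5) * K := by ring
      _ < (b : ℝ) ^ (l + 6) * K := by gcongr <;> linarith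
      _ ≤ 1 := hmK
  have hlast : ¬ AvoidsOn Φ (Ici Y) (digitMap b u t (w.foldLimit (l + (k + 11)) 4)) := by
    refine not_avoidsOn_of_le hr hr_le ht (by norm_num) hYr ?_
    have hscale : (b : ℝ) ^ (l + (k + 11)) * (r.den * Φ r.den)
        = (b : ℝ) ^ 3 * (b * ((b : ℝ) ^ (l + 6 + 1) * K)) := by
      rw [hK]
      ring
    rw [hscale, mul_comm 2]
    gcongr
    nlinarith
  exact exists_avoidsOn_div_of_foldLimit_add (fun q ↦ (hΦ₀ q).le)
    (fun e g he hg ↦ hw.avoidsOn_diff_resonant ht he hg hZ hYZ) (by omega) le_rfl hfirst hlast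

end Transition

section Stage

variable {u t Y Z : ℕ} {Φ : ℕ → ℝ}

lemma IsAdmissible.avoidsOn_of_mem_window {ξ : ℝ} (hw : w.IsAdmissible ε) (ht₀ : t ≠ 0)
    (ht : t < b) (hY₀ : Y ≠ 0) (hY : ∀ q ≥ Y, 2 * (b : ℝ) ^ 3 * (q * Φ q) < ε)
    (hZ : (b : ℝ) ^ 2 * Z ≤ ε * (b : ℝ) ^ w.exp) (hξ : ξ ∈ w.window) :
    AvoidsOn Φ (Ico Y Z) (digitMap b u t ξ) := by
  intro q hq p
  have hqZ : (q : ℝ) ≤ Z := by exact_mod_cast hq.2.le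
  have hden : |(pullDenom b t q : ℝ)| ≤ ε * (b : ℝ) ^ w.exp := by
    calc |(pullDenom b t q : ℝ)| ≤ (b : ℝ) ^ 2 * q := abs_pullDenom_le ht
      _ ≤ (b : ℝ) ^ 2 * Z := by gcongr
      _ ≤ _ := hZ
  exact lt_abs_mul_digitMap_sub ht (by linarith [hY q hq.1]) (fun P ↦
    hw.isStronglyBad.half_le hw.isBinary.isCoprime hw.pos (by linarith [hw.le_one_div])
      (pullDenom_ne_zero ht₀ ((Nat.pos_of_ne_zero hY₀).trans_le hq.1).ne') hden hξ P) p

lemma IsAdmissible.two_mul_lt_one (hw : w.IsAdmissible ε) (hΦ : ∀ q, 0 < Φ q) (hY₀ : Y ≠ 0)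
    (hY : ∀ q ≥ Y, 2 * (b : ℝ) ^ 3 * (q * Φ q) < ε) {q : ℕ} (hq : Y ≤ q) : 2 * b * Φ q < 1 := by
  have hb := two_le_cast_base b
  have hq₁ : (1 : ℝ) ≤ q := by exact_mod_cast (Nat.pos_of_ne_zero hY₀).trans_le hq
  have hΦq := hΦ q
  calc 2 * b * Φ q ≤ 2 * b ^ 3 * (q * Φ q) := by
        gcongr
        · exact le_self_pow₀ (by linarith) (by norm_num)
        · exact le_mul_of_one_le_left hΦq.le hq₁
    _ < ε := hY q hq
    _ ≤ 1 := by linarith [hw.le_one_div]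

lemma IsAdmissible.exists_foldLimit_avoidsOn_div (hw : w.IsAdmissible ε) (u : ℕ) (ht₀ : t ≠ 0)
    (ht : t < b) (hΦ : ∀ q, 0 < Φ q) (hanti : Antitone Φ)
    (hlim : Tendsto (fun q : ℕ ↦ (q : ℝ) * Φ q) atTop (nhds 0)) (hY₀ : Y ≠ 0)
    (hY : ∀ q ≥ Y, 2 * (b : ℝ) ^ 3 * (q * Φ q) < ε) :
    ∃ (v : BAdic b) (δ : ℝ) (e g : ℕ), v.IsAdmissible δ ∧ v.window ⊆ w.window ∧ 4 ≤ e ∧ 4 ≤ g ∧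
      AvoidsOn (fun q ↦ Φ q / b) (Ici Y) (digitMap b u t (v.foldLimit e g)) ∧
      ¬ AvoidsOn Φ (Ici Y) (digitMap b u t (v.foldLimit e g)) := by
  have hb := two_le_cast_base b
  obtain ⟨δ, hδ, τ, hnear⟩ := hw.exists_near
  have hsmall (C : ℝ) {η : ℝ} (hη : 0 < η) : ∀ᶠ q : ℕ in atTop, C * (q * Φ q) < η :=
    (hlim.const_mul C).eventually_lt_const (by simpa using hη)
  obtain ⟨Z, hZ⟩ := eventually_atTop.1 ((hsmall ((b : ℝ) ^ 3) hδ).and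
    ((hsmall ((b : ℝ) ^ (2 * (τ + 4) + 21)) one_pos).and (eventually_ge_atTop Y)))
  obtain ⟨M, hM⟩ := pow_unbounded_of_one_lt ((b : ℝ) ^ 2 * Z / ε) (by linarith : (1 : ℝ) < b)
  rw [div_lt_iff₀' hw.pos] at hM
  obtain ⟨D, hD⟩ := hnear M
  obtain ⟨d, hd, hscale⟩ := exists_scale b hΦ hanti hlim (D + M + τ + 1)
  obtain ⟨v, v₁, hMv, hv, hvw, hv₁, hv₁v, hexp, hexp'⟩ := hD (d - 1) (by omega)
  obtain ⟨r, hr, hr_le⟩ := v₁.exists_rat_eq_digitMap u t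
  have hden := pow_le_mul_den hv₁.isBinary.isCoprime hr ht₀ ht
  have hZr : Z ≤ r.den := by
    have hZM : (b : ℝ) ^ 2 * Z ≤ (b : ℝ) ^ M :=
      hM.le.trans (mul_le_of_le_one_left (by positivity) (by linarith [hw.le_one_div]))
    have hMv₁ : b ^ M ≤ b ^ v₁.exp := Nat.pow_le_pow_right (by linarith) (by omega)
    refine Nat.le_of_mul_le_mul_left (?_ : b ^ 2 * Z ≤ b ^ 2 * r.den)
      (pow_pos (by exact_mod_cast cast_base_pos b) 2)
    exact (show b ^ 2 * Z ≤ b ^ M by exact_mod_cast hZM).trans (hMv₁.trans hden)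
  have hlow : (b : ℝ) ^ d ≤ (b : ℝ) ^ (τ + 3) * r.den := by
    calc (b : ℝ) ^ d ≤ (b : ℝ) ^ (τ + 1 + v₁.exp) := pow_le_pow_right₀ (by linarith) (by omega)
      _ = (b : ℝ) ^ (τ + 1) * (b : ℝ) ^ v₁.exp := pow_add _ _ _
      _ ≤ (b : ℝ) ^ (τ + 1) * ((b : ℝ) ^ 2 * r.den) := by gcongr; exact_mod_cast hden
      _ = (b : ℝ) ^ (τ + 3) * r.den := by ring
  have hupp : r.den ≤ b ^ d := hr_le.trans (Nat.pow_le_pow_right (by linarith) (by omega))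
  obtain ⟨e, g, he, hg, havoid⟩ := hv₁.exists_avoidsOn_div ht₀ ht hr hr_le hΦ hY₀
    (fun q ↦ hw.two_mul_lt_one hΦ hY₀ hY) (fun q hq ↦ (hZ q hq).1)
    (fun ξ hξ ↦ hv.avoidsOn_of_mem_window ht₀ ht hY₀ hY
      (hM.le.trans (by have := hw.pos; gcongr; linarith)) (hv₁v hξ))
    ((hZ Z le_rfl).2.2.trans hZr) hZr (fun q ↦ hscale _ _ q hlow hupp) (hZ _ hZr).2.1.le
  exact ⟨v₁, δ, e, g, hv₁, hv₁v.trans hvw, he, hg, havoid⟩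

end Stage

/-! ### The construction -/

lemma IsBinary.exists_hasSum (hw : w.IsBinary) :
    ∃ d : ℕ → ℕ, (∀ n, d n ∈ ({0, 1} : Set ℕ)) ∧ (∀ n ≥ w.exp, d n = 0) ∧
      HasSum (fun n ↦ (d n : ℝ) / (b : ℝ) ^ (n + 1)) w.val := by
  induction hw with
  | one =>
    refine ⟨Pi.single 0 1, fun n ↦ ?_, fun n hn ↦ ?_, ?_⟩
    · rcases eq_or_ne n 0 with rfl | h <;> simp [*]
    · exact Pi.single_eq_of_ne (Nat.pos_iff_ne_zero.1 hn) _
    · convert hasSum_single 0 fun n hn ↦ ?_ using 1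
      · simp [val]
      · simp [hn]
  | @append w k _ hk ih =>
    obtain ⟨d, hd, hd₀, hsum⟩ := ih
    refine ⟨Function.update d (w.exp + k - 1) 1, fun n ↦ ?_, fun n hn ↦ ?_, ?_⟩
    · rcases eq_or_ne n (w.exp + k - 1) with rfl | h
      · simp
      · simpa [h] using hd n
    · simp only [BAdic.append] at hn
      rw [Function.update_of_ne (by omega)]
      exact hd₀ n (by omega)
    · convert! hsum.update (w.exp + k - 1) (1 / (b : ℝ) ^ (w.exp + k)) using 2 with n
      · rcases eq_or_ne n (w.exp + k - 1) with rfl | h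
        · simp [show w.exp + k - 1 + 1 = w.exp + k by omega]
        · simp [h]
      · rw [val_append, hd₀ _ (by omega)]
        push_cast
        ring

lemma IsBinary.val_mem_baseExpSet (hw : w.IsBinary) : w.val ∈ baseExpSet b {0, 1} := by
  obtain ⟨d, hd, -, hsum⟩ := hw.exists_hasSum
  have hb : 2 ≤ b := Nat.AtLeastTwo.prop
  exact mem_baseExpSet_of_hasSum (by rintro j (rfl | rfl) <;> omega) hd hsum

section Construction

variable {u t Y : ℕ} {Ψ : ℕ → ℝ} {γ : ℝ}

lemma exists_window_chain_fold_subset (w : BAdic b) (e : ℕ) (hg : g ≠ 0) {s : Set ℝ}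
    (hs : s ∈ nhds (w.foldLimit e g)) : ∃ j, ((w.fold e).chain g j).window ⊆ s := by
  have hexp : Tendsto (fun j ↦ 2 * ((w.fold e).chain g j).exp) atTop atTop := by
    refine tendsto_atTop_mono (fun j ↦ ?_) tendsto_id
    have hpow : (j + 1) * g ≤ 2 ^ j * ((w.fold e).exp + g) :=
      Nat.mul_le_mul Nat.lt_two_pow_self (Nat.le_add_left _ _)
    have := Nat.le_mul_of_pos_right j (Nat.pos_of_ne_zero hg)
    have := (w.fold e).chain_exp g j
    rw [id]
    linarith
  have hlen : Tendsto (fun j ↦ 1 / (b : ℝ) ^ (2 * ((w.fold e).chain g j).exp)) atTop (nhds 0) := by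
    have hb := two_le_cast_base b
    simp only [← one_div_pow]
    exact (tendsto_pow_atTop_nhds_zero_of_lt_one (by positivity)
      ((div_lt_one (by linarith)).2 (by linarith))).comp hexp
  have hval := w.tendsto_val_chain_fold e hg
  have hupp := hval.add hlen
  rw [add_zero] at hupp
  obtain ⟨j, hj⟩ := ((hval.Icc hupp).eventually (eventually_smallSets_subset.2 hs)).exists
  exact ⟨j, hj⟩

/-- The hypothesis under which a stage of the construction can start from `w` and treat the
denominators from `Y` on. -/
def IsPrepared (Ψ : ℕ → ℝ) (w : BAdic b) (Y : ℕ) : Prop :=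
  Y ≠ 0 ∧ ∃ ε, w.IsAdmissible ε ∧ ∀ q ≥ Y, 2 * (b : ℝ) ^ 3 * (q * Ψ q) < ε

lemma exists_isPrepared (b : ℕ) [b.AtLeastTwo]
    (hlim : Tendsto (fun q : ℕ ↦ (q : ℝ) * Ψ q) atTop (nhds 0)) :
    ∃ (w : BAdic b) (Y : ℕ), w.IsPrepared Ψ Y := by
  have hb := two_le_cast_base b
  have hbad : (⟨1, 1⟩ : BAdic b).IsBad (1 / b) := fun q c hq hc _ ↦ by
    rw [pow_one, one_div_mul_cancel (by linarith)]
    nlinarith [one_le_abs_cast hq, one_le_abs_cast hc]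
  have hle : 1 / (b : ℝ) ^ 7 ≤ 1 / b / 3 := by
    rw [div_div]
    gcongr
    nlinarith [pow_le_pow_left₀ zero_le_two hb 6]
  have hadm : (⟨1, 1⟩ : BAdic b).IsAdmissible (1 / (b : ℝ) ^ 7) :=
    ⟨.one, by positivity, (one_div_mul_cancel (by positivity)).le,
      (hbad.isStronglyBad ((div_le_one (by linarith)).2 (by linarith))).mono hle⟩
  obtain ⟨Y, hY, hY₀⟩ := ((eventually_forall_ge_mul_lt hlim (2 * (b : ℝ) ^ 3) hadm.pos).and
    (eventually_ne_atTop 0)).exists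
  exact ⟨_, Y, hY₀, _, hadm, hY⟩

lemma IsPrepared.exists_notMem_window (h : w.IsPrepared Ψ Y) (x : ℝ) :
    ∃ w' : BAdic b, w'.IsPrepared Ψ Y ∧ w'.window ⊆ w.window ∧ x ∉ w'.window := by
  obtain ⟨hY, ε, hw, hΨ⟩ := h
  have key : ∃ e, 4 ≤ e ∧ e ≤ 5 ∧ x ∉ (w.fold e).window := by
    rcases lt_or_ge x (w.fold 4).val with h | h
    · exact ⟨4, le_rfl, by norm_num, fun hx ↦ hx.1.not_gt h⟩
    · refine ⟨5, by norm_num, le_rfl, fun hx ↦ hx.2.not_gt (lt_of_lt_of_le ?_ h)⟩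
      have := two_mul_one_div_pow_succ_le b (2 * w.exp + 4)
      have : 1 / (b : ℝ) ^ (2 * (w.fold 5).exp) < 1 / (b : ℝ) ^ (2 * w.exp + 5) := by
        have hb := two_le_cast_base b
        refine one_div_lt_one_div_of_lt (by positivity) (pow_lt_pow_right₀ (by linarith) ?_)
        simp only [BAdic.fold, BAdic.append]
        omega
      rw [val_fold, val_fold]
      linarith
  obtain ⟨e, he, he', hx⟩ := key
  exact ⟨w.fold e, ⟨hY, ε, hw.fold he he', hΨ⟩,
    (window_subset_cylinder _).trans (cylinder_fold_subset_window w (by omega)), hx⟩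

lemma IsPrepared.exists_avoidsOn (h : w.IsPrepared Ψ Y) (u : ℕ) (ht₀ : t ≠ 0) (ht : t < b)
    (hΨ : ∀ q, 0 < Ψ q) (hanti : Antitone Ψ)
    (hlim : Tendsto (fun q : ℕ ↦ (q : ℝ) * Ψ q) atTop (nhds 0)) (hγ₀ : 0 < γ) (hγ : γ < 1 / b) :
    ∃ (w' : BAdic b) (Y' : ℕ), w'.IsPrepared Ψ Y' ∧ Y < Y' ∧ w'.window ⊆ w.window ∧
      ∀ ξ ∈ w'.window, AvoidsOn (fun q ↦ γ * Ψ q) (Ico Y Y') (digitMap b u t ξ) ∧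
        ¬ AvoidsOn Ψ (Ico Y Y') (digitMap b u t ξ) := by
  obtain ⟨hY₀, ε, hw, hY⟩ := h
  have hb := cast_base_pos b
  obtain ⟨μ, hγμ, hμ₁⟩ := exists_between ((lt_div_iff₀ hb).1 hγ)
  have hμ₀ : 0 < μ := (by positivity : 0 < γ * b).trans hγμ
  have hμΨ (q : ℕ) : μ * Ψ q < Ψ q := mul_lt_of_lt_one_left (hΨ q) hμ₁
  have hγΨ (q : ℕ) : γ * Ψ q < μ * Ψ q / b := by
    rw [mul_div_right_comm]
    gcongr
    · exact hΨ q
    · exact (lt_div_iff₀ hb).2 hγμ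
  obtain ⟨v, δ, e, g, hv, hvw, he, hg, havoid, hmeet⟩ :=
    hw.exists_foldLimit_avoidsOn_div u ht₀ ht (fun q ↦ mul_pos hμ₀ (hΨ q))
      (hanti.const_mul hμ₀.le) (by simpa [mul_left_comm] using hlim.const_mul μ) hY₀
      fun q hq ↦ (by gcongr; exact (hμΨ q).le : _ ≤ _).trans_lt (hY q hq)
  have hv' := hv.chain_fold he hg (le_max_left e g) (le_max_right e g)
  obtain ⟨Y', hY', hYY', hmeet'⟩ :=
    ((eventually_forall_ge_mul_lt hlim (2 * (b : ℝ) ^ 3) (hv' 0).pos).and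
      ((eventually_gt_atTop Y).and (eventually_not_avoidsOn_Ico hmeet))).exists
  have hnear := (continuous_digitMap b u t).continuousAt.eventually
    ((AvoidsOn.eventually (fun q hq ↦ havoid q hq.1) (finite_Ico Y Y') fun q _ ↦ hγΨ q).and
      (eventually_not_avoidsOn hmeet' fun q _ ↦ hμΨ q))
  obtain ⟨j, hj⟩ := v.exists_window_chain_fold_subset e (by omega) hnear
  exact ⟨(v.fold e).chain g j, Y', ⟨by omega, _, hv' j, hY'⟩, hYY',
    (window_chain_subset _ (by omega) j).trans ((window_subset_cylinder _).trans
      ((cylinder_fold_subset_window v (by omega)).trans hvw)), hj⟩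

end Construction

section Limit

variable {t : ℕ} {Ψ : ℕ → ℝ} {γ : ℝ}

lemma exists_mem_baseExpSet_forall_mem_window {w : ℕ → BAdic b} (hw : ∀ k, (w k).IsBinary)
    (hanti : Antitone fun k ↦ (w k).window) :
    ∃ ξ ∈ baseExpSet b {0, 1}, ∀ k, ξ ∈ (w k).window := by
  have hb : 2 ≤ b := Nat.AtLeastTwo.prop
  have hclosed : IsClosed (baseExpSet b {0, 1}) :=
    isClosed_baseExpSet (by rintro j (rfl | rfl) <;> omega)
  obtain ⟨ξ, hξ⟩ := IsCompact.nonempty_iInter_of_sequence_nonempty_isCompact_isClosed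
    (fun k ↦ (w k).window ∩ baseExpSet b {0, 1})
    (fun k ↦ inter_subset_inter_left _ (hanti k.le_succ))
    (fun k ↦ ⟨_, val_mem_window _, (hw k).val_mem_baseExpSet⟩)
    (isCompact_Icc.inter_right hclosed) (fun k ↦ isClosed_Icc.inter hclosed)
  rw [mem_iInter] at hξ
  exact ⟨ξ, (hξ 0).2, fun k ↦ (hξ k).1⟩

lemma exists_seq_isPrepared (b u : ℕ) [b.AtLeastTwo] (ht₀ : t ≠ 0) (ht : t < b)
    (hΨ : ∀ q, 0 < Ψ q) (hanti : Antitone Ψ)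
    (hlim : Tendsto (fun q : ℕ ↦ (q : ℝ) * Ψ q) atTop (nhds 0)) (hγ₀ : 0 < γ) (hγ : γ < 1 / b)
    (x : ℕ → ℝ) :
    ∃ (w : ℕ → BAdic b) (Y : ℕ → ℕ), (∀ k, (w k).IsPrepared Ψ (Y k)) ∧ StrictMono Y ∧
      Antitone (fun k ↦ (w k).window) ∧ (∀ k, x k ∉ (w (k + 1)).window) ∧
      ∀ k, ∀ ξ ∈ (w (k + 1)).window,
        AvoidsOn (fun q ↦ γ * Ψ q) (Ico (Y k) (Y (k + 1))) (digitMap b u t ξ) ∧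
        ¬ AvoidsOn Ψ (Ico (Y k) (Y (k + 1))) (digitMap b u t ξ) := by
  have hstep (s : {s : BAdic b × ℕ // s.1.IsPrepared Ψ s.2}) (x : ℝ) :
      ∃ s' : {s : BAdic b × ℕ // s.1.IsPrepared Ψ s.2}, s.1.2 < s'.1.2 ∧
        s'.1.1.window ⊆ s.1.1.window ∧ x ∉ s'.1.1.window ∧ ∀ ξ ∈ s'.1.1.window,
          AvoidsOn (fun q ↦ γ * Ψ q) (Ico s.1.2 s'.1.2) (digitMap b u t ξ) ∧
          ¬ AvoidsOn Ψ (Ico s.1.2 s'.1.2) (digitMap b u t ξ) := by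
    obtain ⟨v, hv, hvs, hx⟩ := s.2.exists_notMem_window x
    obtain ⟨w, Y, hw, hY, hwv, h⟩ := hv.exists_avoidsOn u ht₀ ht hΨ hanti hlim hγ₀ hγ
    exact ⟨⟨(w, Y), hw⟩, hY, hwv.trans hvs, fun hxw ↦ hx (hwv hxw), h⟩
  choose next hY hsub hx h using hstep
  obtain ⟨w₀, Y₀, h₀⟩ := exists_isPrepared b hlim
  let s (k : ℕ) : {s : BAdic b × ℕ // s.1.IsPrepared Ψ s.2} :=
    k.rec ⟨(w₀, Y₀), h₀⟩ fun k s ↦ next s (x k)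
  exact ⟨fun k ↦ (s k).1.1, fun k ↦ (s k).1.2, fun k ↦ (s k).2,
    strictMono_nat_of_lt_succ fun k ↦ hY (s k) (x k),
    antitone_nat_of_succ_le fun k ↦ hsub (s k) (x k), fun k ↦ hx (s k) (x k),
    fun k ↦ h (s k) (x k)⟩

lemma not_countable_digitMap_preimage_inter (b u : ℕ) [b.AtLeastTwo] (ht₀ : t ≠ 0) (ht : t < b)
    (hΨ : ∀ q, 0 < Ψ q) (hanti : Antitone Ψ)
    (hlim : Tendsto (fun q : ℕ ↦ (q : ℝ) * Ψ q) atTop (nhds 0)) (hγ₀ : 0 < γ) (hγ : γ < 1 / b) :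
    ¬ (digitMap b u t ⁻¹' (K1 Ψ \ K1 fun q ↦ γ * Ψ q) ∩ baseExpSet b {0, 1}).Countable := by
  intro hcount
  obtain ⟨x, hx⟩ := countable_iff_exists_subset_range.1 hcount
  obtain ⟨w, Y, hw, hY, hsub, hxw, h⟩ :=
    exists_seq_isPrepared b u ht₀ ht hΨ hanti hlim hγ₀ hγ x
  have hbin (k : ℕ) : (w k).IsBinary := by
    obtain ⟨-, ε, hadm, -⟩ := hw k
    exact hadm.isBinary
  obtain ⟨ξ, hξ, hξw⟩ := exists_mem_baseExpSet_forall_mem_window hbin hsub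
  obtain ⟨k, rfl⟩ := hx ⟨mem_K1_diff_of_strictMono (fun q ↦ (hΨ q).le) hγ₀.le hY
    (fun k ↦ (h k ξ (hξw _)).1) (fun k ↦ (h k ξ (hξw _)).2), hξ⟩
  exact hxw k (hξw _)

end Limit

end BAdic

/-- Bugeaud's theorem: for a missing-digit set `K_{J(b)}` and `Ψ` positive,
non-increasing with `Ψ(x) = o(1/x)`, for every `0 < c < 1/b` the set
`(𝒦₁(Ψ) \ 𝒦₁(cΨ)) ∩ K_{J(b)}` is uncountable. -/
theorem bugeaud_missing_digit (b : ℕ) (hb : 2 ≤ b) (J : Set ℕ)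
    (hJsub : ∀ j ∈ J, j < b) (hJ2 : J.Nontrivial)
    (Ψ : ℕ → ℝ) (hpos : ∀ q, 0 < Ψ q)
    (hsmall : Tendsto (fun q : ℕ => (q : ℝ) * Ψ q) atTop (nhds 0))
    (hanti : Antitone Ψ)
    (c : ℝ) (hc0 : 0 < c) (hc1 : c < 1 / (b : ℝ)) :
    ¬ ((K1 Ψ \ K1 (fun x => c * Ψ x)) ∩ baseExpSet b J).Countable := by
  have : b.AtLeastTwo := ⟨hb⟩
  obtain ⟨u, hu, v, hv, huv⟩ := hJ2.exists_lt
  obtain ⟨t, rfl⟩ := Nat.exists_eq_add_of_le huv.le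
  have ht₀ : t ≠ 0 := by omega
  have ht : t < b := by have := hJsub _ hv; omega
  intro hcount
  refine BAdic.not_countable_digitMap_preimage_inter b u ht₀ ht hpos hanti hsmall hc0 hc1
    ((hcount.preimage (injective_digitMap b u ht₀)).mono ?_)
  exact fun ξ hξ ↦ ⟨hξ.1, digitMap_mem_baseExpSet hJsub hu hv hξ.2⟩
end
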